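/- arXiv:2403.13571 — 11 statements merged into one kernel-verified Lean document; each statement's English description precedes it below -/
import Mathlib

section
/- For every nonempty finite simple graph G on n vertices with average degree d = 2·e(G)/n and every positive integer s, the number of walks of length s in G (sequences v₀, v₁, …, v_s of vertices in which consecutive vertices are adjacent) is at least d^s · n. -/
/-!
The inequality holds for every symmetric matrix `A` and every vector `x` with nonnegative entries,
in the form `(⟨x, A x⟩ / ⟨x, x⟩) ^ s * ⟨x, x⟩ ≤ ⟨x, A ^ s x⟩`; walks are the case where `A` is the
adjacency matrix and `x` the all-ones vector.

The weights `π i = x i * (A x) i` are proportional to the stationary measure of the reversible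
Markov chain which moves from `i` to `j` with probability `A i j * x j / (A x) i`. Let
`r k i = (A ^ k x) i / x i`. Then `r (k + 1) i / r 1 i` is the mean of `r k` after one step from
`i`. Jensen's inequality for `log`, averaged over the stationary measure, gives
`∑ π * log (r (k + 1)) ≥ ∑ π * log (r 1) + ∑ π * log (r k)`, hence
`∑ π * log (r k) ≥ k * ∑ π * log (r 1)`. With `M = ∑ π = ⟨x, A x⟩`, two further uses of Jensen
bound the left-hand side above by `M * log (⟨x, A ^ (k + 1) x⟩ / M)` and `∑ π * log (r 1)` below
by `M * log (M / ⟨x, x⟩)`.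

The convention `log 0 = 0` is harmless, because `r k i > 0` whenever `π i > 0`.
-/

open Finset Matrix

namespace BlakleyRoy

lemma sum_mul_log_le_sum_mul_log_div {ι : Type*} {t : Finset ι} {p z : ι → ℝ} {B : ℝ}
    (hp : ∀ i ∈ t, 0 ≤ p i) (hz : ∀ i ∈ t, 0 < p i → 0 < z i) (hB : ∑ i ∈ t, p i * z i ≤ B) :
    ∑ i ∈ t, p i * Real.log (z i) ≤ (∑ i ∈ t, p i) * Real.log (B / ∑ i ∈ t, p i) := by
  classical
  rcases (sum_nonneg hp).eq_or_lt with hsum | hsum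
  · have hp_zero := (sum_eq_zero_iff_of_nonneg hp).1 hsum.symm
    rw [← hsum, zero_mul, sum_eq_zero fun i hi => by rw [hp_zero i hi, zero_mul]]
  have hp_support : ∀ i ∈ t.filter (p · ≠ 0), 0 < p i := fun i hi =>
    (hp i (mem_filter.1 hi).1).lt_of_ne' (mem_filter.1 hi).2
  have hmean_pos : 0 < (∑ i ∈ t, p i * z i) / ∑ i ∈ t, p i := by
    obtain ⟨i, hi, hpi⟩ := exists_lt_of_sum_lt (by simpa using hsum : ∑ _i ∈ t, (0 : ℝ) < _)
    refine div_pos (sum_pos' (fun j hj => ?_) ⟨i, hi, mul_pos hpi (hz i hi hpi)⟩) hsum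
    rcases (hp j hj).eq_or_lt with hpj | hpj
    · rw [← hpj, zero_mul]
    · exact (mul_pos hpj (hz j hj hpj)).le
  have jensen := strictConcaveOn_log_Ioi.concaveOn.le_map_centerMass
    (t := t.filter (p · ≠ 0)) (w := p) (p := z) (fun i hi => (hp_support i hi).le)
    (by rwa [sum_filter_ne_zero])
    (fun i hi => hz i (mem_filter.1 hi).1 (hp_support i hi))
  rw [centerMass_filter_ne_zero, centerMass_filter_ne_zero] at jensen
  simp only [centerMass, smul_eq_mul, Function.comp_apply, inv_mul_eq_div] at jensen
  calc ∑ i ∈ t, p i * Real.log (z i)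
      ≤ (∑ i ∈ t, p i) * Real.log ((∑ i ∈ t, p i * z i) / ∑ i ∈ t, p i) :=
        (div_le_iff₀' hsum).1 jensen
    _ ≤ (∑ i ∈ t, p i) * Real.log (B / ∑ i ∈ t, p i) := by gcongr

section NonnegMatrix

variable {m n R : Type*} [Fintype n] [Semiring R]

lemma mulVec_apply_nonneg [PartialOrder R] [IsOrderedRing R] {A : Matrix m n R} {x : n → R}
    (hA : ∀ i j, 0 ≤ A i j) (hx : ∀ j, 0 ≤ x j) (i : m) : 0 ≤ (A *ᵥ x) i :=
  sum_nonneg fun j _ => mul_nonneg (hA i j) (hx j)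

lemma mulVec_apply_pos_iff [LinearOrder R] [IsStrictOrderedRing R] {A : Matrix m n R} {x : n → R}
    (hA : ∀ i j, 0 ≤ A i j) (hx : ∀ j, 0 ≤ x j) {i : m} :
    0 < (A *ᵥ x) i ↔ ∃ j, 0 < A i j ∧ 0 < x j := by
  have hterm (j : n) : 0 < A i j * x j ↔ 0 < A i j ∧ 0 < x j :=
    ⟨fun h => ⟨pos_of_mul_pos_left h (hx j), pos_of_mul_pos_right h (hA i j)⟩,
      fun h => mul_pos h.1 h.2⟩
  simp only [mulVec, dotProduct, sum_pos_iff_of_nonneg fun j _ => mul_nonneg (hA i j) (hx j),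
    mem_univ, true_and, hterm]

end NonnegMatrix

section MatrixPow

variable {ι R : Type*} [Fintype ι]

lemma dotProduct_self_pos_of_dotProduct_mulVec_ne_zero {A : Matrix ι ι ℝ} {x : ι → ℝ}
    (h : x ⬝ᵥ A *ᵥ x ≠ 0) : 0 < x ⬝ᵥ x :=
  (sum_nonneg fun i _ => mul_self_nonneg (x i)).lt_of_ne' fun hxx =>
    h (by rw [dotProduct_self_eq_zero.1 hxx, zero_dotProduct])

lemma pow_succ_mulVec [DecidableEq ι] [Semiring R] (A : Matrix ι ι R) (k : ℕ) (x : ι → R) :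
    A ^ (k + 1) *ᵥ x = A *ᵥ (A ^ k *ᵥ x) := by
  rw [mulVec_mulVec, ← pow_succ']

variable [CommSemiring R]

lemma dotProduct_mulVec_of_isSymm {A : Matrix ι ι R} (hsymm : A.IsSymm) (x y : ι → R) :
    x ⬝ᵥ A *ᵥ y = A *ᵥ x ⬝ᵥ y := by
  rw [dotProduct_mulVec, ← mulVec_transpose, hsymm.eq]

variable [DecidableEq ι]

lemma dotProduct_pow_succ_mulVec_of_isSymm {A : Matrix ι ι R} (hsymm : A.IsSymm) (k : ℕ)
    (x y : ι → R) : x ⬝ᵥ A ^ (k + 1) *ᵥ y = A *ᵥ x ⬝ᵥ A ^ k *ᵥ y := by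
  rw [pow_succ_mulVec, dotProduct_mulVec_of_isSymm hsymm]

lemma dotProduct_pow_mulVec_eq_sum_prod (A : Matrix ι ι R) (k : ℕ) (x y : ι → R) :
    x ⬝ᵥ A ^ k *ᵥ y = ∑ f : Fin (k + 1) → ι,
      x (f 0) * (∏ i : Fin k, A (f i.castSucc) (f i.succ)) * y (f (Fin.last k)) := by
  induction k generalizing x with
  | zero =>
    rw [pow_zero, one_mulVec]
    exact Fintype.sum_equiv (Equiv.funUnique (Fin 1) ι).symm _ _ fun i => by simp
  | succ k ih =>
    rw [pow_succ_mulVec, dotProduct_mulVec, ih,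
      ← (Fin.consEquiv fun _ : Fin (k + 2) => ι).sum_comp, Fintype.sum_prod_type_right]
    refine sum_congr rfl fun g _ => ?_
    simp only [vecMul, dotProduct, sum_mul, Fin.consEquiv_apply, Fin.prod_univ_succ,
      Fin.castSucc_zero, Fin.cons_zero, Fin.cons_succ, ← Fin.succ_castSucc, ← Fin.succ_last,
      mul_assoc]

end MatrixPow

section Entropy

variable {ι : Type*} [Fintype ι]

/-- For symmetric `A`, the unnormalised stationary measure of the Markov chain whose transitions
have probability proportional to `A i j * x j`; its total mass is `x ⬝ᵥ A *ᵥ x`. For an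
adjacency matrix and `x = 1` it is the degree. -/
def stationaryWeight (A : Matrix ι ι ℝ) (x : ι → ℝ) (i : ι) : ℝ :=
  x i * (A *ᵥ x) i

/-- The factor by which `A ^ k` scales the `i`-th entry of `x`, with value `0` where `x i = 0`. For
an adjacency matrix and `x = 1` it is the number of walks of length `k` from `i`. -/
noncomputable def growthRatio [DecidableEq ι] (A : Matrix ι ι ℝ) (x : ι → ℝ) (k : ℕ) (i : ι) : ℝ :=
  (A ^ k *ᵥ x) i / x i

variable {A : Matrix ι ι ℝ} {x : ι → ℝ}

lemma stationaryWeight_nonneg (hA : ∀ i j, 0 ≤ A i j) (hx : ∀ i, 0 ≤ x i) (i : ι) :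
    0 ≤ stationaryWeight A x i :=
  mul_nonneg (hx i) (mulVec_apply_nonneg hA hx i)

lemma stationaryWeight_pos_iff (hA : ∀ i j, 0 ≤ A i j) (hx : ∀ i, 0 ≤ x i) {i : ι} :
    0 < stationaryWeight A x i ↔ 0 < x i ∧ 0 < (A *ᵥ x) i :=
  ⟨fun h => ⟨pos_of_mul_pos_left h (mulVec_apply_nonneg hA hx i), pos_of_mul_pos_right h (hx i)⟩,
    fun h => mul_pos h.1 h.2⟩

lemma sum_mul_sum_mul_eq_sum_stationaryWeight_mul (hsymm : A.IsSymm) (φ : ι → ℝ) :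
    ∑ i, x i * ∑ j, A i j * x j * φ j = ∑ i, stationaryWeight A x i * φ i := by
  have h := dotProduct_mulVec_of_isSymm hsymm x fun j => x j * φ j
  simp only [dotProduct, mulVec, ← mul_assoc] at h
  simpa only [stationaryWeight, mulVec, dotProduct, mul_comm (x _)] using h

variable [DecidableEq ι]

lemma mul_growthRatio_le (hA : ∀ i j, 0 ≤ A i j) (hx : ∀ i, 0 ≤ x i) (k : ℕ) (i : ι) :
    x i * growthRatio A x k i ≤ (A ^ k *ᵥ x) i := by
  rcases (hx i).eq_or_lt with hxi | hxi
  · rw [← hxi, zero_mul]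
    exact mulVec_apply_nonneg (pow_apply_nonneg hA k) hx i
  · exact (mul_div_cancel₀ _ hxi.ne').le

lemma pow_mulVec_apply_pos (hsymm : A.IsSymm) (hA : ∀ i j, 0 ≤ A i j) (hx : ∀ i, 0 ≤ x i) (k : ℕ)
    {i : ι} (hi : 0 < stationaryWeight A x i) : 0 < (A ^ k *ᵥ x) i := by
  induction k generalizing i with
  | zero => simpa using ((stationaryWeight_pos_iff hA hx).1 hi).1
  | succ k ih =>
    obtain ⟨hxi, hAxi⟩ := (stationaryWeight_pos_iff hA hx).1 hi
    obtain ⟨j, hij, hxj⟩ := (mulVec_apply_pos_iff hA hx).1 hAxi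
    have hAxj : 0 < (A *ᵥ x) j := (mulVec_apply_pos_iff hA hx).2 ⟨i, by rwa [hsymm.apply], hxi⟩
    rw [pow_succ_mulVec, mulVec_apply_pos_iff hA (mulVec_apply_nonneg (pow_apply_nonneg hA k) hx)]
    exact ⟨j, hij, ih ((stationaryWeight_pos_iff hA hx).2 ⟨hxj, hAxj⟩)⟩

lemma growthRatio_pos (hsymm : A.IsSymm) (hA : ∀ i j, 0 ≤ A i j) (hx : ∀ i, 0 ≤ x i) (k : ℕ)
    {i : ι} (hi : 0 < stationaryWeight A x i) : 0 < growthRatio A x k i :=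
  div_pos (pow_mulVec_apply_pos hsymm hA hx k hi) ((stationaryWeight_pos_iff hA hx).1 hi).1

lemma sum_mul_log_growthRatio_le (hsymm : A.IsSymm) (hA : ∀ i j, 0 ≤ A i j) (hx : ∀ i, 0 ≤ x i)
    (k : ℕ) {i : ι} (hi : 0 < x i) :
    ∑ j, A i j * x j * Real.log (growthRatio A x k j) ≤
      (A *ᵥ x) i * Real.log ((A ^ (k + 1) *ᵥ x) i / (A *ᵥ x) i) := by
  refine sum_mul_log_le_sum_mul_log_div (fun j _ => mul_nonneg (hA i j) (hx j))
    (fun j _ hij => ?_) ?_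
  · have hAij : 0 < A i j := pos_of_mul_pos_left hij (hx j)
    have hxj : 0 < x j := pos_of_mul_pos_right hij (hA i j)
    have hAxj : 0 < (A *ᵥ x) j := (mulVec_apply_pos_iff hA hx).2 ⟨i, by rwa [hsymm.apply], hi⟩
    exact growthRatio_pos hsymm hA hx k ((stationaryWeight_pos_iff hA hx).2 ⟨hxj, hAxj⟩)
  · rw [pow_succ_mulVec]
    refine sum_le_sum fun j _ => ?_
    rw [mul_assoc]
    exact mul_le_mul_of_nonneg_left (mul_growthRatio_le hA hx k j) (hA i j)

lemma stationaryWeight_mul_log_growthRatio_add_le (hsymm : A.IsSymm) (hA : ∀ i j, 0 ≤ A i j)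
    (hx : ∀ i, 0 ≤ x i) (k : ℕ) (i : ι) :
    stationaryWeight A x i * Real.log (growthRatio A x 1 i) +
        x i * ∑ j, A i j * x j * Real.log (growthRatio A x k j) ≤
      stationaryWeight A x i * Real.log (growthRatio A x (k + 1) i) := by
  rcases (hx i).eq_or_lt with hxi | hxi
  · simp [stationaryWeight, ← hxi]
  have hjensen := mul_le_mul_of_nonneg_left (sum_mul_log_growthRatio_le hsymm hA hx k hxi) hxi.le
  rw [← mul_assoc, ← stationaryWeight] at hjensen
  rcases (stationaryWeight_nonneg hA hx i).eq_or_lt with hπi | hπi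
  · simpa [← hπi] using hjensen
  have hAxi := ((stationaryWeight_pos_iff hA hx).1 hπi).2
  have hratio : growthRatio A x (k + 1) i =
      growthRatio A x 1 i * ((A ^ (k + 1) *ᵥ x) i / (A *ᵥ x) i) := by
    simp only [growthRatio, pow_one]
    field_simp
  rw [hratio, Real.log_mul (growthRatio_pos hsymm hA hx 1 hπi).ne'
    (div_pos (pow_mulVec_apply_pos hsymm hA hx (k + 1) hπi) hAxi).ne', mul_add]
  gcongr

lemma mul_sum_stationaryWeight_mul_log_growthRatio_one_le (hsymm : A.IsSymm) (hA : ∀ i j, 0 ≤ A i j)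
    (hx : ∀ i, 0 ≤ x i) (k : ℕ) :
    k * ∑ i, stationaryWeight A x i * Real.log (growthRatio A x 1 i) ≤
      ∑ i, stationaryWeight A x i * Real.log (growthRatio A x k i) := by
  induction k with
  | zero =>
    have hlog (i : ι) : Real.log (growthRatio A x 0 i) = 0 := by
      by_cases hxi : x i = 0 <;> simp [growthRatio, hxi]
    simp [hlog]
  | succ k ih =>
    have hstep := sum_le_sum fun i (_ : i ∈ univ) =>
      stationaryWeight_mul_log_growthRatio_add_le hsymm hA hx k i
    rw [sum_add_distrib, sum_mul_sum_mul_eq_sum_stationaryWeight_mul hsymm] at hstep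
    push_cast
    linarith

lemma dotProduct_mulVec_mul_log_div_le (hsymm : A.IsSymm) (hA : ∀ i j, 0 ≤ A i j)
    (hx : ∀ i, 0 ≤ x i) :
    (x ⬝ᵥ A *ᵥ x) * Real.log ((x ⬝ᵥ A *ᵥ x) / (x ⬝ᵥ x)) ≤
      ∑ i, stationaryWeight A x i * Real.log (growthRatio A x 1 i) := by
  -- Jensen is applied to the inverse ratios `x i / (A x) i`.
  have hinv_le (i : ι) : stationaryWeight A x i * (growthRatio A x 1 i)⁻¹ ≤ x i * x i := by
    rw [stationaryWeight, growthRatio, pow_one, inv_div, mul_assoc]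
    refine mul_le_mul_of_nonneg_left ?_ (hx i)
    rw [mul_div_left_comm]
    exact mul_le_of_le_one_right (hx i) (div_self_le_one _)
  have hjensen := sum_mul_log_le_sum_mul_log_div
    (fun i _ => stationaryWeight_nonneg hA hx i)
    (fun i _ hi => inv_pos.2 (growthRatio_pos hsymm hA hx 1 hi))
    (sum_le_sum fun i (_ : i ∈ univ) => hinv_le i)
  change _ ≤ (x ⬝ᵥ A *ᵥ x) * Real.log ((x ⬝ᵥ x) / (x ⬝ᵥ A *ᵥ x)) at hjensen
  rw [← inv_div, Real.log_inv] at hjensen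
  simp only [Real.log_inv, mul_neg, sum_neg_distrib] at hjensen
  exact neg_le_neg_iff.1 hjensen

lemma sum_stationaryWeight_mul_log_growthRatio_le (hsymm : A.IsSymm) (hA : ∀ i j, 0 ≤ A i j)
    (hx : ∀ i, 0 ≤ x i) (k : ℕ) :
    ∑ i, stationaryWeight A x i * Real.log (growthRatio A x k i) ≤
      (x ⬝ᵥ A *ᵥ x) * Real.log ((x ⬝ᵥ A ^ (k + 1) *ᵥ x) / (x ⬝ᵥ A *ᵥ x)) := by
  refine sum_mul_log_le_sum_mul_log_div (fun i _ => stationaryWeight_nonneg hA hx i)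
    (fun i _ hi => growthRatio_pos hsymm hA hx k hi) ?_
  rw [dotProduct_pow_succ_mulVec_of_isSymm hsymm]
  refine sum_le_sum fun i _ => ?_
  rw [stationaryWeight, mul_comm (x i), mul_assoc]
  exact mul_le_mul_of_nonneg_left (mul_growthRatio_le hA hx k i) (mulVec_apply_nonneg hA hx i)

lemma dotProduct_pow_succ_mulVec_pos (hsymm : A.IsSymm) (hA : ∀ i j, 0 ≤ A i j)
    (hx : ∀ i, 0 ≤ x i) (hM : 0 < x ⬝ᵥ A *ᵥ x) (k : ℕ) : 0 < x ⬝ᵥ A ^ (k + 1) *ᵥ x := by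
  obtain ⟨i, hi, hπi⟩ := (sum_pos_iff_of_nonneg fun i _ => stationaryWeight_nonneg hA hx i).1 hM
  rw [dotProduct_pow_succ_mulVec_of_isSymm hsymm]
  exact sum_pos' (fun j _ => mul_nonneg (mulVec_apply_nonneg hA hx j)
      (mulVec_apply_nonneg (pow_apply_nonneg hA k) hx j))
    ⟨i, hi, mul_pos ((stationaryWeight_pos_iff hA hx).1 hπi).2
      (pow_mulVec_apply_pos hsymm hA hx k hπi)⟩

lemma div_pow_le_dotProduct_pow_succ_mulVec_div (hsymm : A.IsSymm) (hA : ∀ i j, 0 ≤ A i j)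
    (hx : ∀ i, 0 ≤ x i) (hM : 0 < x ⬝ᵥ A *ᵥ x) (k : ℕ) :
    ((x ⬝ᵥ A *ᵥ x) / (x ⬝ᵥ x)) ^ k ≤ (x ⬝ᵥ A ^ (k + 1) *ᵥ x) / (x ⬝ᵥ A *ᵥ x) := by
  have hxx := dotProduct_self_pos_of_dotProduct_mulVec_ne_zero hM.ne'
  rw [Real.pow_le_iff_le_log (div_pos hM hxx)
    (div_pos (dotProduct_pow_succ_mulVec_pos hsymm hA hx hM k) hM)]
  refine le_of_mul_le_mul_left ?_ hM
  calc (x ⬝ᵥ A *ᵥ x) * (k * Real.log ((x ⬝ᵥ A *ᵥ x) / (x ⬝ᵥ x)))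
      = k * ((x ⬝ᵥ A *ᵥ x) * Real.log ((x ⬝ᵥ A *ᵥ x) / (x ⬝ᵥ x))) := mul_left_comm _ _ _
    _ ≤ k * ∑ i, stationaryWeight A x i * Real.log (growthRatio A x 1 i) := by
        gcongr
        exact dotProduct_mulVec_mul_log_div_le hsymm hA hx
    _ ≤ ∑ i, stationaryWeight A x i * Real.log (growthRatio A x k i) :=
        mul_sum_stationaryWeight_mul_log_growthRatio_one_le hsymm hA hx k
    _ ≤ (x ⬝ᵥ A *ᵥ x) * Real.log ((x ⬝ᵥ A ^ (k + 1) *ᵥ x) / (x ⬝ᵥ A *ᵥ x)) :=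
        sum_stationaryWeight_mul_log_growthRatio_le hsymm hA hx k

end Entropy

section Graph

variable {V R : Type*} (G : SimpleGraph V) [DecidableRel G.Adj]

lemma adjMatrix_apply_nonneg [Semiring R] [PartialOrder R] [IsOrderedRing R] (v w : V) :
    0 ≤ G.adjMatrix R v w := by
  rw [SimpleGraph.adjMatrix_apply]
  split_ifs
  exacts [zero_le_one, le_rfl]

variable [Fintype V]

lemma one_dotProduct_adjMatrix_mulVec_one [NonAssocSemiring R] :
    1 ⬝ᵥ G.adjMatrix R *ᵥ 1 = 2 * (#G.edgeFinset : R) := by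
  classical
  simp [dotProduct, ← Nat.cast_sum, G.sum_degrees_eq_twice_card_edges]

lemma one_dotProduct_adjMatrix_pow_mulVec_one [DecidableEq V] [CommSemiring R] (k : ℕ) :
    1 ⬝ᵥ G.adjMatrix R ^ k *ᵥ 1 = (Fintype.card
      {f : Fin (k + 1) → V // ∀ i : Fin k, G.Adj (f i.castSucc) (f i.succ)} : R) := by
  simp [dotProduct_pow_mulVec_eq_sum_prod, SimpleGraph.adjMatrix_apply, Fintype.prod_boole,
    Fintype.card_subtype]

end Graph

end BlakleyRoy

open BlakleyRoy

theorem blakley_roy_general {ι : Type*} [Fintype ι] [DecidableEq ι] {A : Matrix ι ι ℝ} {x : ι → ℝ}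
    (hsymm : A.IsSymm) (hA : ∀ i j, 0 ≤ A i j) (hx : ∀ i, 0 ≤ x i) (s : ℕ) :
    ((x ⬝ᵥ A *ᵥ x) / (x ⬝ᵥ x)) ^ s * (x ⬝ᵥ x) ≤ x ⬝ᵥ A ^ s *ᵥ x := by
  rcases s with _ | k
  · simp
  rcases (dotProduct_nonneg_of_nonneg hx (mulVec_apply_nonneg hA hx)).eq_or_lt with hM | hM
  · rw [← hM, zero_div, zero_pow k.succ_ne_zero, zero_mul]
    exact dotProduct_nonneg_of_nonneg hx (mulVec_apply_nonneg (pow_apply_nonneg hA _) hx)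
  have hxx := dotProduct_self_pos_of_dotProduct_mulVec_ne_zero hM.ne'
  calc ((x ⬝ᵥ A *ᵥ x) / (x ⬝ᵥ x)) ^ (k + 1) * (x ⬝ᵥ x)
      = ((x ⬝ᵥ A *ᵥ x) / (x ⬝ᵥ x)) ^ k * (x ⬝ᵥ A *ᵥ x) := by
        rw [pow_succ, mul_assoc, div_mul_cancel₀ _ hxx.ne']
    _ ≤ x ⬝ᵥ A ^ (k + 1) *ᵥ x :=
        (le_div_iff₀ hM).1 (div_pow_le_dotProduct_pow_succ_mulVec_div hsymm hA hx hM k)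

/-- **Blakley–Roy inequality.** For every nonempty graph `G` on `n` vertices with average
degree `d = 2·e(G)/n` and every positive integer `s`, the number of walks of length `s`
in `G` (sequences `v₀, …, v_s` of vertices with consecutive vertices adjacent) is at
least `d^s · n`. -/
theorem blakley_roy {V : Type} [Fintype V] [Nonempty V]
    (G : SimpleGraph V) [DecidableRel G.Adj]
    (s : ℕ) (hs : 0 < s) :
    (2 * (G.edgeFinset.card : ℝ) / (Fintype.card V : ℝ)) ^ s * (Fintype.card V : ℝ) ≤
      (Fintype.card
        {f : Fin (s + 1) → V // ∀ i : Fin s, G.Adj (f i.castSucc) (f i.succ)} : ℝ) := by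
  classical
  simpa only [one_dotProduct_adjMatrix_mulVec_one, one_dotProduct_adjMatrix_pow_mulVec_one,
    one_dotProduct_one] using blakley_roy_general (x := 1) (G.isSymm_adjMatrix (α := ℝ))
      (adjMatrix_apply_nonneg G) (fun _ => zero_le_one) s
end

section
/- For all natural numbers g and r, there exists a finite simple graph G whose girth is greater than g and whose chromatic number is greater than r. -/
/-!
The random-graph argument is derandomised into a greedy one. Starting from the empty graph on `n`
vertices, edges are added one at a time, each joining two vertices of degree less than `d` at
distance more than `g`; such an edge closes no cycle of length at most `g`. A ball of radius `g` has
at most `b = (d + 1) ^ g` vertices, and as long as at most `d * b` edges have been added, at most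
`2 * b` vertices have degree `d`. Hence every independent set of size `4 * b` contains at least
`2 * b ^ 2` of the at most `n ^ 2` ordered pairs that may be joined, and by averaging some new edge
destroys a proportion `2 * (b / n) ^ 2` of the independent sets of size `4 * b`. For `n = 4 * b * R`
this proportion depends on `R` only, so if `d` is a large multiple of `R`, then `d * b` steps bring
the number of these sets from at most `2 ^ n` down to `0`, and colour classes have fewer than
`n / R` vertices.
-/

open Finset SimpleGraph

namespace ErdosGirth

variable {V : Type*} {G : SimpleGraph V}

/-! ### Adding an edge -/

/-- Cutting a passage through the edge out of the closed trail leaves a walk between its ends. -/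
lemma edist_deleteEdges_add_one_le_length_of_isSubwalk {a u v : V} {w : G.Walk a a}
    (hw : w.IsTrail) (h : G.Adj u v) (hsub : h.toWalk.IsSubwalk w) :
    (G.deleteEdges {s(u, v)}).edist u v + 1 ≤ w.length := by
  obtain ⟨p, q, rfl⟩ := hsub
  have hnotMem : s(u, v) ∉ (q.append p).edges := by
    have hnodup := hw.edges_nodup
    simp only [Walk.edges_append, Adj.toWalk, Walk.edges_cons, Walk.edges_nil, List.nodup_append,
      List.mem_append, List.mem_singleton] at hnodup ⊢
    grind
  calc (G.deleteEdges {s(u, v)}).edist u v + 1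
      ≤ ((q.append p).toDeleteEdge s(u, v) hnotMem).length + 1 := by
        rw [edist_comm]
        gcongr
        exact edist_le _
    _ = ((p.append h.toWalk).append q).length := by
        simp only [Walk.length_transfer, Walk.length_append, Adj.toWalk, Walk.length_cons,
          Walk.length_nil]
        norm_cast
        omega

lemma edist_deleteEdges_add_one_le_length {a u v : V} {w : G.Walk a a} (hw : w.IsTrail)
    (huv : s(u, v) ∈ w.edges) : (G.deleteEdges {s(u, v)}).edist u v + 1 ≤ w.length := by
  have hadj : G.Adj u v := w.adj_of_mem_edges huv
  rcases (Walk.isSubwalk_toWalk_iff_mem_edges hadj).2 huv with hsub | hsub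
  · exact edist_deleteEdges_add_one_le_length_of_isSubwalk hw hadj hsub
  · rw [edist_comm, Sym2.eq_swap]
    exact edist_deleteEdges_add_one_le_length_of_isSubwalk hw hadj.symm hsub

lemma deleteEdges_sup_edge_le (G : SimpleGraph V) (u v : V) :
    (G ⊔ edge u v).deleteEdges {s(u, v)} ≤ G :=
  (deleteEdges_le_iff _ _).2 (sup_comm G _).le

lemma min_egirth_edist_add_one_le_egirth_sup_edge (G : SimpleGraph V) (u v : V) :
    min G.egirth (G.edist u v + 1) ≤ (G ⊔ edge u v).egirth := by
  refine le_egirth.2 fun a w hw => ?_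
  by_cases huv : s(u, v) ∈ w.edges
  · calc min G.egirth (G.edist u v + 1)
        ≤ G.edist u v + 1 := min_le_right _ _
      _ ≤ ((G ⊔ edge u v).deleteEdges {s(u, v)}).edist u v + 1 :=
          add_le_add_left (edist_anti (deleteEdges_sup_edge_le G u v)) 1
      _ ≤ w.length := edist_deleteEdges_add_one_le_length hw.isTrail huv
  · have hmem : ∀ e ∈ w.edges, e ∉ ({s(u, v)} : Set (Sym2 V)) := by
      rintro e he rfl
      exact huv he
    calc min G.egirth (G.edist u v + 1)
        ≤ G.egirth := min_le_left _ _
      _ ≤ ((G ⊔ edge u v).deleteEdges {s(u, v)}).egirth :=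
          egirth_anti (deleteEdges_sup_edge_le G u v)
      _ ≤ (w.toDeleteEdges _ hmem).length := egirth_le_length (hw.toDeleteEdges _ _ hmem)
      _ = w.length := by rw [Walk.length_transfer]

lemma degree_sup_edge_le [DecidableEq V] (u v x : V) [Fintype (G.neighborSet x)]
    [Fintype ((G ⊔ edge u v).neighborSet x)] :
    (G ⊔ edge u v).degree x ≤ G.degree x + if x = u ∨ x = v then 1 else 0 := by
  have hsub : (G ⊔ edge u v).neighborFinset x ⊆
      G.neighborFinset x ∪ if x = u then {v} else if x = v then {u} else ∅ := by
    intro y hy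
    simp only [mem_neighborFinset, sup_adj, edge_adj, mem_union] at hy ⊢
    grind
  refine (card_le_card hsub).trans ((card_union_le _ _).trans ?_)
  rw [card_neighborFinset_eq_degree]
  gcongr
  split_ifs <;> simp_all

lemma card_edgeFinset_sup_edge_le [Fintype G.edgeSet] (u v : V)
    [Fintype (G ⊔ edge u v).edgeSet] : #(G ⊔ edge u v).edgeFinset ≤ #G.edgeFinset + 1 := by
  classical
  have hsub : (G ⊔ edge u v).edgeFinset ⊆ insert s(u, v) G.edgeFinset := by
    intro e he
    induction e with | _ x y
    simp only [mem_edgeFinset, mem_edgeSet, sup_adj, edge_adj, mem_insert, Sym2.eq_iff] at he ⊢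
    tauto
  exact (card_le_card hsub).trans (card_insert_le _ _)

/-! ### Degrees, balls and independent sets -/

lemma encard_biUnion_le_card_mul {ι α : Type*} (s : Finset ι) (f : ι → Set α) {n : ℕ∞}
    (hf : ∀ i ∈ s, (f i).encard ≤ n) : (⋃ i ∈ s, f i).encard ≤ #s * n := by
  classical
  induction s using Finset.induction_on with
  | empty => simp
  | insert i s hi ih =>
    rw [set_biUnion_insert, card_insert_of_notMem hi, add_comm, Nat.cast_add, Nat.cast_one,
      add_mul, one_mul]
    exact (Set.encard_union_le _ _).trans <| add_le_add (hf i (mem_insert_self i s)) <|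
      ih fun j hj => hf j (mem_insert_of_mem hj)

lemma setOf_edist_le_succ_subset [DecidableEq V] [G.LocallyFinite] (x : V) (k : ℕ) :
    {y | G.edist x y ≤ (k + 1 : ℕ)} ⊆
      ⋃ z ∈ insert x (G.neighborFinset x), {y | G.edist z y ≤ k} := by
  intro y hy
  obtain ⟨p, hp⟩ := exists_walk_of_edist_ne_top (ne_top_of_le_ne_top (ENat.natCast_ne_top _) hy)
  rw [Set.mem_ofPred_eq, ← hp, Nat.cast_le] at hy
  simp only [Set.mem_iUnion, Set.mem_ofPred_eq]
  cases p with
  | nil => exact ⟨x, mem_insert_self _ _, by simp⟩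
  | @cons _ z _ hxz p =>
    refine ⟨z, mem_insert_of_mem ((mem_neighborFinset _ _ _).2 hxz), (edist_le p).trans ?_⟩
    exact_mod_cast Nat.le_of_succ_le_succ hy

lemma encard_setOf_edist_le_le [G.LocallyFinite] {d : ℕ} (hd : ∀ x, G.degree x ≤ d) (k : ℕ)
    (x : V) : {y | G.edist x y ≤ k}.encard ≤ ((d + 1) ^ k : ℕ) := by
  classical
  induction k generalizing x with
  | zero => simp
  | succ k ih =>
    have hcard : #(insert x (G.neighborFinset x)) ≤ d + 1 :=
      (card_insert_le _ _).trans (Nat.succ_le_succ (hd x))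
    calc {y | G.edist x y ≤ (k + 1 : ℕ)}.encard
        ≤ #(insert x (G.neighborFinset x)) * ((d + 1) ^ k : ℕ) :=
          (Set.encard_le_encard (setOf_edist_le_succ_subset x k)).trans
            (encard_biUnion_le_card_mul _ _ fun z _ => ih z)
      _ ≤ ((d + 1) ^ (k + 1) : ℕ) := by
          rw [pow_succ']
          exact_mod_cast Nat.mul_le_mul_right _ hcard

lemma mul_card_filter_le_degree_le_two_mul_card_edgeFinset [Fintype V] [DecidableRel G.Adj]
    (d : ℕ) : d * #{x | d ≤ G.degree x} ≤ 2 * #G.edgeFinset := by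
  calc d * #{x | d ≤ G.degree x}
      ≤ ∑ x with d ≤ G.degree x, G.degree x := by
        rw [mul_comm]
        exact card_nsmul_le_sum _ _ _ fun x hx => (mem_filter.1 hx).2
    _ ≤ ∑ x, G.degree x := sum_le_sum_of_subset (subset_univ _)
    _ = 2 * #G.edgeFinset := G.sum_degrees_eq_twice_card_edges

lemma indepNum_lt_of_indepSetFree {m : ℕ} (h : G.IndepSetFree m) : G.indepNum < m := by
  by_contra! hm
  obtain ⟨s, hs⟩ := G.exists_isNIndepSet_indepNum
  obtain ⟨t, hts, htm⟩ := exists_subset_card_eq (hm.trans_eq hs.card_eq.symm)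
  exact h t ⟨hs.isIndepSet.mono (coe_subset.2 hts), htm⟩

lemma card_le_mul_indepNum_of_colorable [Fintype V] {r : ℕ} (h : G.Colorable r) :
    Fintype.card V ≤ r * G.indepNum := by
  classical
  obtain ⟨C⟩ := h
  by_contra! hlt
  obtain ⟨c, hc⟩ := Fintype.exists_lt_card_fiber_of_mul_lt_card C (by simpa using hlt)
  refine hc.not_ge (IsIndepSet.card_le_indepNum ?_)
  simpa [Coloring.colorClass] using C.isIndepSet_colorClass c

/-! ### Double counting -/

section DoubleCounting

variable {α β : Type*}

lemma exists_mul_card_le_card_mul_card_bipartiteAbove (r : α → β → Prop)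
    [∀ a b, Decidable (r a b)] {s : Finset α} {t : Finset β} {m : ℕ} (hs : s.Nonempty)
    (hm : ∀ b ∈ t, m ≤ #(s.bipartiteBelow r b)) :
    ∃ a ∈ s, #t * m ≤ #s * #(t.bipartiteAbove r a) := by
  obtain ⟨a, ha, hmax⟩ := exists_max_image s (fun a => #(t.bipartiteAbove r a)) hs
  exact ⟨a, ha, card_mul_le_card_mul' r hm hmax⟩

lemma card_mul_card_sub_le_card_filter_product (r : α → α → Prop) [∀ a b, Decidable (r a b)]
    {s : Finset α} {b : ℕ} (hb : ∀ x ∈ s, #{y ∈ s | ¬ r x y} ≤ b) :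
    #s * (#s - b) ≤ #{p ∈ s ×ˢ s | r p.1 p.2} := by
  calc #s * (#s - b) ≤ ∑ x ∈ s, #{y ∈ s | r x y} := by
        refine card_nsmul_le_sum _ _ _ fun x hx => ?_
        have hsplit : #{y ∈ s | r x y} + #{y ∈ s | ¬ r x y} = #s :=
          card_filter_add_card_filter_not _
        have := hb x hx
        omega
    _ = #{p ∈ s ×ˢ s | r p.1 p.2} := by
        simp only [card_filter, sum_product]

end DoubleCounting

/-! ### The greedy construction -/

section Greedy

variable [Fintype V] [DecidableRel G.Adj] {g d t b : ℕ}

/-- The invariant of the greedy construction after at most `t` steps: girth more than `g`, maximum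
degree at most `d` and at most `t` edges. -/
structure IsGreedyStage (G : SimpleGraph V) [DecidableRel G.Adj] (g d t : ℕ) : Prop where
  lt_egirth : (g : ℕ∞) < G.egirth
  degree_le : ∀ x, G.degree x ≤ d
  card_edgeFinset_le : #G.edgeFinset ≤ t

/-- The ordered pairs of vertices which the greedy construction may join by an edge without creating
a cycle of length at most `g` or a vertex of degree more than `d`. -/
noncomputable def joinablePairs (G : SimpleGraph V) [DecidableRel G.Adj] (g d : ℕ) :
    Finset (V × V) :=
  {p | G.degree p.1 < d ∧ G.degree p.2 < d ∧ (g : ℕ∞) < G.edist p.1 p.2}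

lemma ne_of_mem_joinablePairs {p : V × V} (hp : p ∈ joinablePairs G g d) : p.1 ≠ p.2 := by
  rw [Ne, ← edist_eq_zero_iff (G := G)]
  exact (zero_le.trans_lt (mem_filter.1 hp).2.2.2).ne'

lemma isGreedyStage_bot : IsGreedyStage (⊥ : SimpleGraph V) g d 0 where
  lt_egirth := by simp
  degree_le := by simp
  card_edgeFinset_le := by simp

namespace IsGreedyStage

lemma mono {t' : ℕ} (hG : IsGreedyStage G g d t) (h : t ≤ t') : IsGreedyStage G g d t' :=
  ⟨hG.lt_egirth, hG.degree_le, hG.card_edgeFinset_le.trans h⟩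

lemma sup_edge [DecidableEq V] (hG : IsGreedyStage G g d t) {p : V × V}
    (hp : p ∈ joinablePairs G g d) :
    IsGreedyStage (G ⊔ edge p.1 p.2) g d (t + 1) := by
  obtain ⟨-, hdeg₁, hdeg₂, hdist⟩ := mem_filter.1 hp
  refine ⟨?_, fun x => ?_, ?_⟩
  · refine (lt_min hG.lt_egirth ?_).trans_le (min_egirth_edist_add_one_le_egirth_sup_edge G _ _)
    exact hdist.trans_le le_self_add
  · have hle := degree_sup_edge_le (G := G) p.1 p.2 x
    have hx := hG.degree_le x
    grind
  · refine le_trans ?_ (Nat.succ_le_succ hG.card_edgeFinset_le)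
    convert card_edgeFinset_sup_edge_le p.1 p.2

lemma card_filter_not_lt_edist_le (hG : IsGreedyStage G g d t) (S : Finset V) (x : V) :
    #{y ∈ S | ¬ (g : ℕ∞) < G.edist x y} ≤ (d + 1) ^ g := by
  have hsub : (({y ∈ S | ¬ (g : ℕ∞) < G.edist x y} : Finset V) : Set V) ⊆
      {y | G.edist x y ≤ g} := fun y hy => not_lt.1 (mem_filter.1 hy).2
  have hle := (Set.encard_le_encard hsub).trans (encard_setOf_edist_le_le hG.degree_le g x)
  rw [Set.encard_coe_eq_coe_finsetCard] at hle
  exact_mod_cast hle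

lemma two_mul_le_card_filter_degree_lt (hG : IsGreedyStage G g d t) (hd : 0 < d)
    (ht : t ≤ d * b) {S : Finset V} (hS : 4 * b ≤ #S) : 2 * b ≤ #{x ∈ S | G.degree x < d} := by
  have hsaturated : #{x | d ≤ G.degree x} ≤ 2 * b := by
    refine Nat.le_of_mul_le_mul_left ?_ hd
    calc d * #{x | d ≤ G.degree x}
        ≤ 2 * #G.edgeFinset := mul_card_filter_le_degree_le_two_mul_card_edgeFinset d
      _ ≤ 2 * (d * b) := by grw [hG.card_edgeFinset_le, ht]
      _ = d * (2 * b) := by ring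
  have hsplit := card_filter_add_card_filter_not (s := S) fun x => G.degree x < d
  have hmono : #{x ∈ S | ¬ G.degree x < d} ≤ #{x | d ≤ G.degree x} := by
    simp only [not_lt]
    exact card_le_card (filter_subset_filter _ (subset_univ S))
  omega

lemma two_mul_sq_le_card_joinablePairs_filter [DecidableEq V] (hG : IsGreedyStage G g d t)
    (hd : 0 < d) (hb : (d + 1) ^ g ≤ b) (ht : t ≤ d * b) {S : Finset V} (hS : 4 * b ≤ #S) :
    2 * b ^ 2 ≤ #{p ∈ joinablePairs G g d | p.1 ∈ S ∧ p.2 ∈ S} := by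
  set U : Finset V := {x ∈ S | G.degree x < d} with hU
  have hUcard : 2 * b ≤ #U := hG.two_mul_le_card_filter_degree_lt hd ht hS
  calc 2 * b ^ 2 = 2 * b * b := by ring
    _ ≤ #U * (#U - b) := Nat.mul_le_mul hUcard (by omega)
    _ ≤ #{p ∈ U ×ˢ U | (g : ℕ∞) < G.edist p.1 p.2} :=
        card_mul_card_sub_le_card_filter_product (fun x y => (g : ℕ∞) < G.edist x y)
          fun x _ => (hG.card_filter_not_lt_edist_le U x).trans hb
    _ ≤ #{p ∈ joinablePairs G g d | p.1 ∈ S ∧ p.2 ∈ S} := by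
        refine card_le_card fun p hp => ?_
        simp only [hU, joinablePairs, mem_filter, mem_product, mem_univ, true_and] at hp ⊢
        tauto

end IsGreedyStage

lemma card_indepSetFinset_sup_edge_add_le [DecidableEq V] {u v : V} (huv : u ≠ v) (m : ℕ) :
    #((G ⊔ edge u v).indepSetFinset m) + #{S ∈ G.indepSetFinset m | u ∈ S ∧ v ∈ S} ≤
      #(G.indepSetFinset m) := by
  have hsub : (G ⊔ edge u v).indepSetFinset m ⊆
      {S ∈ G.indepSetFinset m | ¬ (u ∈ S ∧ v ∈ S)} := by
    intro S hS
    simp only [mem_filter, mem_indepSetFinset_iff, isNIndepSet_iff] at hS ⊢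
    refine ⟨⟨hS.1.mono' fun x y hxy hadj => hxy (Or.inl hadj), hS.2⟩, fun ⟨hu, hv⟩ => ?_⟩
    exact hS.1 hu hv huv (Or.inr ((edge_adj ..).2 ⟨Or.inl ⟨rfl, rfl⟩, huv⟩))
  have hsplit := card_filter_add_card_filter_not (s := G.indepSetFinset m)
    fun S => u ∈ S ∧ v ∈ S
  have hcard := card_le_card hsub
  omega

lemma IsGreedyStage.exists_mem_joinablePairs [DecidableEq V] (hG : IsGreedyStage G g d t)
    (hd : 0 < d) (hb : (d + 1) ^ g ≤ b) (ht : t ≤ d * b)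
    (hne : (G.indepSetFinset (4 * b)).Nonempty) :
    ∃ p ∈ joinablePairs G g d, #(G.indepSetFinset (4 * b)) * (2 * b ^ 2) ≤
      Fintype.card V ^ 2 * #{S ∈ G.indepSetFinset (4 * b) | p.1 ∈ S ∧ p.2 ∈ S} := by
  have hpairs : ∀ S ∈ G.indepSetFinset (4 * b),
      2 * b ^ 2 ≤ #{p ∈ joinablePairs G g d | p.1 ∈ S ∧ p.2 ∈ S} := fun S hS =>
    hG.two_mul_sq_le_card_joinablePairs_filter hd hb ht (mem_indepSetFinset_iff.1 hS).card_eq.ge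
  have hjoinable : (joinablePairs G g d).Nonempty := by
    obtain ⟨S, hS⟩ := hne
    have hbpos : 0 < b := (by positivity : 0 < (d + 1) ^ g).trans_le hb
    exact (card_pos.1 ((by positivity : 0 < 2 * b ^ 2).trans_le (hpairs S hS))).mono
      (filter_subset _ _)
  obtain ⟨p, hp, hle⟩ := exists_mul_card_le_card_mul_card_bipartiteAbove
    (fun (p : V × V) S => p.1 ∈ S ∧ p.2 ∈ S) hjoinable hpairs
  refine ⟨p, hp, hle.trans (Nat.mul_le_mul_right _ ?_)⟩
  simpa only [Fintype.card_prod, sq] using card_le_univ (joinablePairs G g d)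

lemma IsGreedyStage.exists_succ [DecidableEq V] (hG : IsGreedyStage G g d t) (hd : 0 < d)
    (hb : (d + 1) ^ g ≤ b) (ht : t ≤ d * b) :
    ∃ (G' : SimpleGraph V) (_ : DecidableRel G'.Adj), IsGreedyStage G' g d (t + 1) ∧
      (#(G'.indepSetFinset (4 * b)) : ℝ) ≤
        (1 - 2 * (b / Fintype.card V : ℝ) ^ 2) * #(G.indepSetFinset (4 * b)) := by
  rcases (G.indepSetFinset (4 * b)).eq_empty_or_nonempty with hempty | hne
  · exact ⟨G, inferInstance, hG.mono t.le_succ, by simp [hempty]⟩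
  obtain ⟨p, hp, hmany⟩ := hG.exists_mem_joinablePairs hd hb ht hne
  refine ⟨G ⊔ edge p.1 p.2, inferInstance, hG.sup_edge hp, ?_⟩
  have : Nonempty V := ⟨p.1⟩
  have hdestroyed : 2 * (b / Fintype.card V : ℝ) ^ 2 * #(G.indepSetFinset (4 * b)) ≤
      #{S ∈ G.indepSetFinset (4 * b) | p.1 ∈ S ∧ p.2 ∈ S} := by
    have hmany' : (#(G.indepSetFinset (4 * b)) * (2 * b ^ 2) : ℝ) ≤
        Fintype.card V ^ 2 * #{S ∈ G.indepSetFinset (4 * b) | p.1 ∈ S ∧ p.2 ∈ S} := by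
      exact_mod_cast hmany
    rw [div_pow, mul_div_assoc', div_mul_eq_mul_div, div_le_iff₀ (by positivity)]
    linarith
  have hremaining : (#((G ⊔ edge p.1 p.2).indepSetFinset (4 * b)) : ℝ) +
      #{S ∈ G.indepSetFinset (4 * b) | p.1 ∈ S ∧ p.2 ∈ S} ≤ #(G.indepSetFinset (4 * b)) := by
    exact_mod_cast card_indepSetFinset_sup_edge_add_le (ne_of_mem_joinablePairs hp) (4 * b)
  linarith

lemma exists_isGreedyStage [DecidableEq V] (hd : 0 < d) (hb : (d + 1) ^ g ≤ b)
    (hV : 4 * b ≤ Fintype.card V) (ht : t ≤ d * b) :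
    ∃ (G : SimpleGraph V) (_ : DecidableRel G.Adj), IsGreedyStage G g d t ∧
      (#(G.indepSetFinset (4 * b)) : ℝ) ≤
        (1 - 2 * (b / Fintype.card V : ℝ) ^ 2) ^ t * 2 ^ Fintype.card V := by
  have hratio : (b / Fintype.card V : ℝ) ≤ 1 / 4 := by
    refine div_le_of_le_mul₀ (by positivity) (by positivity) ?_
    have : (4 * b : ℝ) ≤ Fintype.card V := by exact_mod_cast hV
    linarith
  have hfactor : 0 ≤ 1 - 2 * (b / Fintype.card V : ℝ) ^ 2 := by
    have := pow_le_pow_left₀ (by positivity) hratio 2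
    linarith
  induction t with
  | zero =>
    refine ⟨⊥, inferInstance, isGreedyStage_bot, ?_⟩
    rw [pow_zero, one_mul]
    exact_mod_cast (card_le_univ _).trans_eq Fintype.card_finset
  | succ t ih =>
    obtain ⟨G, _, hG, hcard⟩ := ih (by omega)
    obtain ⟨G', _, hG', hcard'⟩ := hG.exists_succ hd hb (by omega)
    refine ⟨G', inferInstance, hG', hcard'.trans ?_⟩
    rw [pow_succ' _ t, mul_assoc]
    gcongr

lemma exists_lt_egirth_and_indepSetFree (hd : 0 < d) (hb : (d + 1) ^ g ≤ b)
    (hV : 4 * b ≤ Fintype.card V)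
    (hlt : (1 - 2 * (b / Fintype.card V : ℝ) ^ 2) ^ (d * b) * 2 ^ Fintype.card V < 1) :
    ∃ G : SimpleGraph V, (g : ℕ∞) < G.egirth ∧ G.IndepSetFree (4 * b) := by
  classical
  obtain ⟨G, _, hG, hcard⟩ := exists_isGreedyStage hd hb hV le_rfl
  have hempty : G.indepSetFinset (4 * b) = ∅ := by
    rw [← card_eq_zero, ← Nat.lt_one_iff]
    exact_mod_cast hcard.trans_lt hlt
  refine ⟨G, hG.lt_egirth, fun S hS => notMem_empty S ?_⟩
  rwa [← hempty, mem_indepSetFinset_iff]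

end Greedy

/-! ### Choice of the constants -/

lemma exists_pow_mul_mul_two_pow_lt_one {q : ℝ} (hq₀ : 0 ≤ q) (hq₁ : q < 1) :
    ∃ K : ℕ, 0 < K ∧ ∀ n : ℕ, n ≠ 0 → q ^ (K * n) * 2 ^ n < 1 := by
  obtain ⟨K, hK⟩ := exists_pow_lt_of_lt_one one_half_pos hq₁
  refine ⟨K, Nat.pos_of_ne_zero ?_, fun n hn => ?_⟩
  · rintro rfl
    norm_num at hK
  · rw [pow_mul, ← mul_pow]
    exact pow_lt_one₀ (by positivity) (by linarith) hn

lemma exists_lt_egirth_and_mul_indepNum_lt (g : ℕ) {R : ℕ} (hR : 0 < R) :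
    ∃ (n : ℕ) (G : SimpleGraph (Fin n)), (g : ℕ∞) < G.egirth ∧ R * G.indepNum < n := by
  obtain ⟨K, hK, hpow⟩ : ∃ K : ℕ, 0 < K ∧
      ∀ n : ℕ, n ≠ 0 → (1 - 2 * (1 / (4 * R) : ℝ) ^ 2) ^ (K * n) * 2 ^ n < 1 := by
    have hratio : (1 / (4 * R) : ℝ) ≤ 1 / 4 := by
      have : (1 : ℝ) ≤ R := by exact_mod_cast hR
      gcongr
      linarith
    have := pow_le_pow_left₀ (by positivity) hratio 2
    have : 0 < (1 / (4 * R) : ℝ) ^ 2 := by positivity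
    exact exists_pow_mul_mul_two_pow_lt_one (by linarith) (by linarith)
  obtain ⟨d, hd⟩ : ∃ d, d = 4 * K * R := ⟨_, rfl⟩
  obtain ⟨b, hb⟩ : ∃ b, b = (d + 1) ^ g := ⟨_, rfl⟩
  obtain ⟨n, hn⟩ : ∃ n, n = R * (4 * b) := ⟨_, rfl⟩
  have hbpos : 0 < b := hb ▸ by positivity
  have hratio : (b / n : ℝ) = 1 / (4 * R) := by
    rw [hn]
    push_cast
    field_simp
  have hsteps : d * b = K * n := by rw [hd, hn]; ring
  obtain ⟨G, hgirth, hfree⟩ := exists_lt_egirth_and_indepSetFree (V := Fin n) (g := g) (d := d)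
    (b := b) (hd ▸ by positivity) hb.ge
    (by simpa only [Fintype.card_fin, hn] using Nat.le_mul_of_pos_left (4 * b) hR)
    (by simpa only [Fintype.card_fin, hratio, hsteps] using hpow n (hn ▸ by positivity))
  exact ⟨n, G, hgirth,
    (Nat.mul_lt_mul_of_pos_left (indepNum_lt_of_indepSetFree hfree) hR).trans_eq hn.symm⟩

end ErdosGirth

/-- **Erdős's theorem.** For all natural numbers `g` and `r` there exists a finite graph
whose girth is greater than `g` and whose chromatic number is greater than `r`. -/
theorem erdos_girth_chromatic (g r : ℕ) :
    ∃ (V : Type) (_ : Fintype V) (G : SimpleGraph V),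
      (g : ℕ∞) < G.egirth ∧ (r : ℕ∞) < G.chromaticNumber := by
  obtain ⟨n, G, hgirth, hindep⟩ := ErdosGirth.exists_lt_egirth_and_mul_indepNum_lt g r.succ_pos
  refine ⟨Fin n, inferInstance, G, hgirth, ?_⟩
  rw [← not_le, chromaticNumber_le_iff_colorable]
  intro hcol
  have hcard : n ≤ (r + 1) * G.indepNum := by
    simpa only [Fintype.card_fin] using
      ErdosGirth.card_le_mul_indepNum_of_colorable (hcol.mono r.le_succ)
  exact hcard.not_gt hindep
end

section
/- For all integers g, k, r ≥ 2, there exists a finite k-uniform hypergraph H such that H contains no cycle of length at most g and H has no proper colouring with r colours. -/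
/-- A hypergraph with edge set `E` has a cycle of length `m`: a cyclic sequence of `m`
distinct edges `e₀, …, e_{m-1}` and `m` distinct vertices `v₀, …, v_{m-1}` with
`vᵢ ∈ eᵢ ∩ e_{i+1}` (indices modulo `m`). -/
def HypergraphCycle {V : Type} (E : Finset (Finset V)) (m : ℕ) : Prop :=
  ∃ (e : ZMod m → Finset V) (v : ZMod m → V),
    Function.Injective e ∧ Function.Injective v ∧
    ∀ i : ZMod m, e i ∈ E ∧ v i ∈ e i ∧ v i ∈ e (i + 1)

/-!
Fix large `D` and then large `n`, and add edges greedily on `n` vertices, keeping all degrees at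
most `D`. A `k`-tuple of vertices of degree less than `D` that are pairwise at distance more than
`g` spans an edge whose addition closes no cycle of length at most `g`. Balls of radius `g` have at
most `(1 + D * k) ^ g` points, and after `O(n)` steps few vertices have reached degree `D`, so all
but `n ^ k / (2 * r ^ k)` of the `k`-tuples are of this kind. Every `r`-colouring has a colour class
of size at least `n / r`, hence at least `n ^ k / r ^ k` monochromatic `k`-tuples, at least half of
which may therefore be added. By averaging, some new edge is monochromatic for a fraction
`1 / (2 * r ^ k)` of the colourings that are still proper. Of the `r ^ n` colourings none survives
`n * L` steps once `r * (1 - 1 / (2 * r ^ k)) ^ L < 1`.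
-/

namespace ErdosHajnal

open Finset

section Counting

variable {α β : Type*}

lemma mul_card_biUnion_le_card_mul [DecidableEq β] {s : Finset α} {t : α → Finset β} {c b : ℕ}
    (h : ∀ a ∈ s, c * #(t a) ≤ b) : c * #(s.biUnion t) ≤ #s * b :=
  calc c * #(s.biUnion t) ≤ c * ∑ a ∈ s, #(t a) := Nat.mul_le_mul_left c card_biUnion_le
    _ = ∑ a ∈ s, c * #(t a) := mul_sum ..
    _ ≤ #s * b := sum_le_card_nsmul s _ b h

lemma exists_mul_card_le_card_bipartiteBelow (R : α → β → Prop) [∀ a b, Decidable (R a b)]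
    {s : Finset α} {t : Finset β} {δ : ℝ} (ht : t.Nonempty)
    (h : ∀ a ∈ s, δ * #t ≤ #(t.bipartiteAbove R a)) :
    ∃ b ∈ t, δ * #s ≤ #(s.bipartiteBelow R b) := by
  by_contra! hlt
  have := card_nsmul_lt_card_nsmul_of_le_of_lt R ht h hlt
  simp only [nsmul_eq_mul] at this
  linarith

/-- Multiplying by `card α` avoids the exponent `card ι - 1`. -/
lemma card_mul_card_filter_apply_mem_le {ι : Type*} [Fintype ι] [DecidableEq ι] [Fintype α]
    [DecidableEq α] (j : ι) {S : ({i // i ≠ j} → α) → Finset α} {b : ℕ} (hS : ∀ y, #(S y) ≤ b) :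
    Fintype.card α * #{x : ι → α | x j ∈ S fun i ↦ x i} ≤
      b * Fintype.card α ^ Fintype.card ι := by
  have hsplit : #{x : ι → α | x j ∈ S fun i ↦ x i} ≤ ∑ y, #(S y) := by
    rw [← card_sigma]
    refine card_le_card_of_injOn (fun x ↦ ⟨fun i ↦ x i, x j⟩) (fun x hx ↦ ?_) fun x _ y _ hxy ↦ ?_
    · simpa using hx
    · obtain ⟨hne, heq⟩ := Sigma.mk.inj_iff.1 hxy
      exact (Equiv.funSplitAt j α).injective (Prod.ext (eq_of_heq heq) hne)
  have hcard : Fintype.card ({i // i ≠ j} → α) * Fintype.card α =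
      Fintype.card α ^ Fintype.card ι := by
    rw [← Fintype.card_fun, Fintype.card_congr (Equiv.funSplitAt j α), Fintype.card_prod, mul_comm]
  calc Fintype.card α * #{x : ι → α | x j ∈ S fun i ↦ x i}
      ≤ Fintype.card α * (Fintype.card ({i // i ≠ j} → α) * b) := by
        gcongr
        exact hsplit.trans (sum_le_card_nsmul _ _ _ fun y _ ↦ hS y)
    _ = b * Fintype.card α ^ Fintype.card ι := by rw [← hcard]; ring

end Counting

section DegreeAndDistance

variable {V : Type*} [DecidableEq V] {E : Finset (Finset V)} {k D : ℕ}

/-- The degree of the vertex `v` in the hypergraph with edge set `E`. -/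
def degree (E : Finset (Finset V)) (v : V) : ℕ := #{e ∈ E | v ∈ e}

/-- The closed neighbourhood of `v`: the vertices at distance at most `1` from `v`. -/
def neighborhood (E : Finset (Finset V)) (v : V) : Finset V :=
  insert v ({e ∈ E | v ∈ e}.biUnion id)

/-- The ball of radius `s` around `v` for the distance in which any two vertices of a common edge
are at distance at most `1`. -/
def ball (E : Finset (Finset V)) (v : V) : ℕ → Finset V
  | 0 => {v}
  | s + 1 => (ball E v s).biUnion (neighborhood E)

lemma mem_neighborhood {u v : V} : u ∈ neighborhood E v ↔ u = v ∨ ∃ e ∈ E, v ∈ e ∧ u ∈ e := by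
  simp [neighborhood, and_assoc]

lemma ball_mono (E : Finset (Finset V)) (v : V) : Monotone (ball E v) :=
  monotone_nat_of_le_succ fun _ _ hu ↦
    mem_biUnion.2 ⟨_, hu, mem_neighborhood.2 (.inl rfl)⟩

lemma self_mem_ball (E : Finset (Finset V)) (v : V) (s : ℕ) : v ∈ ball E v s :=
  ball_mono E v (Nat.zero_le s) (mem_singleton_self v)

lemma mem_ball_of_path {e : ℕ → Finset V} {v : ℕ → V} {s : ℕ}
    (h : ∀ j < s, e j ∈ E ∧ v j ∈ e j ∧ v (j + 1) ∈ e j) : v s ∈ ball E (v 0) s := by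
  induction s with
  | zero => exact self_mem_ball E _ 0
  | succ s ih =>
    exact mem_biUnion.2 ⟨v s, ih fun j hj ↦ h j (by omega),
      mem_neighborhood.2 (.inr ⟨e s, h s (by omega)⟩)⟩

lemma card_neighborhood_le (hE : ∀ e ∈ E, #e ≤ k) {v : V} (hD : degree E v ≤ D) :
    #(neighborhood E v) ≤ 1 + D * k :=
  calc #(neighborhood E v) ≤ #({e ∈ E | v ∈ e}.biUnion id) + 1 := card_insert_le _ _
    _ ≤ degree E v * k + 1 := by
      gcongr
      exact card_biUnion_le_card_mul _ _ k fun e he ↦ hE e (mem_filter.1 he).1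
    _ ≤ D * k + 1 := by gcongr
    _ = 1 + D * k := add_comm ..

lemma card_ball_le (hE : ∀ e ∈ E, #e ≤ k) (hD : ∀ v, degree E v ≤ D) (v : V) (s : ℕ) :
    #(ball E v s) ≤ (1 + D * k) ^ s := by
  induction s with
  | zero => simp [ball]
  | succ s ih =>
    calc #(ball E v (s + 1)) ≤ #(ball E v s) * (1 + D * k) :=
          card_biUnion_le_card_mul _ _ _ fun w _ ↦ card_neighborhood_le hE (hD w)
      _ ≤ (1 + D * k) ^ s * (1 + D * k) := by gcongr
      _ = (1 + D * k) ^ (s + 1) := (pow_succ ..).symm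

lemma card_filter_le_degree_mul_le [Fintype V] (hE : ∀ e ∈ E, #e ≤ k) (D : ℕ) :
    #{v | D ≤ degree E v} * D ≤ #E * k :=
  calc #{v | D ≤ degree E v} * D ≤ ∑ e ∈ E, #(({v | D ≤ degree E v} : Finset V) ∩ e) :=
        le_sum_card_inter fun _ hv ↦ (mem_filter.1 hv).2
    _ ≤ #E * k := sum_le_card_nsmul _ _ _ fun e he ↦
      (card_le_card inter_subset_right).trans (hE e he)

end DegreeAndDistance

section Cycles

variable {V : Type} {m : ℕ}

lemma not_hypergraphCycle_empty : ¬ HypergraphCycle (∅ : Finset (Finset V)) m := by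
  rintro ⟨e, v, -, -, h⟩
  exact notMem_empty _ (h 0).1

/-- Remove the new edge `e₀` from a cycle through it: the rest is a path joining two of its
vertices. -/
lemma exists_mem_ball_of_hypergraphCycle_insert [DecidableEq V] {E : Finset (Finset V)}
    {e₀ : Finset V} (hm : 2 ≤ m) (hcycle : HypergraphCycle (insert e₀ E) m)
    (hE : ¬ HypergraphCycle E m) :
    ∃ u ∈ e₀, ∃ w ∈ e₀, u ≠ w ∧ w ∈ ball E u (m - 1) := by
  obtain ⟨e, v, he, hv, h⟩ := hcycle
  obtain ⟨i, rfl⟩ : ∃ i, e i = e₀ := by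
    by_contra! hne
    exact hE ⟨e, v, he, hv, fun i ↦ ⟨mem_of_mem_insert_of_ne (h i).1 (hne i), (h i).2⟩⟩
  have natCast_ne_zero {j : ℕ} (hj : 0 < j) (hjm : j < m) : (j : ZMod m) ≠ 0 := by
    rw [Ne, ZMod.natCast_eq_zero_iff]
    exact Nat.not_dvd_of_pos_of_lt hj hjm
  have last_add_one : i + ((m - 1 : ℕ) : ZMod m) + 1 = i := by
    rw [add_assoc, ← Nat.cast_add_one, Nat.sub_add_cancel (by omega), ZMod.natCast_self, add_zero]
  refine ⟨v i, (h i).2.1, v (i + (m - 1 : ℕ)), ?_, fun heq ↦ ?_, ?_⟩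
  · simpa only [last_add_one] using (h (i + (m - 1 : ℕ))).2.2
  · exact natCast_ne_zero (by omega) (by omega) (left_eq_add.1 (hv heq))
  · have path : ∀ j < m - 1, e (i + (j + 1 : ℕ)) ∈ E ∧ v (i + j) ∈ e (i + (j + 1 : ℕ)) ∧
        v (i + (j + 1 : ℕ)) ∈ e (i + (j + 1 : ℕ)) := fun j hj ↦
      ⟨mem_of_mem_insert_of_ne (h _).1 fun heq ↦
          natCast_ne_zero j.succ_pos (by omega) (add_eq_left.1 (he heq)),
        by simpa [add_assoc] using (h (i + j)).2.2, (h _).2.1⟩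
    simpa using mem_ball_of_path (v := fun j : ℕ ↦ v (i + j)) path

end Cycles

section Admissible

variable {V ι : Type*} [DecidableEq V] {E : Finset (Finset V)} {g D : ℕ}

/-- A tuple of vertices that may be added as an edge: its entries are pairwise at distance more
than `g`, hence distinct, and have degree less than `D`. -/
def IsAdmissible (E : Finset (Finset V)) (g D : ℕ) (x : ι → V) : Prop :=
  (∀ i j, i ≠ j → x j ∉ ball E (x i) g) ∧ ∀ i, degree E (x i) < D

lemma IsAdmissible.injective {x : ι → V} (hx : IsAdmissible E g D x) : Function.Injective x := by
  intro i j hij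
  by_contra hne
  exact hx.1 i j hne (hij ▸ self_mem_ball E (x i) g)

variable [Fintype ι] [DecidableEq ι]

instance : DecidablePred (IsAdmissible E g D : (ι → V) → Prop) :=
  fun _ ↦ inferInstanceAs (Decidable (_ ∧ _))

lemma card_mul_card_not_isAdmissible_le [Fintype V] {B : ℕ} (hB : ∀ v, #(ball E v g) ≤ B) :
    Fintype.card V * #{x : ι → V | ¬ IsAdmissible E g D x} ≤
      (Fintype.card ι ^ 2 * B + Fintype.card ι * #{v | D ≤ degree E v}) *
        Fintype.card V ^ Fintype.card ι := by
  set n := Fintype.card V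
  set k := Fintype.card ι
  set close : ι × ι → Finset (ι → V) := fun p ↦ {x | x p.2 ∈ ball E (x p.1) g}
  set saturated : ι → Finset (ι → V) := fun i ↦ {x | x i ∈ ({v | D ≤ degree E v} : Finset V)}
  have hcover : ({x | ¬ IsAdmissible E g D x} : Finset (ι → V)) ⊆
      univ.offDiag.biUnion close ∪ univ.biUnion saturated := by
    intro x hx
    simp only [IsAdmissible, close, saturated, mem_filter, mem_univ, true_and, mem_union,
      mem_biUnion, mem_offDiag, Prod.exists] at hx ⊢
    grind
  have hclose : n * #(univ.offDiag.biUnion close) ≤ k ^ 2 * (B * n ^ k) := by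
    refine (mul_card_biUnion_le_card_mul (b := B * n ^ k) fun p hp ↦ ?_).trans
      (Nat.mul_le_mul_right _ ?_)
    · have hne : p.1 ≠ p.2 := (mem_offDiag.1 hp).2.2
      exact card_mul_card_filter_apply_mem_le p.2 (S := fun y ↦ ball E (y ⟨p.1, hne⟩) g)
        fun _ ↦ hB _
    · rw [offDiag_card, sq]
      exact Nat.sub_le _ _
  have hsaturated : n * #(univ.biUnion saturated) ≤ k * (#{v | D ≤ degree E v} * n ^ k) :=
    mul_card_biUnion_le_card_mul fun i _ ↦ card_mul_card_filter_apply_mem_le i fun _ ↦ le_rfl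
  calc n * #{x : ι → V | ¬ IsAdmissible E g D x}
      ≤ n * (#(univ.offDiag.biUnion close) + #(univ.biUnion saturated)) :=
        Nat.mul_le_mul_left n ((card_le_card hcover).trans (card_union_le _ _))
    _ ≤ k ^ 2 * (B * n ^ k) + k * (#{v | D ≤ degree E v} * n ^ k) := by
        rw [mul_add]
        exact Nat.add_le_add hclose hsaturated
    _ = (k ^ 2 * B + k * #{v | D ≤ degree E v}) * n ^ k := by ring

end Admissible

section Sparse

variable {V : Type} [DecidableEq V] {ι : Type*} [Fintype ι] {E : Finset (Finset V)} {g D : ℕ}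

/-- The edge sets produced by the greedy construction: `k`-uniform, without cycles of length at
most `g`, and of maximum degree at most `D`. -/
structure IsSparse (E : Finset (Finset V)) (g k D : ℕ) : Prop where
  card_eq : ∀ e ∈ E, #e = k
  not_hypergraphCycle : ∀ m, 2 ≤ m → m ≤ g → ¬ HypergraphCycle E m
  degree_le : ∀ v, degree E v ≤ D

lemma isSparse_empty (g k D : ℕ) : IsSparse (∅ : Finset (Finset V)) g k D where
  card_eq := by simp
  not_hypergraphCycle _ _ _ := not_hypergraphCycle_empty
  degree_le := by simp [degree]

lemma IsSparse.insert_image {x : ι → V} (hE : IsSparse E g (Fintype.card ι) D)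
    (hx : IsAdmissible E g D x) :
    IsSparse (insert (univ.image x) E) g (Fintype.card ι) D where
  card_eq := (forall_mem_insert ..).2 ⟨card_image_of_injective _ hx.injective, hE.card_eq⟩
  not_hypergraphCycle m hm hmg hcycle := by
    obtain ⟨u, hu, w, hw, huw, hball⟩ := exists_mem_ball_of_hypergraphCycle_insert hm hcycle
      (hE.not_hypergraphCycle m hm hmg)
    obtain ⟨i, -, rfl⟩ := mem_image.1 hu
    obtain ⟨j, -, rfl⟩ := mem_image.1 hw
    exact hx.1 i j (ne_of_apply_ne x huw) (ball_mono E _ (by omega) hball)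
  degree_le v := by
    rw [degree, filter_insert]
    split_ifs with hv
    · obtain ⟨i, -, rfl⟩ := mem_image.1 hv
      exact (card_insert_le _ _).trans (hx.2 i)
    · exact hE.degree_le v

/-- The factors `2` split the budget evenly between close pairs and vertices of degree `D`. -/
lemma IsSparse.mul_card_not_isAdmissible_le [DecidableEq ι] [Fintype V] [Nonempty V] {q : ℕ}
    (hE : IsSparse E g (Fintype.card ι) D) (hD : 0 < D)
    (hball : 2 * q * Fintype.card ι ^ 2 * (1 + D * Fintype.card ι) ^ g ≤ Fintype.card V)
    (hedges : 2 * q * Fintype.card ι ^ 2 * #E ≤ D * Fintype.card V) :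
    q * #{x : ι → V | ¬ IsAdmissible E g D x} ≤ Fintype.card V ^ Fintype.card ι := by
  set n := Fintype.card V
  set k := Fintype.card ι
  have hE' : ∀ e ∈ E, #e ≤ k := fun e he ↦ (hE.card_eq e he).le
  have hsaturated : 2 * q * k * #{v | D ≤ degree E v} ≤ n := by
    refine Nat.le_of_mul_le_mul_left ?_ hD
    calc D * (2 * q * k * #{v | D ≤ degree E v})
        = 2 * q * k * (#{v | D ≤ degree E v} * D) := by ring
      _ ≤ 2 * q * k * (#E * k) := Nat.mul_le_mul_left _ (card_filter_le_degree_mul_le hE' D)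
      _ = 2 * q * k ^ 2 * #E := by ring
      _ ≤ D * n := hedges
  have hcoeff : q * (k ^ 2 * (1 + D * k) ^ g + k * #{v | D ≤ degree E v}) ≤ n := by linarith
  refine Nat.le_of_mul_le_mul_left ?_ (Fintype.card_pos : 0 < n)
  calc n * (q * #{x : ι → V | ¬ IsAdmissible E g D x})
      = q * (n * #{x : ι → V | ¬ IsAdmissible E g D x}) := by ring
    _ ≤ q * ((k ^ 2 * (1 + D * k) ^ g + k * #{v | D ≤ degree E v}) * n ^ k) :=
        Nat.mul_le_mul_left q <| card_mul_card_not_isAdmissible_le fun v ↦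
          card_ball_le hE' hE.degree_le v g
    _ = q * (k ^ 2 * (1 + D * k) ^ g + k * #{v | D ≤ degree E v}) * n ^ k := by ring
    _ ≤ n * n ^ k := Nat.mul_le_mul_right _ hcoeff

end Sparse

section Colorings

variable {V κ ι : Type*} [DecidableEq V] [DecidableEq κ] [Fintype κ] [Fintype V] [Fintype ι]

/-- All vertices of `e` receive the same colour under `f`. -/
abbrev Monochromatic (f : V → κ) (e : Finset V) : Prop := ∀ x ∈ e, ∀ y ∈ e, f x = f y

/-- The proper colourings with colours in `κ` of the hypergraph with edge set `E`. -/
def properColorings (E : Finset (Finset V)) (κ : Type*) [DecidableEq κ] [Fintype κ] :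
    Finset (V → κ) :=
  {f | ∀ e ∈ E, ¬ Monochromatic f e}

lemma properColorings_insert (E : Finset (Finset V)) (e : Finset V) :
    properColorings (insert e E) κ = {f ∈ properColorings E κ | ¬ Monochromatic f e} := by
  ext f
  simp only [properColorings, mem_filter, mem_univ, true_and, forall_mem_insert, and_comm]

lemma exists_monochromatic_of_card_properColorings_eq_zero {E : Finset (Finset V)}
    (h : #(properColorings E κ) = 0) (f : V → κ) : ∃ e ∈ E, Monochromatic f e := by
  by_contra! hf
  exact notMem_empty f (card_eq_zero.1 h ▸ mem_filter.2 ⟨mem_univ f, hf⟩)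

lemma card_pow_le_mul_card_monochromatic [DecidableEq ι] [Nonempty κ] (f : V → κ) :
    Fintype.card V ^ Fintype.card ι ≤
      Fintype.card κ ^ Fintype.card ι * #{x : ι → V | Monochromatic f (univ.image x)} := by
  obtain ⟨c, hc⟩ : ∃ c, Fintype.card V ≤ Fintype.card κ * #{v | f v = c} := by
    obtain ⟨c, hc⟩ := Fintype.exists_le_card_fiber_of_nsmul_le_card f
      (b := (Fintype.card V / Fintype.card κ : ℚ))
      (by rw [nsmul_eq_mul, mul_div_cancel₀]; positivity)
    rw [div_le_iff₀' (by positivity)] at hc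
    exact ⟨c, mod_cast hc⟩
  have hclass : #{v | f v = c} ^ Fintype.card ι ≤
      #{x : ι → V | Monochromatic f (univ.image x)} := by
    rw [← card_univ (α := ι), ← prod_const, ← Fintype.card_piFinset]
    refine card_le_card fun x hx ↦ mem_filter.2 ⟨mem_univ x, ?_⟩
    simp only [Fintype.mem_piFinset, mem_filter_univ] at hx
    simp only [forall_mem_image, mem_univ, forall_const]
    exact fun {i j} ↦ (hx i).trans (hx j).symm
  calc Fintype.card V ^ Fintype.card ι
      ≤ (Fintype.card κ * #{v | f v = c}) ^ Fintype.card ι := Nat.pow_le_pow_left hc _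
    _ = Fintype.card κ ^ Fintype.card ι * #{v | f v = c} ^ Fintype.card ι := mul_pow ..
    _ ≤ Fintype.card κ ^ Fintype.card ι * #{x : ι → V | Monochromatic f (univ.image x)} :=
        Nat.mul_le_mul_left _ hclass

lemma card_pow_le_two_mul_card_filter_monochromatic [DecidableEq ι] [Nonempty κ]
    {T : Finset (ι → V)} (f : V → κ)
    (hT : 2 * Fintype.card κ ^ Fintype.card ι * #Tᶜ ≤ Fintype.card V ^ Fintype.card ι) :
    Fintype.card V ^ Fintype.card ι ≤
      2 * Fintype.card κ ^ Fintype.card ι * #{x ∈ T | Monochromatic f (univ.image x)} := by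
  have hsplit : #{x : ι → V | Monochromatic f (univ.image x)} ≤
      #{x ∈ T | Monochromatic f (univ.image x)} + #Tᶜ := by
    refine (card_le_card fun x hx ↦ ?_).trans (card_union_le _ _)
    rw [mem_filter_univ] at hx
    rw [mem_union, mem_filter, mem_compl]
    tauto
  have hall := card_pow_le_mul_card_monochromatic (ι := ι) f
  have hsplit' := Nat.mul_le_mul_left (2 * Fintype.card κ ^ Fintype.card ι) hsplit
  linarith

lemma exists_mem_card_properColorings_insert_le [DecidableEq ι] [Nonempty V] [Nonempty κ]
    (E : Finset (Finset V)) {T : Finset (ι → V)}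
    (hT : 2 * Fintype.card κ ^ Fintype.card ι * #Tᶜ ≤ Fintype.card V ^ Fintype.card ι) :
    ∃ x ∈ T, (#(properColorings (insert (univ.image x) E) κ) : ℝ) ≤
      (1 - 1 / (2 * Fintype.card κ ^ Fintype.card ι)) * #(properColorings E κ) := by
  have hmono (f : V → κ) := card_pow_le_two_mul_card_filter_monochromatic f hT
  have hTne : T.Nonempty := by
    have hpos : 0 < Fintype.card V ^ Fintype.card ι := by positivity
    have hconst := hmono fun _ ↦ Classical.arbitrary κ
    exact (card_pos.1 (Nat.pos_of_mul_pos_left (hpos.trans_le hconst))).mono (filter_subset _ _)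
  have hTcard : #T ≤ Fintype.card V ^ Fintype.card ι :=
    (card_le_univ T).trans_eq Fintype.card_fun
  obtain ⟨x, hx, hkill⟩ := exists_mul_card_le_card_bipartiteBelow
    (s := properColorings E κ) (δ := 1 / (2 * Fintype.card κ ^ Fintype.card ι))
    (fun f x ↦ Monochromatic f (univ.image x)) hTne fun f _ ↦ by
      rw [one_div_mul_eq_div, div_le_iff₀' (by positivity)]
      exact_mod_cast hTcard.trans (hmono f)
  refine ⟨x, hx, ?_⟩
  have hsplit : (#{f ∈ properColorings E κ | Monochromatic f (univ.image x)} : ℝ) +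
      #{f ∈ properColorings E κ | ¬ Monochromatic f (univ.image x)} = #(properColorings E κ) :=
    mod_cast card_filter_add_card_filter_not _
  rw [properColorings_insert]
  simp only [bipartiteBelow] at hkill
  linarith

end Colorings

section Greedy

variable {V : Type} {κ : Type*} [DecidableEq V] [DecidableEq κ] [Fintype V] [Fintype κ]
  [Nonempty V] [Nonempty κ] {g k D : ℕ}

lemma IsSparse.exists_insert {E : Finset (Finset V)} (hE : IsSparse E g k D) (hD : 0 < D)
    (hball : 4 * Fintype.card κ ^ k * k ^ 2 * (1 + D * k) ^ g ≤ Fintype.card V)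
    (hedges : 4 * Fintype.card κ ^ k * k ^ 2 * #E ≤ D * Fintype.card V) :
    ∃ e, IsSparse (insert e E) g k D ∧ (#(properColorings (insert e E) κ) : ℝ) ≤
      (1 - 1 / (2 * Fintype.card κ ^ k)) * #(properColorings E κ) := by
  obtain ⟨k, rfl⟩ : ∃ l, k = Fintype.card (Fin l) := ⟨k, (Fintype.card_fin k).symm⟩
  have hbad := hE.mul_card_not_isAdmissible_le (q := 2 * Fintype.card κ ^ Fintype.card (Fin k)) hD
    (by linarith) (by linarith)
  rw [← compl_filter] at hbad
  obtain ⟨x, hx, hcard⟩ := exists_mem_card_properColorings_insert_le (κ := κ) E hbad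
  exact ⟨univ.image x, hE.insert_image (mem_filter.1 hx).2, hcard⟩

lemma exists_isSparse_card_properColorings_le (hD : 0 < D)
    (hball : 4 * Fintype.card κ ^ k * k ^ 2 * (1 + D * k) ^ g ≤ Fintype.card V) (s : ℕ)
    (hs : 4 * Fintype.card κ ^ k * k ^ 2 * s ≤ D * Fintype.card V) :
    ∃ E : Finset (Finset V), IsSparse E g k D ∧ #E ≤ s ∧ (#(properColorings E κ) : ℝ) ≤
      (1 - 1 / (2 * Fintype.card κ ^ k)) ^ s * Fintype.card κ ^ Fintype.card V := by
  induction s with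
  | zero => exact ⟨∅, isSparse_empty g k D, le_rfl, by simp [properColorings]⟩
  | succ s ih =>
    obtain ⟨E, hE, hEs, hcard⟩ := ih (le_trans (by gcongr; omega) hs)
    obtain ⟨e, hE', hcard'⟩ := hE.exists_insert (κ := κ) hD hball
      (le_trans (by gcongr; omega) hs)
    refine ⟨insert e E, hE', (card_insert_le e E).trans (by omega), hcard'.trans ?_⟩
    rw [pow_succ', mul_assoc]
    gcongr
    exact mod_cast Nat.one_sub_one_div_cast_nonneg (2 * Fintype.card κ ^ k)

end Greedy

end ErdosHajnal

/-- **Erdős–Hajnal.** For all `g, k, r ≥ 2` there is a finite `k`-uniform hypergraph with no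
cycle of length at most `g` and no proper colouring with `r` colours. -/
theorem erdos_hajnal_hypergraph_girth (g k r : ℕ) (hg : 2 ≤ g) (hk : 2 ≤ k) (hr : 2 ≤ r) :
    ∃ (V : Type) (_ : Fintype V) (E : Finset (Finset V)),
      (∀ e ∈ E, e.card = k) ∧
      (∀ m, 2 ≤ m → m ≤ g → ¬ HypergraphCycle E m) ∧
      (∀ f : V → Fin r, ∃ e ∈ E, ∀ x ∈ e, ∀ y ∈ e, f x = f y) := by
  have : NeZero r := ⟨by omega⟩
  set q : ℝ := 1 - 1 / (2 * r ^ k) with hq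
  have hq₀ : 0 ≤ q := by
    rw [hq]
    exact_mod_cast Nat.one_sub_one_div_cast_nonneg (2 * r ^ k)
  have hq₁ : q < 1 := sub_lt_self 1 (by positivity)
  obtain ⟨L, hL⟩ : ∃ L : ℕ, q ^ L < 1 / r := exists_pow_lt_of_lt_one (by positivity) hq₁
  set D := 4 * r ^ k * k ^ 2 * L + 1
  set n := 4 * r ^ k * k ^ 2 * (1 + D * k) ^ g + 1
  obtain ⟨E, hE, -, hcard⟩ := ErdosHajnal.exists_isSparse_card_properColorings_le
    (V := Fin n) (κ := Fin r) (g := g) (k := k) (D := D) (by omega) (by simp [n]) (n * L)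
    (by simp only [Fintype.card_fin, D]; linarith)
  have hfew : ((ErdosHajnal.properColorings E (Fin r)).card : ℝ) < 1 :=
    calc ((ErdosHajnal.properColorings E (Fin r)).card : ℝ)
        ≤ q ^ (n * L) * r ^ n := by simpa only [Fintype.card_fin] using hcard
      _ = (q ^ L * r) ^ n := by rw [mul_pow, ← pow_mul, mul_comm L]
      _ < 1 := pow_lt_one₀ (by positivity) ((lt_div_iff₀ (by positivity)).1 hL) (by omega)
  exact ⟨Fin n, inferInstance, E, hE.card_eq, hE.not_hypergraphCycle,
    ErdosHajnal.exists_monochromatic_of_card_properColorings_eq_zero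
      (Nat.lt_one_iff.1 (mod_cast hfew))⟩
end

section
/- For every integer r ≥ 2 there exists a natural number k such that every finite simple graph G with chromatic number greater than k contains a triangle-free subgraph with chromatic number greater than r; that is, there is a subset E' of the edges of G such that the graph (V(G), E') contains no triangle and has chromatic number greater than r. -/
/-!
Suppose that every triangle-free subgraph of `G` is `r`-colourable; we bound the chromatic number
of `G` in terms of `r`.

The shift graph on the pairs `i < j` from a set of `2 ^ r + 1` elements is triangle-free and not
`r`-colourable, so `G` has no clique large enough to contain it. It then suffices to bound the
chromatic number by induction on the size `m` of a forbidden clique. Neighbourhoods have no clique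
of size `m - 1`, so by induction they are `c`-colourable for some `c`. Order the vertices linearly
and label each edge `u < v` by the colour of `u` in a `c`-colouring of the neighbourhood of `v`.
Every label class is triangle-free: the two lower vertices of a triangle of `G` are adjacent, so its
two edges at the top vertex have different labels. Hence all `c` classes are `r`-colourable, and the
product of their colourings colours `G` with `r ^ c` colours.
-/

universe u

namespace Rodl

open SimpleGraph

section General

variable {V : Type*}

theorem natCast_lt_chromaticNumber_iff {G : SimpleGraph V} {n : ℕ} :
    (n : ℕ∞) < G.chromaticNumber ↔ ¬ G.Colorable n := by
  rw [← not_le, chromaticNumber_le_iff_colorable]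

theorem colorable_iSup {ι : Type*} [Fintype ι] {H : ι → SimpleGraph V} {r : ℕ}
    (hH : ∀ i, (H i).Colorable r) : (⨆ i, H i).Colorable (r ^ Fintype.card ι) := by
  classical
  let C (i : ι) : (H i).Coloring (Fin r) := (hH i).some
  let productColoring : (⨆ i, H i).Coloring (ι → Fin r) :=
    Coloring.mk (fun v i ↦ C i v) fun huv heq ↦ by
      obtain ⟨i, hi⟩ := iSup_adj.1 huv
      exact (C i).valid hi (congrFun heq i)
  simpa only [Fintype.card_fun, Fintype.card_fin] using productColoring.colorable

theorem cliqueFree_induce_neighborSet {G : SimpleGraph V} {m : ℕ}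
    (hG : G.CliqueFree (m + 1)) (v : V) : (G.induce (G.neighborSet v)).CliqueFree m := by
  rw [cliqueFree_induce_iff, ← Set.univ_inter (G.neighborSet v)]
  exact CliqueFreeOn.of_succ G (G.cliqueFreeOn_univ.2 hG) (Set.mem_univ v)

theorem cliqueFree_three_fromRel {R : V → V → Prop}
    (transitive : ∀ a b c, R a b → R b c → ¬ R a c)
    (cyclic : ∀ a b c, R a b → R b c → ¬ R c a) : (fromRel R).CliqueFree 3 := by
  classical
  intro s hs
  obtain ⟨a, b, c, hab, hac, hbc, -⟩ := is3Clique_iff.1 hs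
  rw [fromRel_adj] at hab hac hbc
  grind

end General

section ShiftGraph

/-- The shift graph of `α`: its vertices are the pairs `i < j` in `α`, and `(i, j)` is joined to
`(j, k)`. It is a triangle-free graph whose chromatic number grows with the size of `α`. -/
def shiftGraph (α : Type*) [Preorder α] : SimpleGraph {p : α × α // p.1 < p.2} :=
  fromRel fun p q ↦ p.1.2 = q.1.1

theorem shiftGraph_adj {α : Type*} [Preorder α] {i j k : α} (hij : i < j) (hjk : j < k) :
    (shiftGraph α).Adj ⟨(i, j), hij⟩ ⟨(j, k), hjk⟩ := by
  simp [shiftGraph, fromRel_adj, hij.ne]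

theorem shiftGraph_cliqueFree_three (α : Type*) [Preorder α] : (shiftGraph α).CliqueFree 3 := by
  apply cliqueFree_three_fromRel
  · intro p q s hpq hqs hps
    exact q.2.ne (hpq.symm.trans (hps.trans hqs.symm))
  · intro p q s hpq hqs hsp
    refine lt_irrefl p.1.1 ?_
    calc p.1.1
      _ < p.1.2 := p.2
      _ = q.1.1 := hpq
      _ < q.1.2 := q.2
      _ = s.1.1 := hqs
      _ < s.1.2 := s.2
      _ = p.1.1 := hsp

theorem injective_shiftGraph_colors {α β : Type*} [LinearOrder α] (C : (shiftGraph α).Coloring β) :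
    Function.Injective fun i ↦ {x | ∃ j, ∃ hij : i < j, C ⟨(i, j), hij⟩ = x} := by
  refine Function.Injective.of_lt_imp_ne fun i j hij heq ↦ ?_
  -- The colour of `(i, j)` cannot occur on a pair `(j, k)`.
  obtain ⟨k, hjk, hk⟩ := heq.subset ⟨j, hij, rfl⟩
  exact C.valid (shiftGraph_adj hij hjk) hk.symm

theorem card_le_two_pow_of_shiftGraph_colorable {α : Type*} [LinearOrder α] [Fintype α] {r : ℕ}
    (h : (shiftGraph α).Colorable r) : Fintype.card α ≤ 2 ^ r := by
  obtain ⟨C⟩ := h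
  simpa only [Fintype.card_set, Fintype.card_fin] using
    Fintype.card_le_of_injective _ (injective_shiftGraph_colors C)

end ShiftGraph

section LabelClass

/-- Given a colouring `C v` of the neighbourhood of each vertex `v` of `G`, label every edge `u < v`
of `G` by the colour `C v u` that the larger endpoint assigns to the smaller one; this is the
subgraph of the edges labelled `i`. -/
def labelClass {V K : Type*} [Preorder V] (G : SimpleGraph V)
    (C : ∀ v, (G.induce (G.neighborSet v)).Coloring K) (i : K) : SimpleGraph V :=
  fromRel fun u v ↦ u < v ∧ ∃ h : G.Adj v u, C v ⟨u, h⟩ = i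

variable {V K : Type*} {G : SimpleGraph V}

theorem labelClass_le [Preorder V] (C : ∀ v, (G.induce (G.neighborSet v)).Coloring K) (i : K) :
    labelClass G C i ≤ G := by
  rintro u v ⟨-, ⟨-, hvu, -⟩ | ⟨-, huv, -⟩⟩
  · exact hvu.symm
  · exact huv

theorem labelClass_cliqueFree_three [Preorder V]
    (C : ∀ v, (G.induce (G.neighborSet v)).Coloring K) (i : K) :
    (labelClass G C i).CliqueFree 3 := by
  apply cliqueFree_three_fromRel
  · rintro u w v ⟨-, hwu, -⟩ ⟨-, hvw, hw⟩ ⟨-, hvu, hu⟩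
    have huw : (G.induce (G.neighborSet v)).Adj ⟨u, hvu⟩ ⟨w, hvw⟩ := hwu.symm
    exact (C v).valid huw (hu.trans hw.symm)
  · rintro u w v ⟨huw, -⟩ ⟨hwv, -⟩ ⟨hvu, -⟩
    exact lt_irrefl _ (huw.trans (hwv.trans hvu))

theorem iSup_labelClass [LinearOrder V] (C : ∀ v, (G.induce (G.neighborSet v)).Coloring K) :
    ⨆ i, labelClass G C i = G := by
  refine le_antisymm (iSup_le (labelClass_le C)) fun u v huv ↦ iSup_adj.2 ?_
  rcases huv.ne.lt_or_gt with hlt | hgt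
  · exact ⟨C v ⟨u, huv.symm⟩, huv.ne, .inl ⟨hlt, huv.symm, rfl⟩⟩
  · exact ⟨C u ⟨v, huv⟩, huv.ne, .inr ⟨hgt, huv, rfl⟩⟩

end LabelClass

/-- Every triangle-free subgraph of `G` is `r`-colourable. Subgraphs may be taken to be spanning,
since isolated vertices create no triangles and need no new colours. -/
def TriangleFreeSubgraphsColorable {V : Type*} (G : SimpleGraph V) (r : ℕ) : Prop :=
  ∀ G' ≤ G, G'.CliqueFree 3 → G'.Colorable r

namespace TriangleFreeSubgraphsColorable

variable {V W : Type*} {G : SimpleGraph V} {H : SimpleGraph W} {r m : ℕ}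

theorem colorable_of_isContained (hG : TriangleFreeSubgraphsColorable G r) (hHG : H ⊑ G)
    (hH : H.CliqueFree 3) : H.Colorable r := by
  obtain ⟨f, hf⟩ := isContained_iff_exists_le_comap.1 hHG
  rcases isEmpty_or_nonempty W with _ | _
  · exact .of_isEmpty r
  · exact (hG (H.map f) ((map_le_iff_le_comap ..).2 hf) (cliqueFree_map_iff.2 hH)).of_hom
      (Embedding.map f H).toHom

theorem of_isContained (hG : TriangleFreeSubgraphsColorable G r) (hHG : H ⊑ G) :
    TriangleFreeSubgraphsColorable H r :=
  fun _ hle hfree ↦ hG.colorable_of_isContained (hHG.mono_left hle) hfree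

theorem cliqueFree_card [Fintype W] (hG : TriangleFreeSubgraphsColorable G r)
    (hfree : H.CliqueFree 3) (hcol : ¬ H.Colorable r) : G.CliqueFree (Fintype.card W) := by
  by_contra hclique
  have hHK : H ⊑ completeGraph (Fin (Fintype.card W)) :=
    isContained_top_iff.2 ⟨(Fintype.equivFin W).toEmbedding⟩
  exact hcol <| hG.colorable_of_isContained
    (hHK.trans ((not_cliqueFree_iff_top_isContained _).1 hclique)) hfree

theorem cliqueFree_two_pow_add_one_sq (hG : TriangleFreeSubgraphsColorable G r) :
    G.CliqueFree ((2 ^ r + 1) ^ 2) := by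
  have hcol : ¬ (shiftGraph (Fin (2 ^ r + 1))).Colorable r := fun hcol ↦ by
    simpa using card_le_two_pow_of_shiftGraph_colorable hcol
  refine (hG.cliqueFree_card (shiftGraph_cliqueFree_three _) hcol).mono ?_
  calc Fintype.card {p : Fin (2 ^ r + 1) × Fin (2 ^ r + 1) // p.1 < p.2}
    _ ≤ Fintype.card (Fin (2 ^ r + 1) × Fin (2 ^ r + 1)) := Fintype.card_subtype_le _
    _ = (2 ^ r + 1) ^ 2 := by rw [Fintype.card_prod, Fintype.card_fin, sq]

theorem colorable_pow_of_neighborSet {c : ℕ} (hG : TriangleFreeSubgraphsColorable G r)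
    (hN : ∀ v, (G.induce (G.neighborSet v)).Colorable c) : G.Colorable (r ^ c) := by
  obtain ⟨_, -⟩ := exists_wellFoundedLT V
  let C (v : V) : (G.induce (G.neighborSet v)).Coloring (Fin c) := (hN v).some
  have hclass (i : Fin c) : (labelClass G C i).Colorable r :=
    hG _ (labelClass_le C i) (labelClass_cliqueFree_three C i)
  simpa only [iSup_labelClass, Fintype.card_fin] using colorable_iSup hclass

theorem colorable_of_cliqueFree (hG : TriangleFreeSubgraphsColorable G r) (hfree : G.CliqueFree m) :
    G.Colorable ((r ^ ·)^[m] 0) := by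
  induction m generalizing V with
  | zero => exact (not_cliqueFree_zero hfree).elim
  | succ m ih =>
    rw [Function.iterate_succ_apply']
    exact hG.colorable_pow_of_neighborSet fun v ↦
      ih (hG.of_isContained (Copy.induce G _).isContained) (cliqueFree_induce_neighborSet hfree v)

end TriangleFreeSubgraphsColorable

end Rodl

open Rodl in
theorem rodl_triangle_free_subgraph_general (r : ℕ) :
    ∃ k : ℕ, ∀ (V : Type u) (G : SimpleGraph V),
      (k : ℕ∞) < G.chromaticNumber →
      ∃ G' : SimpleGraph V, G' ≤ G ∧ G'.CliqueFree 3 ∧ (r : ℕ∞) < G'.chromaticNumber := by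
  refine ⟨(r ^ ·)^[(2 ^ r + 1) ^ 2] 0, fun V G hG ↦ ?_⟩
  simp only [natCast_lt_chromaticNumber_iff] at hG ⊢
  by_contra! hcol
  have hG' : TriangleFreeSubgraphsColorable G r := hcol
  exact hG (hG'.colorable_of_cliqueFree hG'.cliqueFree_two_pow_add_one_sq)

/-- **Rödl's theorem.** For every `r ≥ 2` there is a `k` such that every finite graph with
chromatic number greater than `k` has a triangle-free (spanning) subgraph with chromatic
number greater than `r`. -/
theorem rodl_triangle_free_subgraph (r : ℕ) (hr : 2 ≤ r) :
    ∃ k : ℕ, ∀ (V : Type) [Fintype V] (G : SimpleGraph V),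
      (k : ℕ∞) < G.chromaticNumber →
      ∃ G' : SimpleGraph V, G' ≤ G ∧ G'.CliqueFree 3 ∧ (r : ℕ∞) < G'.chromaticNumber := by
  obtain ⟨k, hk⟩ := rodl_triangle_free_subgraph_general r
  exact ⟨k, fun V _ G ↦ hk V G⟩
end

section
/- For every natural number r there exists a finite simple graph G such that: G contains no clique on 4 vertices, the chromatic number of G is greater than r, and every induced subgraph of G that is triangle-free has chromatic number at most 4. -/
/-!
Let `D` be a finite acyclic digraph of large chromatic number in which all directed paths between
two given vertices have the same length, and join `u` and `v` in `G` when a directed path from one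
to the other has length not divisible by `3`.

* `G` contains `D`, so its chromatic number is large.
* The vertices of a clique are pairwise comparable. Path lengths modulo `3` from the first one
  are pairwise distinct, so there are at most three vertices.
* In a triangle-free induced subgraph, the edges of residue `1` contain no directed path
  `u → v → w`: lengths add up, so `u` and `w` would be joined with residue `2`, a triangle.
  The same holds for the edges of residue `2`. Hence each of the two classes is bipartite
  (a vertex either has an out-edge of the class or not), and the product colouring uses `4` colours.

The digraph `D` comes from Zykov's construction with all new arcs leaving the new vertices: take
`n` copies of the previous digraph and, for every choice of one vertex in each copy, a new vertex
with an arc to each chosen vertex. If the previous digraph has chromatic number at least `n`, an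
`n`-colouring uses colour `i` in copy `i`, for every `i`, and the new vertex attached to such
vertices cannot be coloured.
-/

universe u v w

/-- The path weights of an acyclic digraph on `V` whose arcs are labelled in `M` so that all paths
between two given vertices have the same total weight. The digraph itself is not recorded:
`HasWeight u v a` stands for "there is a directed path of positive length from `u` to `v`, and its
total weight is `a`". Path lengths modulo `3` are the case `M = ZMod 3` with all labels `1`. -/
structure PathWeighting (V : Type u) (M : Type v) [Add M] where
  HasWeight : V → V → M → Prop
  trans : ∀ {x y z a b}, HasWeight x y a → HasWeight y z b → HasWeight x z (a + b)
  unique : ∀ {x y a b}, HasWeight x y a → HasWeight x y b → a = b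
  irrefl : ∀ {x a}, ¬ HasWeight x x a

namespace PathWeighting

variable {V : Type u} {M : Type v}

section AddMonoid

variable [AddMonoid M] (D : PathWeighting V M)

/-- The graph joining two vertices when a directed path of nonzero weight runs between them, in
either direction. -/
def graph : SimpleGraph V where
  Adj x y := ∃ a, a ≠ 0 ∧ (D.HasWeight x y a ∨ D.HasWeight y x a)
  symm := ⟨fun _ _ ⟨a, ha, h⟩ => ⟨a, ha, h.symm⟩⟩
  loopless := ⟨fun _ ⟨_, _, h⟩ => h.elim D.irrefl D.irrefl⟩

variable {D}

lemma HasWeight.graph_adj {x y : V} {a : M} (h : D.HasWeight x y a) (ha : a ≠ 0) :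
    D.graph.Adj x y :=
  ⟨a, ha, Or.inl h⟩

lemma not_hasWeight_hasWeight_of_cliqueFree {s : Set V} (hs : (D.graph.induce s).CliqueFree 3)
    {a : M} (ha : a ≠ 0) (haa : a + a ≠ 0) {x y z : s} (hxy : D.HasWeight x y a) :
    ¬ D.HasWeight y z a := by
  classical
  intro hyz
  exact hs {x, y, z} (SimpleGraph.is3Clique_triple_iff.2
    ⟨hxy.graph_adj ha, (D.trans hxy hyz).graph_adj haa, hyz.graph_adj ha⟩)

lemma induce_graph_colorable_of_cliqueFree [Fintype M] (hM : ∀ a : M, a ≠ 0 → a + a ≠ 0)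
    {s : Set V} (hs : (D.graph.induce s).CliqueFree 3) :
    (D.graph.induce s).Colorable (2 ^ (Fintype.card M - 1)) := by
  classical
  let outWeights (x : s) : Set {a : M // a ≠ 0} := {a | ∃ y : s, D.HasWeight x y a}
  have outWeights_ne {x y : s} {a : M} (ha : a ≠ 0) (h : D.HasWeight x y a) :
      outWeights x ≠ outWeights y := by
    intro heq
    have hx : ⟨a, ha⟩ ∈ outWeights x := ⟨y, h⟩
    obtain ⟨z, hz⟩ : ⟨a, ha⟩ ∈ outWeights y := heq ▸ hx
    exact not_hasWeight_hasWeight_of_cliqueFree hs ha (hM a ha) h hz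
  let C : (D.graph.induce s).Coloring (Set {a : M // a ≠ 0}) := .mk outWeights <| by
    rintro x y ⟨a, ha, h | h⟩
    · exact outWeights_ne ha h
    · exact (outWeights_ne ha h).symm
  simpa using C.colorable

variable (D)

lemma exists_forall_not_hasWeight {s : Set V} (hs : s.Finite) (hne : s.Nonempty) :
    ∃ m ∈ s, ∀ x ∈ s, ∀ a, ¬ D.HasWeight x m a := by
  let precedes (x y : V) : Prop := ∃ a, D.HasWeight x y a
  have : IsStrictOrder V precedes :=
    { irrefl := fun _ ⟨_, h⟩ => D.irrefl h
      trans := fun _ _ _ ⟨a, hxy⟩ ⟨b, hyz⟩ => ⟨a + b, D.trans hxy hyz⟩ }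
  have : Nonempty s := hne.to_subtype
  obtain ⟨m, -, hm⟩ :=
    (hs.wellFoundedOn (r := precedes)).has_min Set.univ Set.univ_nonempty
  exact ⟨m, m.2, fun x hx a h => hm ⟨x, hx⟩ trivial ⟨a, h⟩⟩

lemma exists_weight_from (m : V) :
    ∃ p : V → M, p m = 0 ∧ ∀ x a, D.HasWeight m x a → p x = a := by
  classical
  refine ⟨fun x => if h : ∃ a, D.HasWeight m x a then h.choose else 0,
    dif_neg fun ⟨_, h⟩ => D.irrefl h, fun x a h => ?_⟩
  have hx : ∃ a, D.HasWeight m x a := ⟨a, h⟩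
  exact (dif_pos hx).trans (D.unique hx.choose_spec h)

variable {D}

lemma exists_potential_of_isClique {s : Set V} (hfin : s.Finite) (hs : D.graph.IsClique s) :
    ∃ p : V → M, ∀ x ∈ s, ∀ y ∈ s, ∀ a, D.HasWeight x y a → p y = p x + a := by
  obtain rfl | hne := s.eq_empty_or_nonempty
  · exact ⟨0, by simp⟩
  obtain ⟨m, hm, hfirst⟩ := D.exists_forall_not_hasWeight hfin hne
  obtain ⟨p, hpm, hp⟩ := D.exists_weight_from m
  refine ⟨p, fun x hx y _ a hxy => ?_⟩
  obtain rfl | hmx := eq_or_ne m x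
  · rw [hpm, zero_add, hp y a hxy]
  obtain ⟨b, -, hb | hb⟩ := hs hm hx hmx
  · rw [hp x b hb, hp y (b + a) (D.trans hb hxy)]
  · exact (hfirst x hx b hb).elim

end AddMonoid

lemma graph_cliqueFree [AddGroup M] [Fintype M] (D : PathWeighting V M) :
    D.graph.CliqueFree (Fintype.card M + 1) := by
  intro s hs
  obtain ⟨p, hp⟩ := exists_potential_of_isClique s.finite_toSet hs.isClique
  have p_injOn : Set.InjOn p s := by
    intro x hx y hy hxy
    by_contra hne
    obtain ⟨a, ha, h | h⟩ := hs.isClique hx hy hne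
    · exact ha (by simpa [hxy] using hp x hx y hy a h)
    · exact ha (by simpa [hxy] using hp y hy x hx a h)
  have hcard : s.card ≤ Fintype.card M :=
    Finset.card_le_card_of_injOn p (fun _ _ => Finset.mem_univ _) p_injOn
  exact absurd hs.card_eq (by lia)

section Zykov

variable [AddMonoid M]

/-- The path weights of the oriented Zykov construction. The vertex `inl (i, x)` is the vertex `x`
of the `i`-th copy of `D`, and `inr f` is a new vertex with an arc of weight `g` to the vertex
`f i` of copy `i`, for each `i`. -/
inductive ZykovWeight (D : PathWeighting V M) {ι : Type w} (g : M) :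
    (ι × V) ⊕ (ι → V) → (ι × V) ⊕ (ι → V) → M → Prop
  | copy {i x y a} (h : D.HasWeight x y a) : ZykovWeight D g (.inl (i, x)) (.inl (i, y)) a
  | arc (f i) : ZykovWeight D g (.inr f) (.inl (i, f i)) g
  | arc_trans {f i y a} (h : D.HasWeight (f i) y a) :
      ZykovWeight D g (.inr f) (.inl (i, y)) (g + a)

/-- The oriented Zykov construction: `ι` copies of `D` and, for every choice of one vertex in each
copy, a new vertex with arcs of weight `g` to the chosen vertices. -/
def zykov (D : PathWeighting V M) (ι : Type w) (g : M) :
    PathWeighting ((ι × V) ⊕ (ι → V)) M where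
  HasWeight := D.ZykovWeight g
  trans := by
    rintro _ _ _ _ _ (hxy | _ | hxy) (hyz | _ | _)
    · exact .copy (D.trans hxy hyz)
    · exact .arc_trans hyz
    · exact add_assoc g _ _ ▸ .arc_trans (D.trans hxy hyz)
  unique := by
    rintro _ _ _ _ (h | _ | h) (h' | _ | h')
    · exact D.unique h h'
    · rfl
    · exact (D.irrefl h').elim
    · exact (D.irrefl h).elim
    · rw [D.unique h h']
  irrefl := by
    rintro _ _ ⟨h⟩
    exact D.irrefl h

variable (D : PathWeighting V M)

/-- The inclusion of the `i`-th copy of `D` into its Zykov construction. -/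
def zykovCopyHom {ι : Type w} (g : M) (i : ι) : D.graph →g (D.zykov ι g).graph where
  toFun x := .inl (i, x)
  map_rel' := fun ⟨a, ha, h⟩ => ⟨a, ha, h.imp .copy .copy⟩

lemma card_lt_chromaticNumber_zykov {ι : Type w} [Fintype ι] {g : M} (hg : g ≠ 0)
    (hD : Fintype.card ι ≤ D.graph.chromaticNumber) :
    Fintype.card ι < (D.zykov ι g).graph.chromaticNumber := by
  by_contra! hle
  let C : (D.zykov ι g).graph.Coloring ι :=
    (SimpleGraph.chromaticNumber_le_iff_colorable.1 hle).toColoring le_rfl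
  have colour_in_copy (i : ι) : ∃ x, C (.inl (i, x)) = i :=
    SimpleGraph.card_le_chromaticNumber_iff_forall_surjective.1 hD
      (C.comp (D.zykovCopyHom g i)) i
  choose f hf using colour_in_copy
  have hadj : (D.zykov ι g).graph.Adj (.inr f) (.inl (C (.inr f), f (C (.inr f)))) :=
    HasWeight.graph_adj (.arc f _) hg
  exact C.valid hadj (hf _).symm

lemma exists_lt_chromaticNumber {g : M} (hg : g ≠ 0) (n : ℕ) :
    ∃ (V : Type u) (_ : Finite V) (D : PathWeighting V M), n < D.graph.chromaticNumber := by
  induction n with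
  | zero =>
    let D : PathWeighting PUnit.{u + 1} M :=
      { HasWeight := fun _ _ _ => False, trans := False.elim, unique := False.elim, irrefl := id }
    exact ⟨PUnit, inferInstance, D, by simp [pos_iff_ne_zero]⟩
  | succ n ih =>
    obtain ⟨V, _, D, hD⟩ := ih
    have hcard : Fintype.card (Fin (n + 1)) ≤ D.graph.chromaticNumber := by
      simpa using Order.add_one_le_of_lt hD
    exact ⟨_, inferInstance, D.zykov (Fin (n + 1)) g,
      by simpa using D.card_lt_chromaticNumber_zykov hg hcard⟩

end Zykov

end PathWeighting

/-- **Carbonero–Hompe–Moore–Spirkl.** There are `K₄`-free graphs of arbitrarily large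
chromatic number all of whose triangle-free induced subgraphs are `4`-colourable. -/
theorem carbonero_hompe_moore_spirkl (r : ℕ) :
    ∃ (V : Type) (_ : Fintype V) (G : SimpleGraph V),
      G.CliqueFree 4 ∧
      (r : ℕ∞) < G.chromaticNumber ∧
      ∀ s : Set V, (G.induce s).CliqueFree 3 → (G.induce s).chromaticNumber ≤ 4 := by
  obtain ⟨V, _, D, hD⟩ :=
    PathWeighting.exists_lt_chromaticNumber (one_ne_zero : (1 : ZMod 3) ≠ 0) r
  have add_self_ne_zero : ∀ a : ZMod 3, a ≠ 0 → a + a ≠ 0 := by decide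
  refine ⟨V, Fintype.ofFinite V, D.graph, by simpa using D.graph_cliqueFree, hD, fun s hs => ?_⟩
  have hcol := PathWeighting.induce_graph_colorable_of_cliqueFree add_self_ne_zero hs
  simpa using hcol.chromaticNumber_le
end

section
/- For every natural number r there exists a finite 3-uniform hypergraph H whose chromatic number is at least r and such that every linear subhypergraph of H is 2-colourable; that is, for every subset E' of the edges of H in which any two distinct edges share at most one vertex, the hypergraph (V(H), E') admits a proper colouring with 2 colours. -/
/-!
Induct on the number `c` of colours to be defeated. Given `H` with no proper `c`-colouring, take a
large set `A` of new vertices, a copy `H_S` of `H` for each pair `S ⊆ A`, and add every edge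
`S ∪ {v}` with `v` a vertex of `H_S`.

A colouring with `c + 1` colours is constant on some pair `S`, say with value `k`. Either a vertex
of `H_S` has colour `k` and completes `S` to a monochromatic edge, or `H_S` is coloured with the
remaining `c` colours and contains a monochromatic edge.

In a linear subhypergraph at most one vertex of `H_S` is joined to `S`. Colour `A` with `0` and each
`H_S` by a proper `2`-colouring of what is left of it, with the colours interchanged if necessary so
that this one vertex gets colour `1`.

Taking `S` of size `t + 1` instead of `2` gives `(t + 2)`-uniform hypergraphs, with linearity
relaxed to pairwise intersections of size at most `t`.
-/

open Finset Function

namespace ErdosGalvinHajnal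

section Colouring

variable {V W α : Type*} {E : Finset (Finset V)}

/-- A proper colouring of the hypergraph with edge set `E`: no edge is monochromatic. -/
def IsProperColouring (E : Finset (Finset V)) (f : V → α) : Prop :=
  ∀ e ∈ E, ∃ x ∈ e, ∃ y ∈ e, f x ≠ f y

/-- The hypergraph with edge set `E` has chromatic number at most `c`. -/
def Colourable (c : ℕ) (E : Finset (Finset V)) : Prop :=
  ∃ f : V → Fin c, IsProperColouring E f

/-- Distinct edges share at most `t` vertices, so that any `t + 1` vertices lie in at most one edge.
For `t = 1` these are the linear hypergraphs. -/
def IsPartialSteiner [DecidableEq V] (t : ℕ) (E : Finset (Finset V)) : Prop :=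
  ∀ e ∈ E, ∀ e' ∈ E, e ≠ e' → (e ∩ e').card ≤ t

/-- Every subhypergraph whose distinct edges share at most `t` vertices is `2`-colourable. -/
def SteinerTwoColourable [DecidableEq V] (t : ℕ) (E : Finset (Finset V)) : Prop :=
  ∀ E' ⊆ E, IsPartialSteiner t E' → Colourable 2 E'

lemma Colourable.mono {c d : ℕ} (hcd : c ≤ d) (hE : Colourable c E) : Colourable d E := by
  obtain ⟨f, hf⟩ := hE
  refine ⟨fun v => Fin.castLE hcd (f v), fun e he => ?_⟩
  obtain ⟨x, hx, y, hy, hxy⟩ := hf e he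
  exact ⟨x, hx, y, hy, (Fin.castLE_injective hcd).ne hxy⟩

lemma exists_monochromatic_of_not_isProperColouring [Nonempty α] {f : V → α}
    (hf : ¬ IsProperColouring E f) : ∃ e ∈ E, ∃ k, ∀ x ∈ e, f x = k := by
  simp only [IsProperColouring] at hf
  push Not at hf
  obtain ⟨e, he, hmono⟩ := hf
  obtain rfl | ⟨y, hy⟩ := e.eq_empty_or_nonempty
  · exact ⟨∅, he, Classical.arbitrary α, by simp⟩
  · exact ⟨e, he, f y, fun x hx => hmono x hx y hy⟩

lemma IsProperColouring.exists_apply_eq [AddGroup α] {f : V → α} (hf : IsProperColouring E f)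
    (v : V) (k : α) : ∃ g : V → α, IsProperColouring E g ∧ g v = k := by
  refine ⟨fun w => f w + (-f v + k), fun e he => ?_, add_neg_cancel_left _ _⟩
  obtain ⟨x, hx, y, hy, hxy⟩ := hf e he
  exact ⟨x, hx, y, hy, fun h => hxy (add_right_cancel h)⟩

lemma IsPartialSteiner.filter_map_mem [DecidableEq V] [DecidableEq W] {t : ℕ}
    {F : Finset (Finset W)} (hF : IsPartialSteiner t F) (φ : V ↪ W) (E : Finset (Finset V)) :
    IsPartialSteiner t {e ∈ E | e.map φ ∈ F} := by
  intro e he e' he' hne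
  rw [← card_map φ, map_inter]
  exact hF _ (mem_filter.1 he).2 _ (mem_filter.1 he').2 ((map_injective φ).ne hne)

lemma not_colourable_powersetCard_univ [Fintype V] {c t : ℕ} (hV : c * t < Fintype.card V) :
    ¬ Colourable c (powersetCard (t + 1) (univ : Finset V)) := by
  rintro ⟨f, hf⟩
  obtain ⟨k, hk⟩ := Fintype.exists_lt_card_fiber_of_mul_lt_card f (by simpa using hV)
  obtain ⟨e, hek, hcard⟩ := exists_subset_card_eq (Nat.succ_le_of_lt hk)
  obtain ⟨x, hx, y, hy, hxy⟩ := hf e (mem_powersetCard_univ.2 hcard)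
  exact hxy ((mem_filter.1 (hek hx)).2.trans (mem_filter.1 (hek hy)).2.symm)

end Colouring

section Extension

variable {A V : Type*}

/-- The inclusion of `V` into the vertices of the extension as the copy indexed by `S`. The new
vertices are the elements of `A`, and every set `S` of them has its own copy of `V`. -/
def copyEmb (S : Finset A) : V ↪ A ⊕ Finset A × V :=
  (Embedding.sectR S V).trans .inr

/-- The edge `S ∪ {v}`, where `v` is taken in the copy of `V` indexed by `S`. -/
def joinEdge (S : Finset A) (v : V) : Finset (A ⊕ Finset A × V) :=
  S.disjSum {(S, v)}

lemma inl_mem_joinEdge {S : Finset A} {v : V} {a : A} : Sum.inl a ∈ joinEdge S v ↔ a ∈ S :=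
  inl_mem_disjSum

lemma inr_mem_joinEdge {S T : Finset A} {v w : V} :
    Sum.inr (T, w) ∈ joinEdge S v ↔ T = S ∧ w = v := by
  simp [joinEdge]

lemma joinEdge_injective (S : Finset A) : Injective (joinEdge S : V → _) := fun _ _ h =>
  (inr_mem_joinEdge.1 (h ▸ inr_mem_joinEdge.2 ⟨rfl, rfl⟩)).2

lemma card_joinEdge (S : Finset A) (v : V) : (joinEdge S v).card = S.card + 1 := by
  simp [joinEdge]

variable [DecidableEq A] [DecidableEq V]

lemma card_le_card_joinEdge_inter (S : Finset A) (v w : V) :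
    S.card ≤ (joinEdge S v ∩ joinEdge S w).card := by
  rw [← card_map Embedding.inl]
  refine card_le_card fun x hx => ?_
  obtain ⟨a, ha, rfl⟩ := mem_map.1 hx
  exact mem_inter.2 ⟨inl_mem_joinEdge.2 ha, inl_mem_joinEdge.2 ha⟩

lemma IsPartialSteiner.eq_of_joinEdge_mem {t : ℕ} {F : Finset (Finset (A ⊕ Finset A × V))}
    (hF : IsPartialSteiner t F) {S : Finset A} (hS : t < S.card) {v w : V}
    (hv : joinEdge S v ∈ F) (hw : joinEdge S w ∈ F) : v = w := by
  by_contra hvw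
  have hinter := hF _ hv _ hw ((joinEdge_injective S).ne hvw)
  exact (hS.trans_le (card_le_card_joinEdge_inter S v w)).not_ge hinter

lemma IsPartialSteiner.exists_colouring_eq_one_of_joinEdge_mem {t : ℕ}
    {F : Finset (Finset (A ⊕ Finset A × V))} (hF : IsPartialSteiner t F) {E : Finset (Finset V)}
    (hE : SteinerTwoColourable t E) {S : Finset A} (hS : t < S.card) :
    ∃ g : V → Fin 2, IsProperColouring {d ∈ E | d.map (copyEmb S) ∈ F} g ∧
      ∀ v, joinEdge S v ∈ F → g v = 1 := by
  obtain ⟨g, hg⟩ := hE _ (filter_subset _ _) (hF.filter_map_mem (copyEmb S) E)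
  by_cases hjoin : ∃ v, joinEdge S v ∈ F
  · obtain ⟨v, hv⟩ := hjoin
    obtain ⟨g', hg', hg'v⟩ := hg.exists_apply_eq v 1
    exact ⟨g', hg', fun w hw => hF.eq_of_joinEdge_mem hS hv hw ▸ hg'v⟩
  · exact ⟨g, hg, fun v hv => (hjoin ⟨v, hv⟩).elim⟩

variable [Fintype V] {𝒮 : Finset (Finset A)} {E : Finset (Finset V)}

/-- The edges of the extension of `E` along a family `𝒮` of sets of new vertices: for each `S ∈ 𝒮`,
a copy of `E` together with all edges joining `S` to a vertex of that copy. -/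
def extend (𝒮 : Finset (Finset A)) (E : Finset (Finset V)) :
    Finset (Finset (A ⊕ Finset A × V)) :=
  𝒮.biUnion fun S => E.image (map (copyEmb S)) ∪ univ.image (joinEdge S)

lemma mem_extend {e : Finset (A ⊕ Finset A × V)} :
    e ∈ extend 𝒮 E ↔
      ∃ S ∈ 𝒮, (∃ d ∈ E, d.map (copyEmb S) = e) ∨ ∃ v, joinEdge S v = e := by
  simp [extend]

lemma card_eq_of_mem_extend {k : ℕ} (h𝒮 : ∀ S ∈ 𝒮, S.card = k) (hE : ∀ d ∈ E, d.card = k + 1) :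
    ∀ e ∈ extend 𝒮 E, e.card = k + 1 := by
  intro e he
  obtain ⟨S, hS, ⟨d, hd, rfl⟩ | ⟨v, rfl⟩⟩ := mem_extend.1 he
  · rw [card_map, hE d hd]
  · rw [card_joinEdge, h𝒮 S hS]

lemma not_colourable_extend {c : ℕ} (h𝒮 : ¬ Colourable (c + 1) 𝒮) (hE : ¬ Colourable c E) :
    ¬ Colourable (c + 1) (extend 𝒮 E) := by
  rintro ⟨f, hf⟩
  obtain ⟨S, hS, k, hSk⟩ :=
    exists_monochromatic_of_not_isProperColouring fun h => h𝒮 ⟨f ∘ Sum.inl, h⟩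
  have hcopy_ne : ∀ v, f (copyEmb S v) ≠ k := by
    intro v hv
    have hmono : ∀ x ∈ joinEdge S v, f x = k := by
      rintro (a | ⟨T, w⟩) hx
      · exact hSk a (inl_mem_joinEdge.1 hx)
      · obtain ⟨rfl, rfl⟩ := inr_mem_joinEdge.1 hx
        exact hv
    obtain ⟨x, hx, y, hy, hxy⟩ := hf _ (mem_extend.2 ⟨S, hS, .inr ⟨v, rfl⟩⟩)
    exact hxy ((hmono x hx).trans (hmono y hy).symm)
  choose g hg using fun v => Fin.exists_succAbove_eq (hcopy_ne v)
  refine hE ⟨g, fun d hd => ?_⟩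
  obtain ⟨x, hx, y, hy, hxy⟩ := hf _ (mem_extend.2 ⟨S, hS, .inl ⟨d, hd, rfl⟩⟩)
  obtain ⟨v, hv, rfl⟩ := mem_map.1 hx
  obtain ⟨w, hw, rfl⟩ := mem_map.1 hy
  exact ⟨v, hv, w, hw, fun h => hxy (by rw [← hg v, ← hg w, h])⟩

lemma SteinerTwoColourable.extend {t : ℕ} (h𝒮 : ∀ S ∈ 𝒮, t < S.card)
    (hE : SteinerTwoColourable t E) : SteinerTwoColourable t (extend 𝒮 E) := by
  intro F hFsub hF
  choose! g hgcopy hgjoin using fun S hS =>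
    hF.exists_colouring_eq_one_of_joinEdge_mem hE (h𝒮 S hS)
  refine ⟨Sum.elim (fun _ => 0) fun p => g p.1 p.2, fun e he => ?_⟩
  obtain ⟨S, hS, ⟨d, hd, rfl⟩ | ⟨v, rfl⟩⟩ := mem_extend.1 (hFsub he)
  · obtain ⟨x, hx, y, hy, hxy⟩ := hgcopy S hS d (mem_filter.2 ⟨hd, he⟩)
    exact ⟨_, mem_map_of_mem _ hx, _, mem_map_of_mem _ hy, hxy⟩
  · obtain ⟨a, ha⟩ := card_pos.1 (Nat.zero_lt_of_lt (h𝒮 S hS))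
    refine ⟨_, inl_mem_joinEdge.2 ha, _, inr_mem_joinEdge.2 ⟨rfl, rfl⟩, ?_⟩
    simp [hgjoin S hS v he]

end Extension

lemma exists_not_colourable_steinerTwoColourable (t c : ℕ) :
    ∃ (V : Type) (_ : Fintype V) (_ : DecidableEq V) (E : Finset (Finset V)),
      (∀ e ∈ E, e.card = t + 2) ∧ ¬ Colourable c E ∧ SteinerTwoColourable t E := by
  induction c with
  | zero =>
    refine ⟨Unit, inferInstance, inferInstance, ∅, by simp, fun ⟨f, _⟩ => (f ()).elim0, ?_⟩
    intro E' hE' _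
    exact ⟨fun _ => 0, fun e he => absurd (hE' he) (notMem_empty e)⟩
  | succ c ih =>
    obtain ⟨V, _, _, E, hcard, hcol, hsteiner⟩ := ih
    let A := Fin ((c + 1) * t + 1)
    have hsize : ∀ S ∈ powersetCard (t + 1) (univ : Finset A), S.card = t + 1 :=
      fun _ => mem_powersetCard_univ.1
    exact ⟨_, inferInstance, inferInstance, extend (powersetCard (t + 1) (univ : Finset A)) E,
      card_eq_of_mem_extend hsize hcard,
      not_colourable_extend (not_colourable_powersetCard_univ (by simp [A])) hcol,
      hsteiner.extend fun S hS => (hsize S hS).ge⟩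

end ErdosGalvinHajnal

open ErdosGalvinHajnal in
theorem erdos_galvin_hajnal_general (t r : ℕ) :
    ∃ (V : Type) (_ : Fintype V) (_ : DecidableEq V) (E : Finset (Finset V)),
      (∀ e ∈ E, e.card = t + 2) ∧
      (∀ c : ℕ, c < r → ∀ f : V → Fin c, ∃ e ∈ E, ∀ x ∈ e, ∀ y ∈ e, f x = f y) ∧
      (∀ E' ⊆ E, (∀ e ∈ E', ∀ e' ∈ E', e ≠ e' → (e ∩ e').card ≤ t) →
        ∃ f : V → Fin 2, ∀ e ∈ E', ∃ x ∈ e, ∃ y ∈ e, f x ≠ f y) := by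
  obtain ⟨V, _, _, E, hcard, hcol, hsteiner⟩ := exists_not_colourable_steinerTwoColourable t r
  refine ⟨V, inferInstance, inferInstance, E, hcard, fun c hc f => ?_, hsteiner⟩
  by_contra! hproper
  exact hcol (Colourable.mono hc.le ⟨f, hproper⟩)

/-- **Erdős–Galvin–Hajnal.** For every `r` there is a finite `3`-uniform hypergraph with
chromatic number at least `r` (no proper colouring with fewer than `r` colours) all of
whose linear subhypergraphs are `2`-colourable. -/
theorem erdos_galvin_hajnal (r : ℕ) :
    ∃ (V : Type) (_ : Fintype V) (_ : DecidableEq V) (E : Finset (Finset V)),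
      (∀ e ∈ E, e.card = 3) ∧
      (∀ c : ℕ, c < r → ∀ f : V → Fin c, ∃ e ∈ E, ∀ x ∈ e, ∀ y ∈ e, f x = f y) ∧
      (∀ E' ⊆ E, (∀ e ∈ E', ∀ e' ∈ E', e ≠ e' → (e ∩ e').card ≤ 1) →
        ∃ f : V → Fin 2, ∀ e ∈ E', ∃ x ∈ e, ∃ y ∈ e, f x ≠ f y) :=
  erdos_galvin_hajnal_general 1 r
end

section
/- For every infinite cardinal κ there exists a triangle-free simple graph G on a vertex set of cardinality κ whose chromatic number is κ; that is, G admits no proper vertex colouring with fewer than κ colours (for every type of colours of cardinality less than κ there is no colouring of V(G) in which adjacent vertices always receive distinct colours). -/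
universe u

/-!
Specker's graph has the triples over the well-order `κ.ord` as vertices, and `x`, `y` are joined
when their entries interleave as `x₀ < x₁ < y₀ < x₂ < y₁ < y₂`, or the same with `x` and `y`
exchanged.

In a triangle, name the vertices `x`, `y`, `z` by increasing first entry. The edges `xy` and `yz`
give `x₂ < y₁ < z₀`, whereas the edge `xz` asks for `z₀ < x₂`.

Given a colouring with `μ < κ` colours, pick a regular `ν` with `μ < ν ≤ κ` and restrict attention
to triples from the initial segment `ν.ord`. As `μ` is below the cofinality, the pigeonhole
principle, applied to the third, second and first entry in turn, yields a colour `i` such that for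
cofinally many `a`, for cofinally many `b`, for cofinally many `c`, the triple `(a, b, c)` has
colour `i`. The entries of two adjacent triples of colour `i` can then be chosen one after the
other, in the order `x₀, x₁, y₀, x₂, y₁, y₂`.
-/

open Cardinal Filter

theorem fromRel_cliqueFree_three {V α : Type*} [Preorder α] {r : V → V → Prop} {g : V → α}
    (hg : ∀ {x y}, r x y → g x < g y) (hr : ∀ {x y z}, r x y → r y z → ¬ r x z) :
    (SimpleGraph.fromRel r).CliqueFree 3 := by
  classical
  intro s hs
  obtain ⟨x, y, z, ⟨-, hxy⟩, ⟨-, hxz⟩, ⟨-, hyz⟩, -⟩ := SimpleGraph.is3Clique_iff.mp hs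
  rcases hxy with hxy | hyx <;> rcases hyz with hyz | hzy <;> rcases hxz with hxz | hzx
  · exact hr hxy hyz hxz
  · exact lt_irrefl _ (((hg hxy).trans (hg hyz)).trans (hg hzx))
  · exact hr hxz hzy hxy
  · exact hr hzx hxy hzy
  · exact hr hyx hxz hyz
  · exact hr hyz hzx hyx
  · exact lt_irrefl _ (((hg hxz).trans (hg hzy)).trans (hg hyx))
  · exact hr hzy hyx hzx

section Cofinality

variable {J C : Type u} [LinearOrder J]

theorem exists_frequently_atTop_eq (hC : #C < Order.cof J) (g : J → C) :
    ∃ i, ∃ᶠ a in atTop, g a = i := by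
  have : Nonempty J := Order.cof_ne_zero_iff.mp hC.ne_bot
  have fibres_cover : ⋃ i, g ⁻¹' {i} = Set.univ := by ext; simp
  obtain ⟨i, fibre_cofinal⟩ :=
    isCofinal_of_isCofinal_iUnion (fibres_cover ▸ IsCofinal.univ) hC
  refine ⟨i, frequently_atTop.mpr fun a => ?_⟩
  obtain ⟨b, hb, hab⟩ := fibre_cofinal a
  exact ⟨b, hab, hb⟩

theorem exists_frequently_atTop_eq₃ (hC : #C < Order.cof J) (f : J × J × J → C) :
    ∃ i, ∃ᶠ a in atTop, ∃ᶠ b in atTop, ∃ᶠ c in atTop, f (a, b, c) = i := by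
  choose g hg using fun a b => exists_frequently_atTop_eq hC fun c => f (a, b, c)
  choose k hk using fun a => exists_frequently_atTop_eq hC (g a)
  obtain ⟨i, hi⟩ := exists_frequently_atTop_eq hC k
  refine ⟨i, hi.mono fun a ha => (hk a).mono fun b hb => (hg a b).mono fun c hc => ?_⟩
  rw [hc, hb, ha]

theorem noMaxOrder_of_one_lt_cof (hJ : 1 < Order.cof J) : NoMaxOrder J := by
  have : Nonempty J := Order.cof_ne_zero_iff.mp hJ.ne_bot
  exact (noTopOrder_iff_noMaxOrder J).mp (Order.one_lt_cof_iff.mp hJ)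

end Cofinality

/-- The oriented adjacency of Specker's graph: the entries of the triples `x` and `y` interleave as
`x₀ < x₁ < y₀ < x₂ < y₁ < y₂`. -/
def SpeckerRel {I : Type*} [LT I] (x y : I × I × I) : Prop :=
  x.1 < x.2.1 ∧ x.2.1 < y.1 ∧ y.1 < x.2.2 ∧ x.2.2 < y.2.1 ∧ y.2.1 < y.2.2

namespace SpeckerRel

variable {I J : Type*} [Preorder I] [Preorder J] {x y z : I × I × I}

theorem fst_lt_fst : SpeckerRel x y → x.1 < y.1 :=
  fun ⟨hx₀₁, hx₁y₀, _⟩ => hx₀₁.trans hx₁y₀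

theorem not_trans : SpeckerRel x y → SpeckerRel y z → ¬ SpeckerRel x z :=
  fun ⟨_, _, _, hx₂y₁, _⟩ ⟨_, hy₁z₀, _⟩ ⟨_, _, hz₀x₂, _⟩ =>
    lt_asymm (hx₂y₁.trans hy₁z₀) hz₀x₂

theorem map {e : I → J} (he : StrictMono e) :
    SpeckerRel x y → SpeckerRel (Prod.map e (Prod.map e e) x) (Prod.map e (Prod.map e e) y) :=
  fun ⟨h₁, h₂, h₃, h₄, h₅⟩ => ⟨he h₁, he h₂, he h₃, he h₄, he h₅⟩

end SpeckerRel

theorem exists_speckerRel_eq {J C : Type u} [LinearOrder J] (hC : #C < Order.cof J)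
    (f : J × J × J → C) : ∃ x y, SpeckerRel x y ∧ f x = f y := by
  obtain ⟨i, hi⟩ := exists_frequently_atTop_eq₃ hC f
  have : Nonempty J := Order.cof_ne_zero_iff.mp hC.ne_bot
  have : Nonempty C := ⟨i⟩
  have : NoMaxOrder J :=
    noMaxOrder_of_one_lt_cof ((Cardinal.one_le_iff_ne_zero.mpr (mk_ne_zero C)).trans_lt hC)
  simp only [frequently_atTop'] at hi
  obtain ⟨x₀, -, hx₀⟩ := hi (Classical.arbitrary J)
  obtain ⟨x₁, hx₀₁, hx₁⟩ := hx₀ x₀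
  obtain ⟨y₀, hx₁y₀, hy₀⟩ := hi x₁
  obtain ⟨x₂, hy₀x₂, hx⟩ := hx₁ y₀
  obtain ⟨y₁, hx₂y₁, hy₁⟩ := hy₀ x₂
  obtain ⟨y₂, hy₁₂, hy⟩ := hy₁ y₁
  exact ⟨(x₀, x₁, x₂), (y₀, y₁, y₂), ⟨hx₀₁, hx₁y₀, hy₀x₂, hx₂y₁, hy₁₂⟩, hx.trans hy.symm⟩

/-- Specker's graph on the triples over an ordered type, in which two triples are adjacent when
their entries interleave in the pattern of `SpeckerRel`. All triples are taken as vertices; those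
that are not strictly increasing are isolated. -/
def speckerGraph (I : Type*) [LT I] : SimpleGraph (I × I × I) :=
  SimpleGraph.fromRel SpeckerRel

theorem speckerGraph_cliqueFree_three (I : Type*) [Preorder I] : (speckerGraph I).CliqueFree 3 :=
  fromRel_cliqueFree_three SpeckerRel.fst_lt_fst SpeckerRel.not_trans

theorem SpeckerRel.adj {I : Type*} [Preorder I] {x y : I × I × I} (h : SpeckerRel x y) :
    (speckerGraph I).Adj x y :=
  ⟨fun hxy => h.fst_lt_fst.ne (congrArg Prod.fst hxy), Or.inl h⟩

theorem exists_speckerGraph_adj_eq {I : Type*} {J C : Type u} [Preorder I] [LinearOrder J]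
    {e : J → I} (he : StrictMono e) (hC : #C < Order.cof J) (f : I × I × I → C) :
    ∃ x y, (speckerGraph I).Adj x y ∧ f x = f y := by
  obtain ⟨x, y, hxy, hf⟩ := exists_speckerRel_eq hC (f ∘ Prod.map e (Prod.map e e))
  exact ⟨_, _, (hxy.map he).adj, hf⟩

theorem exists_isRegular_lt_le {μ κ : Cardinal.{u}} (hκ : ℵ₀ ≤ κ) (hμ : μ < κ) :
    ∃ ν : Cardinal.{u}, ν.IsRegular ∧ μ < ν ∧ ν ≤ κ := by
  rcases lt_or_ge μ ℵ₀ with hfin | hinf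
  · exact ⟨ℵ₀, isRegular_aleph0, hfin, hκ⟩
  · exact ⟨Order.succ μ, isRegular_succ hinf, Order.lt_succ μ, Order.succ_le_of_lt hμ⟩

/-- **Erdős–Rado.** For every infinite cardinal `κ` there exists a triangle-free graph on
`κ` vertices with chromatic number `κ`: it admits no proper colouring with fewer than `κ`
colours. -/
theorem erdos_rado_triangle_free (κ : Cardinal.{u}) (hκ : Cardinal.aleph0 ≤ κ) :
    ∃ (V : Type u) (G : SimpleGraph V),
      Cardinal.mk V = κ ∧
      G.CliqueFree 3 ∧
      ∀ (C : Type u), Cardinal.mk C < κ →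
        ∀ f : V → C, ∃ x y, G.Adj x y ∧ f x = f y := by
  refine ⟨_, speckerGraph κ.ord.ToType, ?_, speckerGraph_cliqueFree_three _, fun C hC f => ?_⟩
  · simp [mul_eq_self hκ]
  · obtain ⟨ν, ν_regular, hCν, hνκ⟩ := exists_isRegular_lt_le hκ hC
    have hcof : #C < Order.cof ν.ord.ToType := by
      rwa [Ordinal.cof_toType, ν_regular.cof_ord]
    have htype : Ordinal.type (α := ν.ord.ToType) (· < ·) ≤
        Ordinal.type (α := κ.ord.ToType) (· < ·) := by
      rwa [Ordinal.type_toType, Ordinal.type_toType, ord_le_ord]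
    obtain ⟨segment⟩ := Ordinal.type_le_iff.mp htype
    exact exists_speckerGraph_adj_eq segment.strictMono hcof f
end

section
/- For every positive integer k and every cardinal κ there exists a simple graph G containing no cycle of odd length at most 2k+1 (i.e., no subgraph isomorphic to C₃, C₅, …, C_{2k+1}) such that G admits no proper vertex colouring with fewer than κ colours. -/
universe u

/-! The graph is the shift graph on strictly increasing `n`-tuples of a large linear order, where
`x` is joined to `y` when `y` is `x` moved by one place.

*Short odd cycles.* Each edge moves the entries by one place forwards or backwards, so along an
odd closed walk an entry far from both ends of the tuple returns to a different place, although
the entries of a tuple are distinct.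

*Chromatic number.* An increasing `(n + 1)`-tuple is an arc between increasing `n`-tuples. Given a
colouring of these arcs, assigning to each `n`-tuple the set of colours of the arcs leaving it is
a proper colouring of the shift graph on `n`-tuples. Each such step exponentiates the number of
colours, and on `1`-tuples the shift graph is the complete graph on the linear order. -/

section Preorder

variable {α : Type*} [Preorder α] {n : ℕ}

/-- The arcs of the shift digraph: `y` is obtained from the increasing tuple `x` by dropping its
first entry and appending a larger last one. The arc itself is recorded as the increasing tuple
`z` of length `n + 1` comprising all entries of `x` and `y`, which also makes the notion the right
one for `n = 1`, where `x` and `y` have no entry in common. -/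
def IsShift (x y : Fin n → α) : Prop :=
  ∃ z : Fin (n + 1) → α, StrictMono z ∧ Fin.init z = x ∧ Fin.tail z = y

namespace IsShift

variable {x y : Fin n → α}

lemma strictMono_left (h : IsShift x y) : StrictMono x := by
  obtain ⟨z, hz, rfl, -⟩ := h
  exact hz.comp Fin.strictMono_castSucc

lemma strictMono_right (h : IsShift x y) : StrictMono y := by
  obtain ⟨z, hz, -, rfl⟩ := h
  exact hz.comp Fin.strictMono_succ

lemma apply_eq (h : IsShift x y) {i j : Fin n} (hij : (j : ℕ) = i + 1) : x j = y i := by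
  obtain ⟨z, -, rfl, rfl⟩ := h
  exact congrArg z (Fin.ext hij)

lemma apply_lt (h : IsShift x y) (i : Fin n) : x i < y i := by
  obtain ⟨z, hz, rfl, rfl⟩ := h
  exact hz i.castSucc_lt_succ

lemma ne {x y : Fin (n + 1) → α} (h : IsShift x y) : x ≠ y :=
  fun hxy => (h.apply_lt 0).ne (congrFun hxy 0)

end IsShift

lemma isShift_of_tail_eq_init {z w : Fin (n + 2) → α} (hz : StrictMono z) (hw : StrictMono w)
    (hzw : Fin.tail z = Fin.init w) : IsShift z w := by
  refine ⟨Fin.cons (z 0) w, ?_, ?_, Fin.tail_cons _ _⟩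
  · have hlt : z 0 < w 0 := (hz Fin.zero_lt_one).trans_eq (congrFun hzw 0)
    exact strictMono_vecCons.2 ⟨hlt, hw⟩
  · exact funext (Fin.cases rfl fun i => (congrFun hzw i).symm)

/-- The shift graph on `n`-tuples in `α`. All tuples are vertices; those that are not strictly
increasing are isolated. -/
def shiftGraph (α : Type*) [Preorder α] (n : ℕ) : SimpleGraph (Fin n → α) :=
  SimpleGraph.fromRel IsShift

namespace shiftGraph

lemma strictMono_of_adj {x y : Fin n → α} (h : (shiftGraph α n).Adj x y) : StrictMono x := by
  obtain ⟨-, h | h⟩ := h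
  exacts [h.strictMono_left, h.strictMono_right]

/-- The walk traverses `a` arcs forwards and `b` arcs backwards. -/
lemma exists_apply_eq_of_walk {x y : Fin n → α} (w : (shiftGraph α n).Walk x y) :
    ∃ a b, a + b = w.length ∧ ∀ i j : Fin n, w.length ≤ i → i + w.length < n →
      j + b = i + a → x j = y i := by
  induction w with
  | nil => exact ⟨0, 0, rfl, fun i j _ _ hij => congrArg _ (Fin.ext hij)⟩
  | @cons x v y hadj w ih =>
    obtain ⟨a, b, hab, ih⟩ := ih
    rw [SimpleGraph.Walk.length_cons]
    obtain ⟨-, hxv | hvx⟩ := hadj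
    · refine ⟨a + 1, b, by omega, fun i j hi hin hij => ?_⟩
      calc x j = v ⟨j - 1, by omega⟩ := hxv.apply_eq (by grind)
        _ = y i := ih i _ (by omega) (by omega) (by grind)
    · refine ⟨a, b + 1, by omega, fun i j hi hin hij => ?_⟩
      calc x j = v ⟨j + 1, by omega⟩ := (hvx.apply_eq rfl).symm
        _ = y i := ih i _ (by omega) (by omega) (by grind)

theorem not_odd_length_of_two_mul_length_lt {x : Fin n → α} (w : (shiftGraph α n).Walk x x)
    (hw : 2 * w.length < n) : ¬ Odd w.length := by
  intro hodd
  have hx : StrictMono x := by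
    cases w with
    | nil => simp at hodd
    | cons hadj _ => exact strictMono_of_adj hadj
  obtain ⟨a, b, hab, hshift⟩ := exists_apply_eq_of_walk w
  have heq : x ⟨w.length + a - b, by omega⟩ = x ⟨w.length, by omega⟩ :=
    hshift _ _ le_rfl (by grind) (by grind)
  have hreturn : w.length + a - b = w.length := congrArg Fin.val (hx.injective heq)
  obtain ⟨r, hr⟩ := hodd
  omega

theorem nonempty_coloring_set {C : Type*} (f : (shiftGraph α (n + 2)).Coloring C) :
    Nonempty ((shiftGraph α (n + 1)).Coloring (Set C)) := by
  let outColors (x : Fin (n + 1) → α) : Set C := f '' {z | StrictMono z ∧ Fin.init z = x}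
  have outColors_ne {x y} (h : IsShift x y) : outColors x ≠ outColors y := by
    obtain ⟨z, hz, hzx, hzy⟩ := h
    intro heq
    have hmem : f z ∈ outColors y := heq ▸ ⟨z, ⟨hz, hzx⟩, rfl⟩
    obtain ⟨w, ⟨hw, hwy⟩, hfw⟩ := hmem
    have hzw : IsShift z w := isShift_of_tail_eq_init hz hw (hzy.trans hwy.symm)
    exact f.valid ⟨hzw.ne, .inl hzw⟩ hfw.symm
  refine ⟨.mk outColors ?_⟩
  rintro x y ⟨-, h | h⟩
  exacts [outColors_ne h, (outColors_ne h).symm]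

end shiftGraph

end Preorder

namespace shiftGraph

variable {α : Type u} [LinearOrder α]

lemma adj_vec_one {a b : α} (h : a ≠ b) : (shiftGraph α 1).Adj ![a] ![b] := by
  have isShift_of_lt {a b : α} (hab : a < b) : IsShift ![a] ![b] := by
    refine ⟨![a, b], by simpa using hab, ?_, ?_⟩ <;> ext i <;> fin_cases i <;> rfl
  exact ⟨by simpa using h, h.lt_or_gt.imp isShift_of_lt isShift_of_lt⟩

theorem mk_le_iterate_two_power_of_coloring (n : ℕ) {C : Type u}
    (f : (shiftGraph α (n + 1)).Coloring C) :
    Cardinal.mk α ≤ (fun c : Cardinal.{u} => 2 ^ c)^[n] (Cardinal.mk C) := by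
  induction n generalizing C with
  | zero =>
    refine Cardinal.mk_le_of_injective (f := fun a => f ![a]) fun a b hab => ?_
    by_contra hne
    exact f.valid (adj_vec_one hne) hab
  | succ n ih =>
    obtain ⟨g⟩ := nonempty_coloring_set f
    rw [Function.iterate_succ_apply, ← Cardinal.mk_set]
    exact ih g

end shiftGraph

/-- **Erdős–Hajnal.** For every positive integer `k` and every cardinal `κ` there is a graph
with no cycle of odd length at most `2k+1` that admits no proper colouring with fewer
than `κ` colours. -/
theorem erdos_hajnal_odd_girth (k : ℕ) (hk : 0 < k) (κ : Cardinal.{u}) :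
    ∃ (V : Type u) (G : SimpleGraph V),
      (∀ m : ℕ, Odd m → m ≤ 2 * k + 1 →
        ¬ ∃ (x : V) (w : G.Walk x x), w.IsCycle ∧ w.length = m) ∧
      ∀ (C : Type u), Cardinal.mk C < κ →
        ∀ f : V → C, ∃ x y, G.Adj x y ∧ f x = f y := by
  let twoPower : Cardinal.{u} → Cardinal.{u} := fun c => 2 ^ c
  have twoPower_mono : Monotone twoPower :=
    fun _ _ h => Cardinal.power_le_power_left two_ne_zero h
  let α : Type u := (Order.succ (twoPower^[4 * k + 2] κ)).ord.ToType
  have hα : twoPower^[4 * k + 2] κ < Cardinal.mk α :=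
    (Order.lt_succ _).trans_eq (Cardinal.mk_ord_toType _).symm
  refine ⟨Fin (4 * k + 3) → α, shiftGraph α (4 * k + 3), ?_, fun C hC f => ?_⟩
  · rintro m hodd hm ⟨x, w, -, rfl⟩
    exact shiftGraph.not_odd_length_of_two_mul_length_lt w (by omega) hodd
  · by_contra! hproper
    have hle : Cardinal.mk α ≤ twoPower^[4 * k + 2] (Cardinal.mk C) :=
      shiftGraph.mk_le_iterate_two_power_of_coloring _ (.mk f (hproper _ _))
    exact (hle.trans (twoPower_mono.iterate _ hC.le)).not_gt hα
end

section
/- Let G be a simple graph that admits no proper vertex colouring with countably many colours (i.e., there is no function from V(G) to ℕ giving adjacent vertices distinct values). Then for every natural number n, G contains a complete bipartite subgraph K_{n,ℵ₁}: there are disjoint sets A, B of vertices with |A| = n and |B| = ℵ₁ such that every vertex of A is adjacent to every vertex of B. -/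
universe u

/-!
Let `κ` be the infinite number of colours, and suppose that `G` contains no `K_{n, κ⁺}`, so that
every `n`-set of vertices has at most `κ` common neighbours. Then the edges of `G` can be oriented
along a well-founded relation so that every vertex has fewer than `κ` neighbours below it, and the
greedy colouring along that relation gets by with `κ` colours.

The orientation is found on every set `S` of vertices, by induction on the cardinality of `S`. If
`#S ≤ κ`, enumerate `S` in order type at most `κ`. Otherwise, write `S` as an increasing
well-ordered union of smaller sets, and close each of them under taking common neighbours of
`n`-sets; the closures `D i` are still smaller than `S`. Compare vertices first by the least `i`
with `v ∈ D i`, and then by the orientation of `D i`. A vertex outside a closed set has fewer than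
`n` neighbours in it, so the first comparison puts only finitely many neighbours below any vertex.
-/

namespace ErdosHajnal

open Cardinal Set

section FinitaryClosure

variable {α : Type u} {Φ : Finset α → Set α} {c : Cardinal.{u}} {X Y : Set α}

/-- The set `X` is closed under the multivalued finitary operation `Φ`, which sends a finite set of
arguments to the set of its values. -/
def IsClosedUnder (Φ : Finset α → Set α) (X : Set α) : Prop :=
  ∀ A : Finset α, (A : Set α) ⊆ X → Φ A ⊆ X

lemma IsClosedUnder.sInter {𝒳 : Set (Set α)} (h𝒳 : ∀ X ∈ 𝒳, IsClosedUnder Φ X) :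
    IsClosedUnder Φ (⋂₀ 𝒳) :=
  fun A hA ↦ subset_sInter fun X hX ↦ h𝒳 X hX A (hA.trans (sInter_subset_of_mem hX))

/-- The closure operator sending a set to the least set containing it that is closed under `Φ`. -/
def finitaryClosure (Φ : Finset α → Set α) : ClosureOperator (Set α) :=
  .ofCompletePred (IsClosedUnder Φ) fun _ ↦ IsClosedUnder.sInter

lemma isClosedUnder_finitaryClosure (Φ : Finset α → Set α) (X : Set α) :
    IsClosedUnder Φ (finitaryClosure Φ X) :=
  (finitaryClosure Φ).isClosed_closure X

lemma finitaryClosure_subset (hXY : X ⊆ Y) (hY : IsClosedUnder Φ Y) : finitaryClosure Φ X ⊆ Y :=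
  ClosureOperator.closure_min (c := finitaryClosure Φ) hXY hY

/-- One stage in the construction of the closure of `X` from below: all values of `Φ` at finite
subsets of `X` are added to `X`. -/
def closureStep (Φ : Finset α → Set α) (X : Set α) : Set α :=
  X ∪ ⋃ A : Finset X, Φ (A.map (.subtype _))

lemma subset_closureStep_of_subset {A : Finset α} (hA : (A : Set α) ⊆ X) :
    Φ A ⊆ closureStep Φ X := by
  classical
  refine subset_union_of_subset_right (subset_iUnion_of_subset (A.subtype (· ∈ X)) ?_) X
  rw [Finset.subtype_map_of_mem hA]

lemma isClosedUnder_iUnion_closureStep_iterate (Φ : Finset α → Set α) (X : Set α) :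
    IsClosedUnder Φ (⋃ k : ℕ, (closureStep Φ)^[k] X) := by
  intro A hA
  have hmono : Monotone fun k ↦ (closureStep Φ)^[k] X := monotone_nat_of_le_succ fun k ↦ by
    rw [Function.iterate_succ_apply']
    exact subset_union_left
  obtain ⟨k, hk⟩ := hmono.directed_le.exists_mem_subset_of_finset_subset_biUnion hA
  refine subset_iUnion_of_subset (k + 1) ?_
  rw [Function.iterate_succ_apply']
  exact subset_closureStep_of_subset hk

lemma mk_finset_le_of_mk_le {β : Type u} (hc : ℵ₀ ≤ c) (hβ : #β ≤ c) : #(Finset β) ≤ c := by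
  rcases finite_or_infinite β with _ | _
  · exact (mk_le_aleph0 (α := Finset β)).trans hc
  · rwa [mk_finset_of_infinite]

lemma mk_closureStep_le (hc : ℵ₀ ≤ c) (hΦ : ∀ A, #(Φ A) ≤ c) (hX : #X ≤ c) :
    #(closureStep Φ X) ≤ c :=
  (mk_union_le _ _).trans <| add_le_of_le hc hX <| (mk_iUnion_le _).trans <|
    mul_le_of_le hc (mk_finset_le_of_mk_le hc hX) (ciSup_le' fun _ ↦ hΦ _)

lemma mk_finitaryClosure_le (hc : ℵ₀ ≤ c) (hΦ : ∀ A, #(Φ A) ≤ c) (hX : #X ≤ c) :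
    #(finitaryClosure Φ X) ≤ c := by
  have hstage (k : ℕ) : #((closureStep Φ)^[k] X : Set α) ≤ c := by
    induction k with
    | zero => exact hX
    | succ k ih =>
      rw [Function.iterate_succ_apply']
      exact mk_closureStep_le hc hΦ ih
  have hunion : #(⋃ k : ℕ, (closureStep Φ)^[k] X) ≤ c := by
    have hle := mk_iUnion_le_lift fun k : ℕ ↦ (closureStep Φ)^[k] X
    simp only [lift_uzero, mk_nat, lift_aleph0] at hle
    exact hle.trans (mul_le_of_le hc hc (ciSup_le' hstage))
  exact (mk_le_mk_of_subset (finitaryClosure_subset (subset_iUnion_of_subset 0 subset_rfl)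
    (isClosedUnder_iUnion_closureStep_iterate Φ X))).trans hunion

end FinitaryClosure

lemma exists_monotone_cover_mk_lt {α : Type u} {S : Set α} (hS : ℵ₀ ≤ #S) :
    ∃ (_ : LinearOrder S) (_ : WellFoundedLT S) (D : S → Set α),
      Monotone D ∧ (∀ i, #(D i) < #S) ∧ S ⊆ ⋃ i, D i := by
  obtain ⟨_, _, hord⟩ := exists_ord_eq_type_lt S
  refine ⟨‹_›, ‹_›, fun i ↦ (↑) '' Iic i, fun i j hij ↦ image_mono (Iic_subset_Iic.2 hij),
    fun i ↦ mk_image_le.trans_lt (mk_Iic_lt i hord hS), fun v hv ↦ ?_⟩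
  exact mem_iUnion.2 ⟨⟨v, hv⟩, ⟨v, hv⟩, self_mem_Iic, rfl⟩

variable {V : Type u} {G : SimpleGraph V} {κ : Cardinal.{u}} {S T : Set V}

section ColoringNumber

/-- The colouring number of the graph induced by `G` on `S` is at most `κ`: its edges can be
oriented along a well-founded relation so that every vertex has fewer than `κ` neighbours below it.
The relation lives on all of `V`, and it may relate vertices that are not adjacent. -/
def ColoringNumberLEOn (G : SimpleGraph V) (κ : Cardinal.{u}) (S : Set V) : Prop :=
  ∃ r : V → V → Prop, WellFounded r ∧ (∀ x ∈ S, ∀ y ∈ S, G.Adj x y → r x y ∨ r y x) ∧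
    ∀ v ∈ S, #{u | u ∈ S ∧ G.Adj u v ∧ r u v} < κ

lemma ColoringNumberLEOn.mono (hST : S ⊆ T) (hT : ColoringNumberLEOn G κ T) :
    ColoringNumberLEOn G κ S := by
  obtain ⟨r, hwf, hcomp, hfew⟩ := hT
  refine ⟨r, hwf, fun x hx y hy ↦ hcomp x (hST hx) y (hST hy), fun v hv ↦ ?_⟩
  have hsub : {u | u ∈ S ∧ G.Adj u v ∧ r u v} ⊆ {u | u ∈ T ∧ G.Adj u v ∧ r u v} :=
    fun u hu ↦ ⟨hST hu.1, hu.2⟩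
  exact (mk_le_mk_of_subset hsub).trans_lt (hfew v (hST hv))

lemma coloringNumberLEOn_of_mk_le (G : SimpleGraph V) (hS : #S ≤ κ) :
    ColoringNumberLEOn G κ S := by
  rcases S.eq_empty_or_nonempty with rfl | ⟨v₀, hv₀⟩
  · exact ⟨emptyRelation, emptyWf.wf, by simp, by simp⟩
  obtain ⟨_, _, hord⟩ := exists_ord_eq_type_lt S
  classical
  let e : V → S := fun v ↦ if hv : v ∈ S then ⟨v, hv⟩ else ⟨v₀, hv₀⟩
  have he : ∀ v ∈ S, (e v : V) = v := fun v hv ↦ by simp only [e, dif_pos hv]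
  have hinj : InjOn e S := fun x hx y hy hxy ↦ by rw [← he x hx, hxy, he y hy]
  refine ⟨InvImage (· < ·) e, InvImage.wf e wellFounded_lt, fun x hx y hy hxy ↦ ?_, fun v _ ↦ ?_⟩
  · exact lt_or_gt_of_ne (hinj.ne hx hy hxy.ne)
  · have hsub : {u | u ∈ S ∧ G.Adj u v ∧ e u < e v} ⊆ (↑) '' Iio (e v) :=
      fun u hu ↦ ⟨e u, hu.2.2, he u hu.1⟩
    exact (mk_le_mk_of_subset hsub).trans_lt
      (mk_image_le.trans_lt ((mk_Iio_lt (e v) hord).trans_le hS))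

lemma wellFounded_lex_rank {α I : Type*} [LT I] [WellFoundedLT I] (rk : α → I)
    {r : I → α → α → Prop} (hr : ∀ i, WellFounded (r i)) :
    WellFounded fun u v ↦ rk u < rk v ∨ rk u = rk v ∧ r (rk v) u v := by
  refine ((WellFounded.psigma_lex wellFounded_lt hr).onFun
    (f := fun v ↦ (⟨rk v, v⟩ : Σ' _ : I, α))).mono fun u v huv ↦ ?_
  rcases huv with hlt | ⟨heq, huv⟩
  · exact PSigma.Lex.left _ _ hlt
  · simp only [Function.onFun, heq]
    exact PSigma.Lex.right _ huv

lemma coloringNumberLEOn_of_rank {I : Type*} [LinearOrder I] [WellFoundedLT I] (hκ : ℵ₀ ≤ κ)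
    (rk : V → I) (hbelow : ∀ v ∈ S, #{u | u ∈ S ∧ G.Adj u v ∧ rk u < rk v} < κ)
    (hfiber : ∀ i, ColoringNumberLEOn G κ (S ∩ rk ⁻¹' {i})) : ColoringNumberLEOn G κ S := by
  choose r hwf hcomp hfew using hfiber
  refine ⟨_, wellFounded_lex_rank rk hwf, fun x hx y hy hxy ↦ ?_, fun v hv ↦ ?_⟩
  · rcases lt_trichotomy (rk x) (rk y) with hlt | heq | hgt
    · exact .inl (.inl hlt)
    · rw [heq]
      exact (hcomp (rk y) x ⟨hx, heq⟩ y ⟨hy, rfl⟩ hxy).imp (fun h ↦ .inr ⟨rfl, h⟩)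
        fun h ↦ .inr ⟨rfl, h⟩
    · exact .inr (.inl hgt)
  · have hsub : {u | u ∈ S ∧ G.Adj u v ∧ (rk u < rk v ∨ rk u = rk v ∧ r (rk v) u v)} ⊆
        {u | u ∈ S ∧ G.Adj u v ∧ rk u < rk v} ∪
          {u | u ∈ S ∩ rk ⁻¹' {rk v} ∧ G.Adj u v ∧ r (rk v) u v} := by
      rintro u ⟨hu, hadj, hlt | ⟨heq, hr⟩⟩
      · exact .inl ⟨hu, hadj, hlt⟩
      · exact .inr ⟨⟨hu, heq⟩, hadj, hr⟩
    exact (mk_le_mk_of_subset hsub).trans_lt <| (mk_union_le _ _).trans_lt <|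
      add_lt_of_lt hκ (hbelow v hv) (hfew (rk v) v ⟨hv, rfl⟩)

lemma exists_notMem_range_of_mk_lt {α β : Type u} (f : α → β) (h : #α < #β) :
    ∃ b, b ∉ range f := by
  by_contra! hsurj
  exact h.not_ge (mk_le_of_surjective hsurj)

lemma ColoringNumberLEOn.nonempty_coloring {C : Type u} (hG : ColoringNumberLEOn G #C Set.univ) :
    Nonempty (G.Coloring C) := by
  obtain ⟨r, hwf, hcomp, hfew⟩ := hG
  have hfree (v : V) (g : ∀ u, r u v → C) : ∃ c, ∀ u (hu : r u v), G.Adj u v → g u hu ≠ c := by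
    obtain ⟨c, hc⟩ := exists_notMem_range_of_mk_lt
      (fun u : {u | u ∈ Set.univ ∧ G.Adj u v ∧ r u v} ↦ g u u.2.2.2) (hfew v (mem_univ v))
    exact ⟨c, fun u hu hadj hgu ↦ hc ⟨⟨u, mem_univ u, hadj, hu⟩, hgu⟩⟩
  choose greedy hgreedy using hfree
  have hne : ∀ {x y}, G.Adj x y → r x y → hwf.fix greedy x ≠ hwf.fix greedy y := by
    intro x y hxy hr
    rw [hwf.fix_eq greedy y]
    exact hgreedy y (fun u _ ↦ hwf.fix greedy u) x hr hxy
  refine ⟨.mk (hwf.fix greedy) fun {x y} hxy ↦ ?_⟩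
  exact (hcomp x (mem_univ x) y (mem_univ y) hxy).elim (hne hxy) fun hr ↦ (hne hxy.symm hr).symm

end ColoringNumber

section CommonNeighbors

variable {n : ℕ}

/-- The common neighbours of the vertices in `A` if `A` has `n` elements, and the empty set
otherwise. This is the finitary operation under which sets of vertices are closed. -/
def commonNeighborsOfCard (G : SimpleGraph V) (n : ℕ) (A : Finset V) : Set V :=
  {v | A.card = n ∧ ∀ a ∈ A, G.Adj a v}

lemma finite_adj_iUnion_of_isClosedUnder {ι : Type*} {D : ι → Set V} (hdir : Directed (· ⊆ ·) D)
    (hD : ∀ i, IsClosedUnder (commonNeighborsOfCard G n) (D i)) {v : V} (hv : ∀ i, v ∉ D i) :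
    {u | u ∈ ⋃ i, D i ∧ G.Adj u v}.Finite := by
  by_contra hinf
  obtain ⟨A, hA, hcard⟩ := Set.Infinite.exists_subset_card_eq hinf n
  obtain ⟨u, hu, -⟩ := Set.Infinite.nonempty hinf
  have : Nonempty ι := (mem_iUnion.1 hu).nonempty
  obtain ⟨i, hi⟩ :=
    hdir.exists_mem_subset_of_finset_subset_biUnion fun a (ha : a ∈ A) ↦ (hA ha).1
  exact hv i (hD i A hi ⟨hcard, fun a ha ↦ (hA ha).2⟩)

lemma coloringNumberLEOn_of_monotone_cover {I : Type*} [LinearOrder I] [WellFoundedLT I]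
    (hκ : ℵ₀ ≤ κ) {D : I → Set V} (hmono : Monotone D) (hcover : S ⊆ ⋃ i, D i)
    (hclosed : ∀ i, IsClosedUnder (commonNeighborsOfCard G n) (D i))
    (hD : ∀ i, ColoringNumberLEOn G κ (D i)) : ColoringNumberLEOn G κ S := by
  rcases S.eq_empty_or_nonempty with rfl | ⟨v₀, hv₀⟩
  · exact coloringNumberLEOn_of_mk_le G (by simp)
  have : Nonempty I := (mem_iUnion.1 (hcover hv₀)).nonempty
  have hleast : ∀ v ∈ S, ∃ i, v ∈ D i ∧ ∀ j < i, v ∉ D j := fun v hv ↦ by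
    obtain ⟨i, hi, hmin⟩ := wellFounded_lt.has_min {i | v ∈ D i} (mem_iUnion.1 (hcover hv))
    exact ⟨i, hi, fun j hj hvj ↦ hmin j hvj hj⟩
  choose! rk hmem hmin using hleast
  refine coloringNumberLEOn_of_rank hκ rk (fun v hv ↦ ?_) fun i ↦ (hD i).mono ?_
  · have hdir : Directed (· ⊆ ·) fun i : Iio (rk v) ↦ D i :=
      (hmono.comp (Subtype.mono_coe _)).directed_le
    have hfin := finite_adj_iUnion_of_isClosedUnder hdir (fun i ↦ hclosed i)
      fun i ↦ hmin v hv i i.2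
    refine lt_of_lt_of_le (Set.Finite.lt_aleph0 (hfin.subset ?_)) hκ
    exact fun u ⟨hu, hadj, hlt⟩ ↦ ⟨mem_iUnion.2 ⟨⟨rk u, hlt⟩, hmem u hu⟩, hadj⟩
  · rintro u ⟨hu, rfl⟩
    exact hmem u hu

theorem coloringNumberLEOn_of_mk_commonNeighborsOfCard_le (hκ : ℵ₀ ≤ κ)
    (hG : ∀ A, #(commonNeighborsOfCard G n A) ≤ κ) (S : Set V) : ColoringNumberLEOn G κ S := by
  induction hS : #S using WellFoundedLT.induction generalizing S with
  | ind c ih =>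
  subst hS
  rcases le_or_gt #S κ with hle | hgt
  · exact coloringNumberLEOn_of_mk_le G hle
  obtain ⟨_, _, D, hmono, hsmall, hcover⟩ := exists_monotone_cover_mk_lt (hκ.trans hgt.le)
  let cl := finitaryClosure (commonNeighborsOfCard G n)
  refine coloringNumberLEOn_of_monotone_cover hκ (cl.monotone.comp hmono)
    (hcover.trans (iUnion_mono fun i ↦ cl.le_closure (D i)))
    (fun i ↦ isClosedUnder_finitaryClosure _ (D i)) fun i ↦ ih _ ?_ _ rfl
  calc #(cl (D i)) ≤ max κ #(D i) :=
        mk_finitaryClosure_le (hκ.trans (le_max_left _ _))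
          (fun A ↦ (hG A).trans (le_max_left _ _)) (le_max_right _ _)
    _ < #S := max_lt hgt (hsmall i)

lemma exists_completeBipartite_of_lt_mk_commonNeighborsOfCard {A : Finset V}
    (hA : κ < #(commonNeighborsOfCard G n A)) :
    ∃ A B : Set V, Disjoint A B ∧ #A = n ∧ #B = Order.succ κ ∧ ∀ a ∈ A, ∀ b ∈ B, G.Adj a b := by
  obtain ⟨B, hBA, hB⟩ := le_mk_iff_exists_subset.1 (Order.succ_le_of_lt hA)
  have hadj : ∀ a ∈ A, ∀ b ∈ B, G.Adj a b := fun a ha b hb ↦ (hBA hb).2 a ha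
  obtain ⟨v, hv⟩ : (commonNeighborsOfCard G n A).Nonempty :=
    nonempty_coe_sort.1 (mk_ne_zero_iff.1 hA.ne_bot)
  exact ⟨A, B, disjoint_left.2 fun a ha hb ↦ G.irrefl (hadj a ha a hb),
    by rw [← hv.1]; exact mk_coe_finset, hB, hadj⟩

end CommonNeighbors

end ErdosHajnal

open Cardinal ErdosHajnal in
theorem erdos_hajnal_K_n_aleph_one_general {V C : Type u} [Infinite C] (G : SimpleGraph V)
    (hG : IsEmpty (G.Coloring C)) (n : ℕ) :
    ∃ A B : Set V, Disjoint A B ∧ #A = n ∧ #B = Order.succ #C ∧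
      ∀ a ∈ A, ∀ b ∈ B, G.Adj a b := by
  by_contra hno
  have hcommon (A : Finset V) : #(commonNeighborsOfCard G n A) ≤ #C :=
    not_lt.1 fun hA ↦ hno (exists_completeBipartite_of_lt_mk_commonNeighborsOfCard hA)
  have hcol := coloringNumberLEOn_of_mk_commonNeighborsOfCard_le (aleph0_le_mk C) hcommon Set.univ
  exact not_isEmpty_iff.2 hcol.nonempty_coloring hG

/-- **Erdős–Hajnal.** If a graph `G` has no proper colouring with countably many colours,
then for every natural number `n` it contains a complete bipartite subgraph `K_{n, ℵ₁}`. -/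
theorem erdos_hajnal_K_n_aleph_one {V : Type u} (G : SimpleGraph V)
    (h : ∀ f : V → ℕ, ∃ x y, G.Adj x y ∧ f x = f y) (n : ℕ) :
    ∃ A B : Set V, Disjoint A B ∧
      Cardinal.mk A = n ∧
      Cardinal.mk B = Cardinal.aleph 1 ∧
      ∀ a ∈ A, ∀ b ∈ B, G.Adj a b := by
  have hG : IsEmpty (G.Coloring (ULift.{u} ℕ)) := ⟨fun c ↦
    let ⟨_, _, hadj, heq⟩ := h fun v ↦ (c v).down
    c.valid hadj (ULift.down_injective heq)⟩
  simpa using erdos_hajnal_K_n_aleph_one_general G hG n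
end

section
/- Every simple graph G that admits no proper vertex colouring with countably many colours contains odd cycles of all sufficiently large lengths: there exists a natural number N such that for every odd integer m ≥ N, G contains a cycle of length m. -/
universe u

/-!
We may assume that `G` is connected. Fix a breadth-first spanning tree with root `r`. Some distance
layer `L = {x | dist x r = n}` induces an uncountably chromatic graph. Partition `L` according to
the `k`-th ancestor in the tree, for `k = 0, …, n`: the classes are single vertices for `k = 0`, and
there is just one class for `k = n`. Hence for some `k` there is a vertex `a` such that, among the
vertices of `L` with `(k + 1)`-st ancestor `a`, the edges joining vertices with different `k`-th
ancestors form an uncountably chromatic graph `H`.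

Being not even finitely chromatic, `H` has finite subgraphs of arbitrarily large minimum degree. In
such a subgraph there is, for any given odd `l`, a path of length `l` whose ends have different
`k`-th ancestors: otherwise all neighbours of a vertex have the same `k`-th ancestor, so only two
values occur, alternately, along any path, and the ends of an odd path differ after all. The tree
path through `a` between the ends of such a path meets `L` only in its ends and closes it up to a
cycle of length `l + 2 * (k + 1)`.
-/

namespace OddCycles

open SimpleGraph

variable {V W β : Type*} {G : SimpleGraph V}

section Chromatic

/-- `G` has a proper vertex colouring with countably many colours; the colours are taken in `ℕ`. -/
def CountablyColorable (G : SimpleGraph V) : Prop :=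
  Nonempty (G.Coloring ℕ)

/-- The graph of those edges of `G` whose ends have different values under `b`, that is, which join
different classes of the partition of the vertices into fibres of `b`. -/
def crossingGraph (G : SimpleGraph V) (b : V → β) : SimpleGraph V :=
  G ⊓ (⊤ : SimpleGraph β).comap b

lemma CountablyColorable.of_hom {H : SimpleGraph W} (φ : G →g H) (hH : CountablyColorable H) :
    CountablyColorable G :=
  hH.map fun c => c.comp φ

lemma CountablyColorable.of_fibers (b : V → β)
    (hfiber : ∀ i, CountablyColorable (G.induce (b ⁻¹' {i})))
    (hcross : CountablyColorable (crossingGraph G b)) : CountablyColorable G := by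
  obtain ⟨c⟩ := hcross
  let e : ∀ i, (G.induce (b ⁻¹' {i})).Coloring ℕ := fun i => (hfiber i).some
  refine ⟨Coloring.mk (fun x => Nat.pair (c x) (e (b x) ⟨x, rfl⟩)) fun {x y} hxy hpair => ?_⟩
  obtain ⟨hc, he⟩ := Nat.pair_eq_pair.1 hpair
  by_cases hb : b x = b y
  · have he_eq : ∀ i (hi : b y = i), e (b y) ⟨y, rfl⟩ = e i ⟨y, hi⟩ := by rintro _ rfl; rfl
    rw [he_eq (b x) hb.symm] at he
    exact (e (b x)).valid (v := ⟨x, rfl⟩) (w := ⟨y, hb.symm⟩) hxy he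
  · exact c.valid ⟨hxy, hb⟩ hc

lemma exists_connectedComponent_not_countablyColorable (hG : ¬ CountablyColorable G) :
    ∃ C : G.ConnectedComponent, ¬ CountablyColorable C.toSimpleGraph := by
  by_contra! hcomp
  exact hG ⟨G.homOfConnectedComponents fun C => (hcomp C).some⟩

lemma exists_not_countablyColorable_induce_fiber (hG : ¬ CountablyColorable G) (f : V → ℕ) :
    ∃ n, ¬ CountablyColorable (G.induce (f ⁻¹' {n})) := by
  by_contra! hfiber
  exact hG (.of_fibers f hfiber ⟨Coloring.mk f fun hxy => hxy.2⟩)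

lemma exists_not_countablyColorable_crossingGraph (hG : ¬ CountablyColorable G) {n : ℕ}
    {g : ℕ → V → β} (hzero : (g 0).Injective) (hlast : ∀ x y, g n x = g n y) :
    ∃ k < n, ∃ a, ¬ CountablyColorable ((crossingGraph G (g k)).induce (g (k + 1) ⁻¹' {a})) := by
  by_contra! hcross
  have hclass : ∀ k ≤ n, ∀ a, CountablyColorable (G.induce (g k ⁻¹' {a})) := by
    intro k
    induction k with
    | zero =>
      refine fun _ a => ⟨Coloring.mk (fun _ => 0) fun {x y} hxy => ?_⟩
      exact absurd (Subtype.ext (hzero (x.2.trans y.2.symm))) hxy.ne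
    | succ k ih =>
      intro hk a
      refine .of_fibers (fun x => g k x) (fun i => ?_) (hcross k hk a)
      exact .of_hom ⟨fun x => ⟨x.1.1, x.2⟩, id⟩ (ih (by lia) i)
  refine hG ?_
  rcases isEmpty_or_nonempty V with _ | ⟨⟨x⟩⟩
  · exact ⟨Coloring.mk (fun _ => 0) fun {y} => isEmptyElim y⟩
  · exact .of_hom ⟨fun y => ⟨y, hlast y x⟩, id⟩ (hclass n le_rfl (g n x))

end Chromatic

section Degenerate

/-- `G` is `d`-degenerate, the condition under which greedy colouring needs only `d + 1` colours:
every finite nonempty set of vertices spans a subgraph with a vertex of degree at most `d`. -/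
def IsDegenerate (G : SimpleGraph V) (d : ℕ) : Prop :=
  ∀ S : Finset V, S.Nonempty →
    ∃ x : S, ((G.induce (S : Set V)).neighborSet x).encard ≤ d

lemma IsDegenerate.exists_coloring_finset {d : ℕ} (hG : IsDegenerate G d) (S : Finset V) :
    ∃ c : V → Fin (d + 1), ∀ x ∈ S, ∀ y ∈ S, G.Adj x y → c x ≠ c y := by
  classical
  induction S using Finset.strongInduction with
  | H S ih =>
    rcases S.eq_empty_or_nonempty with rfl | hne
    · exact ⟨fun _ => 0, by simp⟩
    obtain ⟨⟨x, hx⟩, hdeg⟩ := hG S hne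
    obtain ⟨c, hc⟩ := ih (S.erase x) (Finset.erase_ssubset hx)
    obtain ⟨i, hi⟩ : ∃ i, i ∉ (fun y : S => c y) '' (G.induce (S : Set V)).neighborSet ⟨x, hx⟩ := by
      rw [← Set.ne_univ_iff_exists_notMem]
      intro huniv
      have hle := (Set.encard_image_le (fun y : S => c y) _).trans hdeg
      rw [huniv, Set.encard_univ, ENat.card_eq_coe_fintype_card, Fintype.card_fin] at hle
      exact absurd (Nat.cast_le.1 hle) (by lia)
    have hfree : ∀ y ∈ S, G.Adj x y → c y ≠ i := fun y hy hxy hyi => hi ⟨⟨y, hy⟩, hxy, hyi⟩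
    refine ⟨Function.update c x i, fun y hy z hz hyz => ?_⟩
    have := hyz.ne
    have := hyz.symm
    grind [Function.update_apply]

lemma IsDegenerate.colorable {d : ℕ} (hG : IsDegenerate G d) : G.Colorable (d + 1) := by
  choose c hc using hG.exists_coloring_finset
  refine nonempty_hom_of_forall_finite_subgraph_hom fun G' hfin => ?_
  refine ⟨fun x => c hfin.toFinset x, fun {x y} hxy => ?_⟩
  exact hc _ x (by simp) y (by simp) (G'.adj_sub hxy)

lemma CountablyColorable.of_isDegenerate {d : ℕ} (hG : IsDegenerate G d) :
    CountablyColorable G :=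
  let ⟨c⟩ := hG.colorable
  ⟨Coloring.mk (fun x => c x) fun hxy h => c.valid hxy (Fin.ext h)⟩

end Degenerate

section OddPaths

lemma exists_isPath_avoiding {d : ℕ} (hdeg : ∀ x, d ≤ (G.neighborSet x).encard) (l : ℕ) :
    ∀ (F : Finset V) (x : V), x ∉ F → F.card + l ≤ d →
      ∃ (y : V) (w : G.Walk x y), w.IsPath ∧ w.length = l ∧ ∀ v ∈ w.support, v ∉ F := by
  classical
  induction l with
  | zero => exact fun F x hx _ => ⟨x, .nil, .nil, rfl, by simpa using hx⟩
  | succ l ih =>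
    intro F x hx hcard
    obtain ⟨z, hxz, hz⟩ : ∃ z ∈ G.neighborSet x, z ∉ F := by
      by_contra! hsub
      have hle := (hdeg x).trans (Set.encard_le_encard hsub)
      rw [Set.encard_coe_eq_coe_finsetCard, Nat.cast_le] at hle
      lia
    rw [mem_neighborSet] at hxz
    obtain ⟨y, w, hw, hl, havoid⟩ := ih (insert x F) z (by simp [hz, hxz.ne'])
      (by rw [Finset.card_insert_of_notMem hx]; lia)
    refine ⟨y, .cons hxz w, hw.cons fun h => havoid x h (F.mem_insert_self x), by simp [hl], ?_⟩
    rw [Walk.support_cons, List.forall_mem_cons]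
    exact ⟨hx, fun v hv h => havoid v hv (Finset.mem_insert_of_mem h)⟩

lemma apply_eq_of_even_length {b : V → β}
    (hb : ∀ ⦃y x z⦄, G.Adj y x → G.Adj y z → b x = b z) :
    ∀ {x y : V} (w : G.Walk x y), Even w.length → b x = b y
  | _, _, .nil, _ => rfl
  | _, _, .cons _ .nil, heven => by simp at heven
  | _, _, .cons h (.cons h' w), heven =>
    (hb h.symm h').trans (apply_eq_of_even_length hb w (by simpa [Nat.even_add_one] using heven))

lemma exists_isPath_odd_apply_ne [Nonempty V] {j : ℕ}
    (hdeg : ∀ x, (2 * j + 1 : ℕ) < (G.neighborSet x).encard) (b : G.Coloring β) :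
    ∃ (x y : V) (w : G.Walk x y), w.IsPath ∧ w.length = 2 * j + 1 ∧ b x ≠ b y := by
  classical
  by_contra! hends
  have hdeg' : ∀ x, ((2 * j + 2 : ℕ) : ℕ∞) ≤ (G.neighborSet x).encard := fun x => by
    exact_mod_cast Order.add_one_le_of_lt (hdeg x)
  have hnbr : ∀ ⦃y x z⦄, G.Adj y x → G.Adj y z → b x = b z := by
    intro y x z hyx hyz
    -- Both `x` and `z` extend one path of length `2 * j` from `y`, so both agree with its far end.
    obtain ⟨q, w, hw, hl, havoid⟩ := exists_isPath_avoiding hdeg' (2 * j) {x, z} y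
      (by simp [hyx.ne, hyz.ne]) (by have := Finset.card_le_two (a := x) (b := z); lia)
    have hx := hends x q (.cons hyx.symm w) (hw.cons fun h => havoid x h (by simp)) (by simp [hl])
    have hz := hends z q (.cons hyz.symm w) (hw.cons fun h => havoid z h (by simp)) (by simp [hl])
    exact hx.trans hz.symm
  obtain ⟨q, w, hw, hl, -⟩ := exists_isPath_avoiding hdeg' (2 * j + 1) ∅ (Classical.arbitrary V)
    (by simp) (by simp)
  have hend := hends _ q w hw hl
  cases w with
  | nil => simp at hl
  | cons hxy w =>
    have heven : Even w.length := ⟨j, by rw [Walk.length_cons] at hl; lia⟩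
    exact b.valid hxy (hend.trans (apply_eq_of_even_length hnbr w heven).symm)

lemma exists_isPath_odd_apply_ne_of_not_countablyColorable (hG : ¬ CountablyColorable G)
    (b : G.Coloring β) (j : ℕ) :
    ∃ (x y : V) (w : G.Walk x y), w.IsPath ∧ w.length = 2 * j + 1 ∧ b x ≠ b y := by
  have hdegenerate : ¬ IsDegenerate G (2 * j + 1) := fun h => hG (.of_isDegenerate h)
  simp only [IsDegenerate] at hdegenerate
  push Not at hdegenerate
  obtain ⟨S, hne, hdeg⟩ := hdegenerate
  have : Nonempty (S : Set V) := hne.to_subtype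
  let ι : G.induce (S : Set V) ↪g G := Embedding.induce _
  obtain ⟨x, y, w, hw, hl, hxy⟩ := exists_isPath_odd_apply_ne hdeg (b.comp ι.toHom)
  exact ⟨x, y, w.map ι.toHom, hw.map ι.injective, (w.length_map _).trans hl, hxy⟩

lemma exists_isPath_odd_apply_succ_eq_apply_ne (hG : ¬ CountablyColorable G) {n : ℕ} {g : ℕ → V → β}
    (hzero : (g 0).Injective) (hlast : ∀ x y, g n x = g n y) :
    ∃ k < n, ∀ j, ∃ (x y : V) (w : G.Walk x y), w.IsPath ∧ w.length = 2 * j + 1 ∧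
      g (k + 1) x = g (k + 1) y ∧ g k x ≠ g k y := by
  obtain ⟨k, hk, a, hcross⟩ := exists_not_countablyColorable_crossingGraph hG hzero hlast
  refine ⟨k, hk, fun j => ?_⟩
  let φ : (crossingGraph G (g k)).induce (g (k + 1) ⁻¹' {a}) →g G := ⟨Subtype.val, And.left⟩
  obtain ⟨x, y, w, hw, hl, hne⟩ := exists_isPath_odd_apply_ne_of_not_countablyColorable hcross
    (Coloring.mk (fun x => g k x) And.right) j
  exact ⟨x, y, w.map φ, hw.map Subtype.val_injective, (w.length_map φ).trans hl,
    x.2.trans y.2.symm, hne⟩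

end OddPaths

section Tree

/-- `parent` chooses, for each vertex `x` of positive depth, a neighbour one level closer to depth
zero; the edges from `x` to `parent x` form a forest, a breadth-first tree when `depth` is the
distance to a root. The value of `parent` on vertices of depth zero is arbitrary. -/
structure IsParentMap (G : SimpleGraph V) (depth : V → ℕ) (parent : V → V) : Prop where
  adj : ∀ ⦃x⦄, depth x ≠ 0 → G.Adj x (parent x)
  depth_parent : ∀ ⦃x⦄, depth x ≠ 0 → depth (parent x) + 1 = depth x

lemma exists_isParentMap_dist (hG : G.Connected) (r : V) :
    ∃ p, IsParentMap G (G.dist · r) p := by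
  have hcloser : ∀ x, ∃ z, G.dist x r ≠ 0 → G.Adj x z ∧ G.dist z r + 1 = G.dist x r := by
    intro x
    obtain ⟨w, hw⟩ := hG.exists_walk_length_eq_dist x r
    cases w with
    | nil => exact ⟨r, fun h => absurd SimpleGraph.dist_self h⟩
    | @cons _ z _ hxz w =>
      refine ⟨z, fun _ => ⟨hxz, ?_⟩⟩
      have hle := dist_le w
      have htriangle := hG.dist_triangle (u := x) (v := z) (w := r)
      rw [dist_eq_one_iff_adj.2 hxz] at htriangle
      rw [Walk.length_cons] at hw
      lia
  choose p hp using hcloser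
  exact ⟨p, fun x hx => (hp x hx).1, fun x hx => (hp x hx).2⟩

namespace IsParentMap

variable {f : V → ℕ} {p : V → V}

lemma depth_iterate (hp : IsParentMap G f p) {i : ℕ} {x : V} (hi : i ≤ f x) :
    f (p^[i] x) + i = f x := by
  induction i with
  | zero => rfl
  | succ i ih =>
    have hdepth := ih (by lia)
    have hparent := hp.depth_parent (x := p^[i] x) (by lia)
    rw [Function.iterate_succ_apply']
    lia

lemma exists_isPath_of_iterate_eq (hp : IsParentMap G f p) (k : ℕ) :
    ∀ {x y : V}, f x = f y → k ≤ f x → p^[k] x = p^[k] y → (∀ j < k, p^[j] x ≠ p^[j] y) →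
      ∃ w : G.Walk x y, w.IsPath ∧ w.length = 2 * k ∧
        ∀ v ∈ w.support, v = x ∨ v = y ∨ f v < f x := by
  induction k with
  | zero =>
    intro x y _ _ hxy _
    obtain rfl : x = y := hxy
    exact ⟨.nil, .nil, rfl, by simp⟩
  | succ k ih =>
    intro x y hf hk heq hne
    have hx := hp.depth_parent (x := x) (by lia)
    have hy := hp.depth_parent (x := y) (by lia)
    obtain ⟨w, hw, hl, hdepth⟩ := ih (x := p x) (y := p y) (by lia) (by lia) heq
      fun j hj => hne (j + 1) (by lia)
    have hlt : ∀ v ∈ w.support, f v < f x := by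
      intro v hv
      rcases hdepth v hv with rfl | rfl | h <;> lia
    have hyw : y ∉ w.support := fun h => absurd (hlt y h) (by lia)
    have hxw : x ∉ w.support := fun h => absurd (hlt x h) (lt_irrefl _)
    have hxy : x ≠ y := hne 0 (by lia)
    have hadjy := (hp.adj (x := y) (by lia)).symm
    refine ⟨.cons (hp.adj (by lia)) (w.concat hadjy), ?_, ?_, ?_⟩
    · exact (hw.concat hyw hadjy).cons (by simp [Walk.support_concat, hxw, hxy])
    · rw [Walk.length_cons, Walk.length_concat, hl]
      lia
    · simp only [Walk.support_cons, Walk.support_concat, List.mem_cons, List.mem_append,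
        List.not_mem_nil, or_false]
      rintro v (rfl | hv | rfl)
      exacts [.inl rfl, .inr (.inr (hlt v hv)), .inr (.inl rfl)]

lemma exists_isCycle_of_isPath (hp : IsParentMap G f p) {n k : ℕ} (hk : k < n) {x y : V}
    {w : G.Walk x y} (hw : w.IsPath) (hlayer : ∀ v ∈ w.support, f v = n)
    (heq : p^[k + 1] x = p^[k + 1] y) (hne : p^[k] x ≠ p^[k] y) :
    ∃ c : G.Walk x x, c.IsCycle ∧ c.length = w.length + 2 * (k + 1) := by
  have hx := hlayer x w.start_mem_support
  have hy := hlayer y w.end_mem_support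
  have hne' : ∀ j < k + 1, p^[j] y ≠ p^[j] x := by
    intro j hj hjeq
    obtain ⟨i, rfl⟩ := Nat.exists_eq_add_of_le' (Nat.le_of_lt_succ hj)
    exact hne (by rw [Function.iterate_add_apply, Function.iterate_add_apply, hjeq])
  obtain ⟨q, hq, hl, hdepth⟩ :=
    hp.exists_isPath_of_iterate_eq (k + 1) (hy.trans hx.symm) (by lia) heq.symm hne'
  refine ⟨w.append q, hw.isCycle_append hq ?_ (.inr (by lia)), by simp [hl]⟩
  intro v hvw hvq
  have hw_nodup := hw.support_nodup
  have hq_nodup := hq.support_nodup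
  rw [← Walk.cons_tail_support, List.nodup_cons] at hw_nodup hq_nodup
  rcases hdepth v (List.mem_of_mem_tail hvq) with rfl | rfl | hlt
  · exact hq_nodup.1 hvq
  · exact hw_nodup.1 hvw
  · have := hlayer v (List.mem_of_mem_tail hvw)
    lia

end IsParentMap

end Tree

lemma exists_odd_isCycle_of_connected (hconn : G.Connected) (hG : ¬ CountablyColorable G) :
    ∃ N : ℕ, ∀ m : ℕ, N ≤ m → Odd m →
      ∃ (x : V) (w : G.Walk x x), w.IsCycle ∧ w.length = m := by
  obtain ⟨r⟩ := hconn.nonempty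
  obtain ⟨p, hp⟩ := exists_isParentMap_dist hconn r
  obtain ⟨n, hlayer⟩ := exists_not_countablyColorable_induce_fiber hG (G.dist · r)
  have hroot : ∀ x, G.dist x r = n → p^[n] x = r := fun x hx =>
    hconn.dist_eq_zero_iff.1 (by have := hp.depth_iterate hx.ge; lia)
  obtain ⟨k, hk, hpath⟩ := exists_isPath_odd_apply_succ_eq_apply_ne hlayer (g := fun k x => p^[k] x)
    Subtype.val_injective fun x y => (hroot x x.2).trans (hroot y y.2).symm
  refine ⟨2 * (k + 1) + 1, ?_⟩
  rintro _ hm ⟨i, rfl⟩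
  obtain ⟨x, y, w, hw, hl, heq, hne⟩ := hpath (i - (k + 1))
  let ι : G.induce ((G.dist · r) ⁻¹' {n}) ↪g G := Embedding.induce _
  have hsupport : ∀ v ∈ (w.map ι.toHom).support, G.dist v r = n := by
    rw [Walk.support_map, List.forall_mem_map]
    exact fun v _ => v.2
  obtain ⟨c, hc, hcl⟩ := hp.exists_isCycle_of_isPath hk (hw.map ι.injective) hsupport heq hne
  exact ⟨ι.toHom x, c, hc, by rw [hcl, Walk.length_map, hl]; lia⟩

end OddCycles

open OddCycles in
/-- **Erdős–Hajnal–Shelah.** Every graph with no proper colouring with countably many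
colours contains odd cycles of all sufficiently large lengths. -/
theorem erdos_hajnal_shelah_odd_cycles {V : Type u} (G : SimpleGraph V)
    (h : ∀ f : V → ℕ, ∃ x y, G.Adj x y ∧ f x = f y) :
    ∃ N : ℕ, ∀ m : ℕ, N ≤ m → Odd m →
      ∃ (x : V) (w : G.Walk x x), w.IsCycle ∧ w.length = m := by
  have hG : ¬ CountablyColorable G := by
    rintro ⟨c⟩
    obtain ⟨x, y, hxy, hc⟩ := h c
    exact c.valid hxy hc
  obtain ⟨C, hC⟩ := exists_connectedComponent_not_countablyColorable hG
  obtain ⟨N, hN⟩ := exists_odd_isCycle_of_connected C.connected_toSimpleGraph hC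
  refine ⟨N, fun m hm hodd => ?_⟩
  obtain ⟨x, w, hw, hl⟩ := hN m hm hodd
  exact ⟨x, w.map C.toSimpleGraph_hom, hw.map Subtype.val_injective, (w.length_map _).trans hl⟩
end

section
/- For every finite simple graph F and every natural number r there exists a finite simple graph H such that for every colouring of the edges of H with r colours there is a monochromatic induced copy of F in H; that is, there is an injective map from V(F) to V(H) under which two vertices of F are adjacent in F if and only if their images are adjacent in H, and all edges of the image receive the same colour. -/
/-!
The argument is the partite construction of Nešetřil and Rödl. A partite graph is a graph `G` with a
proper vertex colouring `π`, whose colour classes are the parts. Fix a pair of parts `i, j` and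
apply the Hales–Jewett theorem to the alphabet of edges of `G` between `i` and `j`. Each
combinatorial line of words of edges traces out a copy of the bipartite graph between `i` and `j` on
words of vertices; extend each of these to a copy of `G`, the extensions being otherwise disjoint. A
colouring of the resulting graph colours the words of edges, and a monochromatic line is a copy of
`G` all of whose edges between `i` and `j` have one colour. Doing this for all pairs of parts in
turn makes the colour of an edge depend only on the parts of its ends. If the initial partite graph
contains a copy of `F` on every set of `|F|` parts, Ramsey's theorem for the parts finishes the
proof.
-/

open Combinatorics SimpleGraph

universe u

lemma exists_le_card_filter_adj_of_iSup_eq_top {κ ρ : Type*} [Fintype κ] [Nonempty κ]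
    {Γ : κ → SimpleGraph ρ} [∀ k, DecidableRel (Γ k).Adj] (hΓ : ⨆ k, Γ k = ⊤) {S : Finset ρ} {v : ρ}
    (hv : v ∈ S) {M : κ → ℕ} (hM : ∑ k, M k < S.card) :
    ∃ k, M k ≤ {x ∈ S | (Γ k).Adj v x}.card := by
  classical
  have hcover : S.erase v ⊆ Finset.univ.biUnion fun k => {x ∈ S | (Γ k).Adj v x} := by
    intro x hx
    obtain ⟨hxv, hxS⟩ := Finset.mem_erase.1 hx
    have hvx : (⨆ k, Γ k).Adj v x := hΓ ▸ hxv.symm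
    simpa [hxS] using hvx
  have hsum : ∑ k, M k ≤ ∑ k, {x ∈ S | (Γ k).Adj v x}.card :=
    calc ∑ k, M k ≤ (S.erase v).card := Finset.card_erase_of_mem hv ▸ Nat.le_sub_one_of_lt hM
      _ ≤ _ := (Finset.card_le_card hcover).trans Finset.card_biUnion_le
  obtain ⟨k, -, hk⟩ := Finset.exists_le_of_sum_le Finset.univ_nonempty hsum
  exact ⟨k, hk⟩

theorem exists_forall_isNClique_of_iSup_eq_top {κ : Type*} [Finite κ] [Nonempty κ] (n : κ → ℕ) :
    ∃ N : ℕ, ∀ (ρ : Type u) (Γ : κ → SimpleGraph ρ), ⨆ k, Γ k = ⊤ → ∀ S : Finset ρ, N ≤ S.card →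
      ∃ k, ∃ T ⊆ S, (Γ k).IsNClique (n k) T := by
  classical
  cases nonempty_fintype κ
  induction n using WellFoundedLT.induction with
  | ind n ih =>
  by_cases hzero : ∃ k, n k = 0
  · obtain ⟨k, hk⟩ := hzero
    exact ⟨0, fun ρ Γ _ S _ => ⟨k, ∅, S.empty_subset, isNClique_empty.2 hk⟩⟩
  push Not at hzero
  choose M hM using fun k => ih (Function.update n k (n k - 1))
    (update_lt_self_iff.2 (Nat.sub_one_lt (hzero k)))
  refine ⟨∑ k, M k + 1, fun ρ Γ hΓ S hS => ?_⟩
  obtain ⟨v, hv⟩ : S.Nonempty := Finset.card_pos.1 (by lia)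
  obtain ⟨k, hk⟩ := exists_le_card_filter_adj_of_iSup_eq_top hΓ hv hS
  obtain ⟨j, T, hTsub, hT⟩ := hM k ρ Γ hΓ _ hk
  have hTS : T ⊆ S := hTsub.trans (Finset.filter_subset _ _)
  obtain rfl | hjk := eq_or_ne j k
  · have hvT : ∀ x ∈ T, (Γ j).Adj v x := fun x hx => (Finset.mem_filter.1 (hTsub hx)).2
    refine ⟨j, insert v T, Finset.insert_subset hv hTS, ?_⟩
    simpa [Nat.sub_one_add_one (hzero j)] using hT.insert hvT
  · exact ⟨j, T, hTS, by simpa [hjk] using hT⟩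

theorem exists_forall_embedding_monochromatic (α κ : Type*) [Finite α] [Finite κ] [Nonempty κ] :
    ∃ N : ℕ, ∀ χ : Sym2 (Fin N) → κ,
      ∃ (f : α ↪ Fin N) (k : κ), ∀ u v, u ≠ v → χ s(f u, f v) = k := by
  classical
  cases nonempty_fintype α
  obtain ⟨N, hN⟩ := exists_forall_isNClique_of_iSup_eq_top fun _ : κ => Fintype.card α
  refine ⟨N, fun χ => ?_⟩
  have hcover : ⨆ k, fromEdgeSet (χ ⁻¹' {k}) = (⊤ : SimpleGraph (Fin N)) := by
    ext x y
    simp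
  obtain ⟨k, T, -, hT⟩ := hN (Fin N) _ hcover Finset.univ (by simp)
  let f : α ≃ T := Fintype.equivOfCardEq (by simp [hT.card_eq])
  refine ⟨f.toEmbedding.trans (Function.Embedding.subtype _), k, fun u v huv => ?_⟩
  have hadj := hT.isClique (f u).2 (f v).2 (Subtype.coe_injective.ne (f.injective.ne huv))
  exact ((fromEdgeSet_adj _).1 hadj).1

/-- The partition relation of the partite construction, for graphs `G` and `H` whose parts are the
classes of the proper colourings `π` and `π'`: for every colouring of the edges of `H` there is an
induced copy of `G`, respecting the parts, in which all edges between the two parts of any `p ∈ S`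
have the same colour. -/
def PartiteArrow (κ : Type*) {V W ρ : Type*} {G : SimpleGraph V} {H : SimpleGraph W}
    (π : G.Coloring ρ) (π' : H.Coloring ρ) (S : Set (Sym2 ρ)) : Prop :=
  ∀ c : Sym2 W → κ, ∃ φ : G ↪g H, (∀ v, π' (φ v) = π v) ∧
    ∀ p ∈ S, ∃ k, ∀ u v, G.Adj u v → s(π u, π v) = p → c s(φ u, φ v) = k

namespace PartiteArrow

variable {κ V W X ρ : Type*} {G : SimpleGraph V} {H : SimpleGraph W} {K : SimpleGraph X}
  {π : G.Coloring ρ} {π' : H.Coloring ρ} {π'' : K.Coloring ρ}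

lemma refl_empty (π : G.Coloring ρ) : PartiteArrow κ π π ∅ :=
  fun _ => ⟨Embedding.refl, fun _ => rfl, by simp⟩

lemma trans {S T : Set (Sym2 ρ)} (h : PartiteArrow κ π π' S) (h' : PartiteArrow κ π' π'' T) :
    PartiteArrow κ π π'' (S ∪ T) := by
  intro c
  obtain ⟨ψ, hψ, hψT⟩ := h' c
  obtain ⟨φ, hφ, hφS⟩ := h fun e => c (e.map ψ)
  refine ⟨ψ.comp φ, fun v => (hψ _).trans (hφ v), ?_⟩
  rintro p (hp | hp)
  · exact hφS p hp
  · obtain ⟨k, hk⟩ := hψT p hp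
    refine ⟨k, fun u v huv huvp => hk (φ u) (φ v) (φ.map_adj_iff.2 huv) ?_⟩
    rwa [hφ, hφ]

end PartiteArrow

section PartiteAmalgam

variable {V ρ ι : Type*} {G : SimpleGraph V}

/-- The cliques of `G` with exactly one vertex in each part `a ∈ P`, as the functions picking that
vertex. For `P = {i, j}` with `i ≠ j` these are the edges between the parts `i` and `j`. -/
@[ext]
structure TransversalClique (π : G.Coloring ρ) (P : Set ρ) where
  vertex : P → V
  part_vertex (a : P) : π (vertex a) = a
  adj_vertex {a b : P} (hab : a ≠ b) : G.Adj (vertex a) (vertex b)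

namespace TransversalClique

variable {π : G.Coloring ρ} {P : Set ρ}

instance [Finite V] [Finite P] : Finite (TransversalClique π P) :=
  Finite.of_injective vertex fun _ _ => TransversalClique.ext

lemma exists_vertex_eq_of_adj {u v : V} {i j : ρ} (huv : G.Adj u v) (hu : π u = i) (hv : π v = j) :
    ∃ s : TransversalClique π {i, j}, s.vertex ⟨i, by simp⟩ = u ∧ s.vertex ⟨j, by simp⟩ = v := by
  classical
  have hne : j ≠ i := hu ▸ hv ▸ (π.valid huv).symm
  refine ⟨⟨fun a => if a.1 = i then u else v, ?_, ?_⟩, by simp, by simp [hne]⟩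
  · rintro ⟨a, rfl | rfl⟩ <;> simp [hu, hv, hne]
  · rintro ⟨a, rfl | rfl⟩ ⟨b, rfl | rfl⟩ hab <;> simp_all [huv.symm]

end TransversalClique

instance [Finite V] [Finite ι] : Finite (Line V ι) :=
  Finite.of_injective Line.idxFun fun _ _ => Line.ext

variable (π : G.Coloring ρ) (P : Set ρ)

variable (ι) in
/-- The vertices of the amalgam of copies of `G` attached to combinatorial lines in the words of
transversal cliques: words of vertices, where the copies may meet, and a private vertex for each
line and vertex of `G`. -/
abbrev AmalgamVertex : Type _ :=
  (Line (TransversalClique π P) ι × V) ⊕ (ι → V)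

open Classical in
/-- The copy of `G` attached to a combinatorial line `l` in the words of transversal cliques. A
vertex in a part of `P` is sent to the word of vertices having that vertex at the moving coordinates
of `l`, and the vertex of the prescribed clique in the same part at the fixed ones. The other
vertices are kept disjoint for different lines. -/
noncomputable def lineCopy (l : Line (TransversalClique π P) ι) (v : V) : AmalgamVertex ι π P :=
  if h : π v ∈ P then .inr fun t => (l.idxFun t).elim v fun s => s.vertex ⟨π v, h⟩ else .inl (l, v)

/-- The part containing a vertex of the amalgam. A word occurring in a copy of `G` has all its
letters in one part, so any coordinate `t` will do. -/
def amalgamPart (t : ι) : AmalgamVertex ι π P → ρ :=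
  Sum.elim (fun x => π x.2) fun w => π (w t)

variable {π P} {l l' : Line (TransversalClique π P) ι}

lemma lineCopy_of_mem {v : V} (h : π v ∈ P) :
    lineCopy π P l v = .inr fun t => (l.idxFun t).elim v fun s => s.vertex ⟨π v, h⟩ :=
  dif_pos h

lemma lineCopy_of_notMem {v : V} (h : π v ∉ P) : lineCopy π P l v = .inl (l, v) :=
  dif_neg h

lemma lineCopy_vertex (s : TransversalClique π P) (a : P) :
    lineCopy π P l (s.vertex a) = .inr fun t => (l s t).vertex a := by
  have ha : (⟨π (s.vertex a), s.part_vertex a ▸ a.2⟩ : P) = a := Subtype.ext (s.part_vertex a)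
  rw [lineCopy_of_mem (s.part_vertex a ▸ a.2), ha]
  congr 1
  funext t
  rw [Line.coe_apply]
  cases l.idxFun t <;> rfl

lemma amalgamPart_lineCopy (t : ι) (v : V) : amalgamPart π P t (lineCopy π P l v) = π v := by
  by_cases h : π v ∈ P
  · rw [lineCopy_of_mem h]
    cases ht : l.idxFun t with
    | none => simp [amalgamPart, ht]
    | some s => simp [amalgamPart, ht, s.part_vertex]
  · rw [lineCopy_of_notMem h]
    rfl

lemma part_eq_of_lineCopy_eq {u v : V} (h : lineCopy π P l' u = lineCopy π P l v) : π u = π v := by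
  obtain ⟨t, -⟩ := l.proper
  rw [← amalgamPart_lineCopy (l := l') t u, h, amalgamPart_lineCopy]

lemma eq_of_lineCopy_eq_of_notMem {u v : V} (h : lineCopy π P l' u = lineCopy π P l v)
    (hv : π v ∉ P) : l' = l ∧ u = v := by
  have hu : π u ∉ P := part_eq_of_lineCopy_eq h ▸ hv
  rw [lineCopy_of_notMem hu, lineCopy_of_notMem hv] at h
  simpa using h

lemma elim_idxFun_eq_of_lineCopy_eq {u v : V} (h : lineCopy π P l' u = lineCopy π P l v)
    (hv : π v ∈ P) {t : ι} (ht : l.idxFun t = none) :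
    ((l'.idxFun t).elim u fun s => s.vertex ⟨π v, hv⟩) = v := by
  have huv := part_eq_of_lineCopy_eq h
  rw [lineCopy_of_mem (huv ▸ hv), lineCopy_of_mem hv] at h
  simpa [ht, huv] using congrFun (Sum.inr_injective h) t

lemma lineCopy_injective (l : Line (TransversalClique π P) ι) :
    Function.Injective (lineCopy π P l) := by
  intro u v h
  by_cases hv : π v ∈ P
  · obtain ⟨t, ht⟩ := l.proper
    simpa [ht] using elim_idxFun_eq_of_lineCopy_eq h hv ht
  · exact (eq_of_lineCopy_eq_of_notMem h hv).2

lemma adj_of_lineCopy_eq {u v u' v' : V} (hadj : G.Adj u' v')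
    (hu : lineCopy π P l' u' = lineCopy π P l u) (hv : lineCopy π P l' v' = lineCopy π P l v) :
    G.Adj u v := by
  have adj_of_line_eq : l' = l → G.Adj u v := by
    rintro rfl
    rwa [← lineCopy_injective l' hu, ← lineCopy_injective l' hv]
  by_cases huP : π u ∈ P
  swap
  · exact adj_of_line_eq (eq_of_lineCopy_eq_of_notMem hu huP).1
  by_cases hvP : π v ∈ P
  swap
  · exact adj_of_line_eq (eq_of_lineCopy_eq_of_notMem hv hvP).1
  -- Where `l` moves, `l'` moves too or has a fixed clique, which then contains `u` and `v`.
  obtain ⟨t, ht⟩ := l.proper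
  rw [← elim_idxFun_eq_of_lineCopy_eq hu huP ht, ← elim_idxFun_eq_of_lineCopy_eq hv hvP ht]
  cases l'.idxFun t with
  | none => exact hadj
  | some s =>
    refine s.adj_vertex fun h => π.valid hadj ?_
    rw [part_eq_of_lineCopy_eq hu, part_eq_of_lineCopy_eq hv]
    exact congrArg Subtype.val h

variable (π P ι) in
/-- The union of the copies of `G` attached to all combinatorial lines in the words, indexed by `ι`,
of transversal cliques. -/
noncomputable def amalgam : SimpleGraph (AmalgamVertex ι π P) :=
  ⨆ l, G.map (lineCopy π P l)

lemma amalgam_adj {x y : AmalgamVertex ι π P} :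
    (amalgam ι π P).Adj x y ↔
      ∃ l u v, G.Adj u v ∧ lineCopy π P l u = x ∧ lineCopy π P l v = y := by
  rw [amalgam, iSup_adj]
  exact exists_congr fun l => map_adj ⟨lineCopy π P l, lineCopy_injective l⟩ G x y

variable (π P) in
/-- The partition of the amalgam into parts, as a proper colouring; see `amalgamPart`. -/
noncomputable def amalgamColoring (t : ι) : (amalgam ι π P).Coloring ρ :=
  Coloring.mk (amalgamPart π P t) fun {x y} hxy => by
    obtain ⟨l, u, v, huv, rfl, rfl⟩ := amalgam_adj.1 hxy
    rw [amalgamPart_lineCopy, amalgamPart_lineCopy]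
    exact π.valid huv

/-- `lineCopy` as an induced copy of `G` in the amalgam. -/
noncomputable def lineCopyEmbedding (l : Line (TransversalClique π P) ι) : G ↪g amalgam ι π P where
  toFun := lineCopy π P l
  inj' := lineCopy_injective l
  map_rel_iff' := ⟨fun h =>
    let ⟨_, _, _, hadj, hu, hv⟩ := amalgam_adj.1 h
    adj_of_lineCopy_eq hadj hu hv, fun h => amalgam_adj.2 ⟨l, _, _, h, rfl, rfl⟩⟩

lemma exists_monochromatic_lineCopy {κ : Type*} {i j : ρ}
    (hmono : ∀ C : (ι → TransversalClique π {i, j}) → κ,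
      ∃ l : Line (TransversalClique π {i, j}) ι, l.IsMono C)
    (c : Sym2 (AmalgamVertex ι π {i, j}) → κ) :
    ∃ (l : Line (TransversalClique π {i, j}) ι) (k : κ), ∀ u v, G.Adj u v →
      s(π u, π v) = s(i, j) → c s(lineCopy π {i, j} l u, lineCopy π {i, j} l v) = k := by
  obtain ⟨l, k, hk⟩ := hmono fun w =>
    c s(.inr fun t => (w t).vertex ⟨i, by simp⟩, .inr fun t => (w t).vertex ⟨j, by simp⟩)
  have hcol : ∀ u v, G.Adj u v → π u = i → π v = j →
      c s(lineCopy π {i, j} l u, lineCopy π {i, j} l v) = k := by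
    intro u v huv hu hv
    obtain ⟨s, rfl, rfl⟩ := TransversalClique.exists_vertex_eq_of_adj huv hu hv
    rw [lineCopy_vertex, lineCopy_vertex]
    exact hk s
  refine ⟨l, k, fun u v huv hij => ?_⟩
  obtain ⟨hu, hv⟩ | ⟨hu, hv⟩ := Sym2.eq_iff.1 hij
  · exact hcol u v huv hu hv
  · rw [Sym2.eq_swap]
    exact hcol v u huv.symm hv hu

end PartiteAmalgam

section Partite

variable (κ : Type*) [Finite κ] [Nonempty κ] {V ρ : Type u} [Finite V] {G : SimpleGraph V}

theorem exists_partiteArrow_singleton (π : G.Coloring ρ) (p : Sym2 ρ) :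
    ∃ (W : Type u) (_ : Finite W) (H : SimpleGraph W) (π' : H.Coloring ρ),
      PartiteArrow κ π π' {p} := by
  induction p using Sym2.ind with
  | _ i j =>
  obtain ⟨ι, _, hmono⟩ := Line.exists_mono_in_high_dimension (TransversalClique π {i, j}) κ
  obtain ⟨t⟩ : Nonempty ι :=
    let ⟨l, _⟩ := hmono fun _ => Classical.arbitrary κ
    l.proper.nonempty
  refine ⟨_, inferInstance, amalgam ι π {i, j}, amalgamColoring π {i, j} t, fun c => ?_⟩
  obtain ⟨l, k, hk⟩ := exists_monochromatic_lineCopy hmono c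
  exact ⟨lineCopyEmbedding l, amalgamPart_lineCopy t, by rintro _ rfl; exact ⟨k, hk⟩⟩

theorem exists_partiteArrow (π : G.Coloring ρ) {S : Set (Sym2 ρ)} (hS : S.Finite) :
    ∃ (W : Type u) (_ : Finite W) (H : SimpleGraph W) (π' : H.Coloring ρ),
      PartiteArrow κ π π' S := by
  induction S, hS using Set.Finite.induction_on with
  | empty => exact ⟨V, inferInstance, G, π, .refl_empty π⟩
  | @insert p S _ _ ih =>
    obtain ⟨W, _, H, π', hS⟩ := ih
    obtain ⟨X, hX, K, π'', hp⟩ := exists_partiteArrow_singleton κ π' p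
    exact ⟨X, hX, K, π'', Set.union_singleton ▸ hS.trans hp⟩

end Partite

/-- The disjoint union of copies of `F`, one for each injection `f` of its vertices into `ρ`, is
partite: the vertex `a` of the copy indexed by `f` lies in the part `f a`. -/
def copiesColoring {α : Type*} (F : SimpleGraph α) (ρ : Type*) :
    ((⊥ : SimpleGraph (α ↪ ρ)) □ F).Coloring ρ :=
  Coloring.mk (fun x => x.1 x.2) <| by
    rintro ⟨f, a⟩ ⟨g, b⟩ hadj
    obtain ⟨hab, rfl : f = g⟩ : F.Adj a b ∧ f = g := by simpa [boxProd_adj] using hadj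
    exact f.injective.ne hab.ne

/-- **Induced Ramsey theorem** (Deuber; Erdős–Hajnal–Pósa; Rödl). For every finite graph `F`
and number of colours `r` there is a finite graph `H` such that every `r`-colouring of the
edges of `H` yields a monochromatic induced copy of `F`. -/
theorem induced_ramsey {α : Type} [Fintype α] (F : SimpleGraph α) (r : ℕ) :
    ∃ (β : Type) (_ : Fintype β) (H : SimpleGraph β),
      ∀ c : Sym2 β → Fin r,
        ∃ f : α → β, Function.Injective f ∧
          (∀ u v : α, F.Adj u v ↔ H.Adj (f u) (f v)) ∧
          ∃ col : Fin r, ∀ u v : α, F.Adj u v → c s(f u, f v) = col := by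
  obtain rfl | hr := eq_or_ne r 0
  · exact ⟨Unit, inferInstance, ⊥, fun c => (c s((), ())).elim0⟩
  have : NeZero r := ⟨hr⟩
  obtain ⟨N, hN⟩ := exists_forall_embedding_monochromatic α (Fin r)
  obtain ⟨W, _, H, π, hH⟩ :=
    exists_partiteArrow (Fin r) (copiesColoring F (Fin N)) Set.finite_univ
  refine ⟨W, Fintype.ofFinite W, H, fun c => ?_⟩
  obtain ⟨φ, -, hφ⟩ := hH c
  choose χ hχ using fun p => hφ p (Set.mem_univ p)
  obtain ⟨f, col, hf⟩ := hN χ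
  let copy : F ↪g H := φ.comp (boxProdRight ⊥ F f)
  refine ⟨copy, copy.injective, fun u v => copy.map_adj_iff.symm, col, fun u v huv => ?_⟩
  calc c s(copy u, copy v)
      = χ s(f u, f v) := hχ _ (f, u) (f, v) (boxProd_adj_right.2 huv) rfl
    _ = col := hf u v huv.ne
end
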